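/- arXiv:math/0601735 — 2 statements merged into one kernel-verified Lean document; each statement's English description precedes it below -/
import Mathlib

section
/- Let (S_n)_{n≥0} be a simple symmetric random walk on ℤ and (ξ_k)_{k∈ℤ} a sequence of random variables on the same probability space, independent of (S_n), which is stationary, centered, has finite fourth moments, and satisfies conditions (4) and (5). Then for every real number t, the difference E[exp((it/n^{3/4}) Σ_{k=1}^n ξ_{S_k})] − E[exp(−(t²/(2 n^{3/2})) Σ_{ℓ∈ℤ} Σ_{m∈ℤ} E[ξ_ℓ ξ_m] N_n(ℓ)²)] converges to 0 as n → ∞. -/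
open MeasureTheory ProbabilityTheory Filter

noncomputable section

/-- Number of visits of the walk `S` to site `k` among times `1,...,n` (local time). -/
def localTime {Ω : Type*} (S : ℕ → Ω → ℤ) (n : ℕ) (k : ℤ) (ω : Ω) : ℝ :=
  ((Finset.Icc 1 n).filter (fun j => S j ω = k)).card

/-- `S` is a simple symmetric random walk on `ℤ`: `S 0 = 0` and the increments are
i.i.d. uniform on `{-1, 1}`. -/
structure IsSSRW {Ω : Type*} [MeasurableSpace Ω] (μ : Measure Ω) (S : ℕ → Ω → ℤ) : Prop where
  meas : ∀ n, Measurable (S n)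
  init : ∀ ω, S 0 ω = 0
  indep : iIndepFun (fun n ω => S (n + 1) ω - S n ω) μ
  step_one : ∀ n, μ {ω | S (n + 1) ω - S n ω = 1} = 1 / 2
  step_neg_one : ∀ n, μ {ω | S (n + 1) ω - S n ω = -1} = 1 / 2

/-- Stationarity of the sequence `(ξ k)_{k ∈ ℤ}`: all finite dimensional distributions
are invariant under a shift of the index. -/
def IsStationarySeq {Ω : Type*} [MeasurableSpace Ω] (μ : Measure Ω) (ξ : ℤ → Ω → ℝ) : Prop :=
  ∀ (j : ℤ) (q : ℕ) (k : Fin q → ℤ),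
    Measure.map (fun ω i => ξ (k i + j) ω) μ = Measure.map (fun ω i => ξ (k i) ω) μ

/-- Covariance of two complex-valued random variables. -/
def covC {Ω : Type*} [MeasurableSpace Ω] (μ : Measure Ω) (U V : Ω → ℂ) : ℂ :=
  ∫ ω, U ω * V ω ∂μ - (∫ ω, U ω ∂μ) * (∫ ω, V ω ∂μ)

/-- Condition (3): `(ξ k)` is stationary, centered, with finite fourth moments. -/
def Cond3 {Ω : Type*} [MeasurableSpace Ω] (μ : Measure Ω) (ξ : ℤ → Ω → ℝ) : Prop :=
  IsStationarySeq μ ξ ∧ (∀ k, ∫ ω, ξ k ω ∂μ = 0) ∧ ∀ k, Integrable (fun ω => (ξ k ω) ^ 4) μ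

/-- Condition (4). -/
def Cond4 {Ω : Type*} [MeasurableSpace Ω] (μ : Measure Ω) (ξ : ℤ → Ω → ℝ) : Prop :=
  Summable (fun p : ℕ => Real.sqrt (1 + (p : ℝ)) * |∫ ω, ξ 0 ω * ξ (p : ℤ) ω ∂μ|) ∧
  ∃ B : ℝ, ∀ N : ℕ, 1 ≤ N →
    ∑ k₁ ∈ Finset.range N, ∑ k₂ ∈ Finset.range N, ∑ k₃ ∈ Finset.range N,
      ∑ k₄ ∈ Finset.range N,
        |∫ ω, ξ (k₁ : ℤ) ω * ξ (k₂ : ℤ) ω * ξ (k₃ : ℤ) ω * ξ (k₄ : ℤ) ω ∂μ| ≤ B * (N : ℝ) ^ 2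

/-- The covariance inequality of condition (5), for a given constant `C` and
family `φ`. -/
def Cond5Bound {Ω : Type*} [MeasurableSpace Ω] (μ : Measure Ω) (ξ : ℤ → Ω → ℝ)
    (C : ℝ) (φ : ℕ → ℕ → ℝ) : Prop :=
  ∀ n₁ n₂ n₃ n₄ : ℕ, n₁ ≤ n₂ → n₂ ≤ n₃ → n₃ ≤ n₄ → ∀ α β : ℕ → ℝ,
    ‖covC μ
        (fun ω => Complex.exp (Complex.I * ((∑ k ∈ Finset.Icc n₁ n₂, α k * ξ (k : ℤ) ω : ℝ) : ℂ)))
        (fun ω => Complex.exp (Complex.I * ((∑ k ∈ Finset.Icc n₃ n₄, β k * ξ (k : ℤ) ω : ℝ) : ℂ)))‖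
      ≤ C * (1 + ∑ k ∈ Finset.Icc n₁ n₂, |α k| + ∑ k ∈ Finset.Icc n₃ n₄, |β k|) *
          φ (n₃ - n₂) (n₄ - n₃)

/-- Condition (5). -/
def Cond5 {Ω : Type*} [MeasurableSpace Ω] (μ : Measure Ω) (ξ : ℤ → Ω → ℝ) : Prop :=
  ∃ C : ℝ, 0 < C ∧ ∃ (φ : ℕ → ℕ → ℝ) (r : ℕ), 1 ≤ r ∧
    (∀ p s, 0 ≤ φ p s) ∧ (∀ p s, φ (p + 1) s ≤ φ p s) ∧
    Tendsto (fun s : ℕ => Real.sqrt s * φ (r * s) s) atTop (nhds 0) ∧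
    Cond5Bound μ ξ C φ

/-!
Conditionally on the walk, `∑_{j ≤ n} ξ (S j)` is the linear form in the scenery whose weights are
the local times, so by independence it suffices to compare, for fixed weights `a`, the
characteristic function of `∑ a_k ξ_k` with a Gaussian one, and then to average over the walk.

For weights of size `O(m^{-1/2})` on `m` sites, cut the sum into `J` blocks. Condition (5)
decouples a block from its past beyond a gap, and a second order Taylor expansion gives
`z_{j+1} ≈ z_j (1 - (q_{j+1} - q_j) / 2)` for the characteristic functions `z_j` and the variances
`q_j` of the partial sums, with an error `O(J^{-3/2})` by the fourth moment bound of condition (4);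
hence `z_J ≈ exp (-q_J / 2)`.

If the weights vary slowly, the variance is close to `σ² ∑ a_k²` with `σ² = ∑_p E[ξ₀ ξ_p]`: the
difference is `∑_p E[ξ₀ ξ_p] ∑_k a_k (a_{k+p} - a_k)`, and the factor `√(1+p)` in condition (4) is
what bounds it by the gradient energy `∑ (a_{k+1} - a_k)²`. The expected gradient energy of the
local time `N_n` is `O(n) = o(n^{3/2})`, which is negligible for `a = t n^{-3/4} N_n`. Discarding
the sites visited much more than `√n` times or much further than `√n` makes the weights spread out;
the cost is controlled by `E ∑ N_n(k)³` and `E ∑ k² N_n(k)²`, which Tanaka's formula reduces to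
expected numbers of returns.
-/

section ExpI

/-- The unit complex number `e^{ix}`, in the shape in which `Cond5Bound` writes it. -/
def expI (x : ℝ) : ℂ := Complex.exp (Complex.I * (x : ℂ))

lemma expI_zero : expI 0 = 1 := by simp [expI]

lemma expI_add (x y : ℝ) : expI (x + y) = expI x * expI y := by
  simp [expI, mul_add, Complex.exp_add]

lemma norm_expI (x : ℝ) : ‖expI x‖ = 1 := Complex.norm_exp_I_mul_ofReal x

@[fun_prop]
lemma measurable_expI : Measurable expI := by
  unfold expI; fun_prop

lemma norm_expI_sub_expI_le (x y : ℝ) : ‖expI x - expI y‖ ≤ |x - y| :=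
  calc ‖expI x - expI y‖ = ‖expI y * (expI (x - y) - 1)‖ := by
        rw [mul_sub, ← expI_add, add_sub_cancel, mul_one]
    _ = ‖expI (x - y) - 1‖ := by rw [norm_mul, norm_expI, one_mul]
    _ ≤ |x - y| := Real.norm_exp_I_mul_ofReal_sub_one_le

/-- The second order Taylor remainder of `expI` at `0`. -/
def expIRem (x : ℝ) : ℂ := expI x - 1 - Complex.I * x + (x : ℂ) ^ 2 / 2

@[fun_prop]
lemma measurable_expIRem : Measurable expIRem := by
  unfold expIRem; fun_prop

lemma norm_expIRem_le (x : ℝ) : ‖expIRem x‖ ≤ 3 * |x| ^ 3 := by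
  have hx3 : 0 ≤ |x| ^ 3 := by positivity
  rcases le_or_gt |x| 1 with hx | hx
  · have htaylor : expIRem x =
        Complex.exp (Complex.I * x) - ∑ m ∈ Finset.range 3, (Complex.I * x) ^ m / m.factorial := by
      simp only [expIRem, expI, Finset.sum_range_succ, Finset.sum_range_zero, mul_pow,
        Complex.I_sq]
      norm_num [Nat.factorial]
      ring
    have hnorm : ‖Complex.I * (x : ℂ)‖ = |x| := by simp
    have hbound := Complex.exp_bound (hnorm.trans_le hx) (n := 3) (by norm_num)
    rw [hnorm] at hbound
    rw [htaylor]
    refine hbound.trans ?_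
    norm_num [Nat.factorial]
    linarith
  · have htri : ‖expIRem x‖ ≤ ‖expI x - 1‖ + ‖Complex.I * (x : ℂ)‖ + ‖(x : ℂ) ^ 2 / 2‖ :=
      (norm_add_le _ _).trans (add_le_add_left (norm_sub_le _ _) _)
    have hone : ‖expI x - 1‖ ≤ |x| := Real.norm_exp_I_mul_ofReal_sub_one_le
    have hI : ‖Complex.I * (x : ℂ)‖ = |x| := by simp
    have hsq : ‖(x : ℂ) ^ 2 / 2‖ = |x| ^ 2 / 2 := by simp
    have h13 : |x| ≤ |x| ^ 3 := le_self_pow₀ hx.le (by norm_num)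
    have h23 : |x| ^ 2 ≤ |x| ^ 3 := pow_le_pow_right₀ hx.le (by norm_num)
    linarith

end ExpI

section Moments

variable {Ω : Type*} [MeasurableSpace Ω] {μ : Measure Ω}

lemma integrable_expI_mul {X : Ω → ℝ} (hX : AEMeasurable X μ) {f : Ω → ℂ} (hf : Integrable f μ) :
    Integrable (fun ω => expI (X ω) * f ω) μ :=
  hf.bdd_mul (c := 1) (measurable_expI.comp_aemeasurable hX).aestronglyMeasurable
    (ae_of_all _ fun _ => (norm_expI _).le)

lemma norm_integral_expI_mul_le (X : Ω → ℝ) (f : Ω → ℂ) :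
    ‖∫ ω, expI (X ω) * f ω ∂μ‖ ≤ ∫ ω, ‖f ω‖ ∂μ := by
  refine (norm_integral_le_integral_norm _).trans_eq ?_
  simp only [norm_mul, norm_expI, one_mul]

lemma abs_pow_mul_pow_le {p k : ℕ} (hp : p ≠ 0) (hk : k ≤ p) {η : ℝ} (hη : 0 ≤ η) (x : ℝ) :
    |x| ^ k * η ^ (p - k) ≤ k / p * |x| ^ p + (p - k : ℕ) / p * η ^ p := by
  have hp' : (p : ℝ) ≠ 0 := by exact_mod_cast hp
  have hroot (y : ℝ) (hy : 0 ≤ y) (m : ℕ) : (y ^ p) ^ ((m : ℝ) / p) = y ^ m := by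
    rw [← Real.rpow_natCast, ← Real.rpow_mul hy, mul_div_cancel₀ _ hp', Real.rpow_natCast]
  have := Real.geom_mean_le_arith_mean2_weighted (w₁ := k / p) (w₂ := (p - k : ℕ) / p)
    (by positivity) (by positivity) (pow_nonneg (abs_nonneg x) p) (pow_nonneg hη p)
    (by rw [← add_div, ← Nat.cast_add, Nat.add_sub_cancel' hk, div_self hp'])
  rwa [hroot _ (abs_nonneg x), hroot _ hη] at this

lemma abs_mul_sq_le (x y : ℝ) : |y| * x ^ 2 ≤ |y| ^ 3 + |x| ^ 3 := by
  rw [← sq_abs x]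
  rcases le_total |x| |y| with h | h
  · nlinarith [mul_le_mul_of_nonneg_left (pow_le_pow_left₀ (abs_nonneg x) h 2) (abs_nonneg y),
      pow_nonneg (abs_nonneg x) 3]
  · nlinarith [mul_le_mul_of_nonneg_right h (sq_nonneg |x|), pow_nonneg (abs_nonneg y) 3]

lemma integrable_abs_pow {V : Ω → ℝ} {p : ℕ} [IsFiniteMeasure μ] (hV : MemLp V p μ) {k : ℕ}
    (hk : k ≤ p) : Integrable (fun ω => |V ω| ^ k) μ :=
  (hV.mono_exponent (by exact_mod_cast hk)).integrable_norm_pow'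

lemma integrable_abs_mul_sq {V Y : Ω → ℝ} [IsFiniteMeasure μ] (hV : MemLp V 3 μ)
    (hY : MemLp Y 3 μ) : Integrable (fun ω => |Y ω| * V ω ^ 2) μ := by
  refine Integrable.mono' ((integrable_abs_pow (p := 3) hY le_rfl).add
    (integrable_abs_pow (p := 3) hV le_rfl))
    (hY.aestronglyMeasurable.norm.mul (hV.aestronglyMeasurable.pow 2)) (ae_of_all _ fun ω => ?_)
  rw [Real.norm_of_nonneg (by positivity)]
  exact abs_mul_sq_le _ _

lemma integral_abs_mul_sq_le {V Y : Ω → ℝ} [IsFiniteMeasure μ] (hV : MemLp V 3 μ)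
    (hY : MemLp Y 3 μ) :
    ∫ ω, |Y ω| * V ω ^ 2 ∂μ ≤ ∫ ω, |Y ω| ^ 3 ∂μ + ∫ ω, |V ω| ^ 3 ∂μ := by
  have iV := integrable_abs_pow (p := 3) hV le_rfl
  have iY := integrable_abs_pow (p := 3) hY le_rfl
  rw [← integral_add iY iV]
  exact integral_mono (integrable_abs_mul_sq hV hY) (iY.add iV) fun ω => abs_mul_sq_le _ _

variable [IsProbabilityMeasure μ]

lemma integral_abs_pow_le_pow {V : Ω → ℝ} {p k : ℕ} (hV : MemLp V p μ) (hk : k ≤ p) {η : ℝ}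
    (hη : 0 < η) (h : ∫ ω, |V ω| ^ p ∂μ ≤ η ^ p) : ∫ ω, |V ω| ^ k ∂μ ≤ η ^ k := by
  rcases eq_or_ne p 0 with rfl | hp
  · simp [Nat.le_zero.mp hk]
  have hp' : (p : ℝ) ≠ 0 := by exact_mod_cast hp
  have ip := (integrable_abs_pow hV le_rfl).const_mul (k / p : ℝ)
  refine le_of_mul_le_mul_right ?_ (pow_pos hη (p - k))
  calc (∫ ω, |V ω| ^ k ∂μ) * η ^ (p - k)
      ≤ ∫ ω, (k / p * |V ω| ^ p + (p - k : ℕ) / p * η ^ p) ∂μ := by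
        rw [← integral_mul_const]
        exact integral_mono ((integrable_abs_pow hV hk).mul_const _)
          (ip.add (integrable_const _)) fun ω => abs_pow_mul_pow_le hp hk hη.le _
    _ = k / p * (∫ ω, |V ω| ^ p ∂μ) + (p - k : ℕ) / p * η ^ p := by
        rw [integral_add ip (integrable_const _), integral_const_mul]; simp
    _ ≤ k / p * η ^ p + (p - k : ℕ) / p * η ^ p := by gcongr
    _ = η ^ p := by rw [← add_mul, ← add_div, ← Nat.cast_add, Nat.add_sub_cancel' hk, div_self hp',
        one_mul]
    _ = η ^ k * η ^ (p - k) := by rw [← pow_add, Nat.add_sub_cancel' hk]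

lemma integrable_expI {X : Ω → ℝ} (hX : AEMeasurable X μ) :
    Integrable (fun ω => expI (X ω)) μ := by
  simpa using integrable_expI_mul hX (integrable_const (1 : ℂ))

lemma norm_integral_expI_le_one (X : Ω → ℝ) : ‖∫ ω, expI (X ω) ∂μ‖ ≤ 1 := by
  simpa using norm_integral_expI_mul_le (μ := μ) X fun _ => 1

lemma norm_integral_expI_sub_le {X Y : Ω → ℝ} (hX : AEMeasurable X μ) (hY : AEMeasurable Y μ)
    (hXY : Integrable (fun ω => X ω - Y ω) μ) :
    ‖∫ ω, expI (X ω) ∂μ - ∫ ω, expI (Y ω) ∂μ‖ ≤ ∫ ω, |X ω - Y ω| ∂μ := by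
  rw [← integral_sub (integrable_expI hX) (integrable_expI hY)]
  exact norm_integral_le_of_norm_le hXY.abs (ae_of_all _ fun ω => norm_expI_sub_expI_le _ _)

lemma integrable_expIRem {V : Ω → ℝ} (hV : MemLp V 3 μ) :
    Integrable (fun ω => expIRem (V ω)) μ := by
  refine Integrable.mono' ((integrable_abs_pow (p := 3) hV le_rfl).const_mul 3)
    (measurable_expIRem.comp_aemeasurable hV.aemeasurable).aestronglyMeasurable
    (ae_of_all _ fun ω => norm_expIRem_le _)

lemma integral_norm_expIRem_le {V : Ω → ℝ} (hV : MemLp V 3 μ) :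
    ∫ ω, ‖expIRem (V ω)‖ ∂μ ≤ 3 * ∫ ω, |V ω| ^ 3 ∂μ := by
  rw [← integral_const_mul]
  exact integral_mono (integrable_expIRem hV).norm
    ((integrable_abs_pow (p := 3) hV le_rfl).const_mul 3) fun ω => norm_expIRem_le _

lemma norm_integral_expI_add_sub_taylor_le {Z V : Ω → ℝ} (hZ : AEMeasurable Z μ)
    (hV : MemLp V 3 μ) :
    ‖∫ ω, expI (Z ω + V ω) ∂μ - (∫ ω, expI (Z ω) ∂μ + Complex.I * ∫ ω, expI (Z ω) * V ω ∂μ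
        - 1 / 2 * ∫ ω, expI (Z ω) * (V ω : ℂ) ^ 2 ∂μ)‖ ≤ 3 * ∫ ω, |V ω| ^ 3 ∂μ := by
  have i0 := integrable_expI hZ
  have i1 : Integrable (fun ω => Complex.I * (expI (Z ω) * V ω)) μ :=
    (integrable_expI_mul hZ (hV.integrable (by norm_num)).ofReal).const_mul _
  have i2 : Integrable (fun ω => 1 / 2 * (expI (Z ω) * (V ω : ℂ) ^ 2)) μ :=
    (integrable_expI_mul hZ (by
      simpa using (hV.mono_exponent (q := 3) (p := 2) (by norm_num)).integrable_sq.ofReal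
        (𝕜 := ℂ))).const_mul _
  rw [← integral_const_mul, ← integral_const_mul, ← integral_add i0 i1,
    ← integral_sub (i0.fun_add i1) i2,
    ← integral_sub (integrable_expI (hZ.fun_add hV.aemeasurable)) ((i0.fun_add i1).sub' i2)]
  have hrem : ∀ ω, expI (Z ω + V ω) - (expI (Z ω) + Complex.I * (expI (Z ω) * V ω)
      - 1 / 2 * (expI (Z ω) * (V ω : ℂ) ^ 2)) = expI (Z ω) * expIRem (V ω) := fun ω => by
    rw [expI_add, expIRem]; ring
  simp only [hrem]
  exact (norm_integral_expI_mul_le Z _).trans (integral_norm_expIRem_le hV)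

end Moments

section Covariance

variable {Ω : Type*} [MeasurableSpace Ω] {μ : Measure Ω}

lemma covC_add {X : Ω → ℝ} (hX : AEMeasurable X μ) {f g : Ω → ℂ} (hf : Integrable f μ)
    (hg : Integrable g μ) :
    covC μ (fun ω => expI (X ω)) (fun ω => f ω + g ω) =
      covC μ (fun ω => expI (X ω)) f + covC μ (fun ω => expI (X ω)) g := by
  simp only [covC, mul_add]
  rw [integral_add (integrable_expI_mul hX hf) (integrable_expI_mul hX hg), integral_add hf hg]
  ring

lemma covC_const_mul (U : Ω → ℂ) (c : ℂ) (f : Ω → ℂ) :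
    covC μ U (fun ω => c * f ω) = c * covC μ U f := by
  simp only [covC, mul_left_comm _ c, integral_const_mul]
  ring

lemma covC_sub {X : Ω → ℝ} (hX : AEMeasurable X μ) {f g : Ω → ℂ} (hf : Integrable f μ)
    (hg : Integrable g μ) :
    covC μ (fun ω => expI (X ω)) (fun ω => f ω - g ω) =
      covC μ (fun ω => expI (X ω)) f - covC μ (fun ω => expI (X ω)) g := by
  simp only [covC, mul_sub]
  rw [integral_sub (integrable_expI_mul hX hf) (integrable_expI_mul hX hg), integral_sub hf hg]
  ring

lemma integral_expI_mul_add_eq_of_centered {Z G U : Ω → ℝ} (hZ : AEMeasurable Z μ)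
    (hG : Integrable G μ) (hU : Integrable U μ) (hU0 : ∫ ω, U ω ∂μ = 0) :
    ∫ ω, expI (Z ω) * ((G ω + U ω : ℝ) : ℂ) ∂μ = ∫ ω, expI (Z ω) * (G ω : ℂ) ∂μ +
      covC μ (fun ω => expI (Z ω)) (fun ω => (U ω : ℂ)) := by
  have iG : Integrable (fun ω => expI (Z ω) * (G ω : ℂ)) μ := integrable_expI_mul hZ hG.ofReal
  have iU : Integrable (fun ω => expI (Z ω) * (U ω : ℂ)) μ := integrable_expI_mul hZ hU.ofReal
  rw [covC, integral_complex_ofReal, hU0, Complex.ofReal_zero, mul_zero, sub_zero,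
    ← integral_add iG iU]
  simp only [Complex.ofReal_add, mul_add]

variable [IsProbabilityMeasure μ]

lemma covC_const (U : Ω → ℂ) (c : ℂ) : covC μ U (fun _ => c) = 0 := by
  simp [covC, integral_mul_const]

lemma norm_covC_expI_le (X : Ω → ℝ) (f : Ω → ℂ) :
    ‖covC μ (fun ω => expI (X ω)) f‖ ≤ 2 * ∫ ω, ‖f ω‖ ∂μ :=
  calc ‖covC μ (fun ω => expI (X ω)) f‖
      ≤ ‖∫ ω, expI (X ω) * f ω ∂μ‖ + ‖∫ ω, expI (X ω) ∂μ‖ * ‖∫ ω, f ω ∂μ‖ :=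
        (norm_sub_le _ _).trans_eq (by rw [norm_mul])
    _ ≤ ∫ ω, ‖f ω‖ ∂μ + 1 * ∫ ω, ‖f ω‖ ∂μ := by
        gcongr
        · exact norm_integral_expI_mul_le X f
        · exact norm_integral_expI_le_one X
        · exact norm_integral_le_integral_norm f
    _ = 2 * ∫ ω, ‖f ω‖ ∂μ := by ring

lemma norm_covC_expIRem_le (X : Ω → ℝ) {V : Ω → ℝ} (hV : MemLp V 3 μ) :
    ‖covC μ (fun ω => expI (X ω)) (fun ω => expIRem (V ω))‖ ≤ 6 * ∫ ω, |V ω| ^ 3 ∂μ :=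
  (norm_covC_expI_le X _).trans (by linarith [integral_norm_expIRem_le hV])

lemma norm_covC_ofReal_le {X V : Ω → ℝ} (hX : AEMeasurable X μ) (hV : MemLp V 3 μ) {e : ℝ}
    (hpos : ‖covC μ (fun ω => expI (X ω)) (fun ω => expI (V ω))‖ ≤ e)
    (hneg : ‖covC μ (fun ω => expI (X ω)) (fun ω => expI (-V ω))‖ ≤ e) :
    ‖covC μ (fun ω => expI (X ω)) (fun ω => (V ω : ℂ))‖ ≤ e + 6 * ∫ ω, |V ω| ^ 3 ∂μ := by
  have ip := integrable_expI hV.aemeasurable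
  have ineg := integrable_expI hV.aemeasurable.neg
  have ir := integrable_expIRem hV
  have irneg := integrable_expIRem hV.neg
  have hrem := norm_covC_expIRem_le X hV
  have hremneg := norm_covC_expIRem_le X hV.neg
  simp only [Pi.neg_apply, abs_neg] at ineg irneg hremneg
  have hodd : (fun ω => 2 * Complex.I * (V ω : ℂ)) = fun ω =>
      (expI (V ω) - expI (-V ω)) - (expIRem (V ω) - expIRem (-V ω)) := by
    funext ω; simp only [expIRem]; push_cast; ring
  have hcov := congrArg (fun f => ‖covC μ (fun ω => expI (X ω)) f‖) hodd
  simp only [covC_const_mul, covC_sub hX (ip.sub' ineg) (ir.sub' irneg), covC_sub hX ip ineg,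
    covC_sub hX ir irneg, norm_mul, Complex.norm_I, Complex.norm_ofNat, mul_one] at hcov
  have htri := norm_sub_le_of_le (norm_sub_le_of_le hpos hneg) (norm_sub_le_of_le hrem hremneg)
  linarith

lemma norm_covC_ofReal_sq_le {X V : Ω → ℝ} (hX : AEMeasurable X μ) (hV : MemLp V 3 μ) {e : ℝ}
    (hpos : ‖covC μ (fun ω => expI (X ω)) (fun ω => expI (V ω))‖ ≤ e)
    (hneg : ‖covC μ (fun ω => expI (X ω)) (fun ω => expI (-V ω))‖ ≤ e) :
    ‖covC μ (fun ω => expI (X ω)) (fun ω => (V ω : ℂ) ^ 2)‖ ≤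
      2 * e + 12 * ∫ ω, |V ω| ^ 3 ∂μ := by
  have ip := integrable_expI hV.aemeasurable
  have ineg := integrable_expI hV.aemeasurable.neg
  have ir := integrable_expIRem hV
  have irneg := integrable_expIRem hV.neg
  have hrem := norm_covC_expIRem_le X hV
  have hremneg := norm_covC_expIRem_le X hV.neg
  simp only [Pi.neg_apply, abs_neg] at ineg irneg hremneg
  have heven : (fun ω => (V ω : ℂ) ^ 2) = fun ω =>
      (expIRem (V ω) + expIRem (-V ω)) - ((expI (V ω) + expI (-V ω)) + (-2)) := by
    funext ω; simp only [expIRem]; push_cast; ring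
  rw [heven, covC_sub hX (ir.fun_add irneg) ((ip.fun_add ineg).fun_add (integrable_const _)),
    covC_add hX ir irneg, covC_add hX (ip.fun_add ineg) (integrable_const _),
    covC_add hX ip ineg, covC_const, add_zero]
  have htri := norm_sub_le_of_le (norm_add_le_of_le hrem hremneg) (norm_add_le_of_le hpos hneg)
  linarith

lemma norm_integral_expI_add_mul_sq_sub_le {X Y V : Ω → ℝ} (hX : AEMeasurable X μ)
    (hY : MemLp Y 3 μ) (hV : MemLp V 3 μ) (z : ℂ) :
    ‖∫ ω, expI (X ω + Y ω) * (V ω : ℂ) ^ 2 ∂μ - z * ∫ ω, (V ω : ℂ) ^ 2 ∂μ‖ ≤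
      ∫ ω, |Y ω| * V ω ^ 2 ∂μ + ‖covC μ (fun ω => expI (X ω)) (fun ω => (V ω : ℂ) ^ 2)‖
        + ‖z - ∫ ω, expI (X ω) ∂μ‖ * ∫ ω, V ω ^ 2 ∂μ := by
  have iV2 : Integrable (fun ω => (V ω : ℂ) ^ 2) μ := by
    simpa using (hV.mono_exponent (q := 3) (p := 2) (by norm_num)).integrable_sq.ofReal (𝕜 := ℂ)
  have hdrop : ‖∫ ω, expI (X ω + Y ω) * (V ω : ℂ) ^ 2 ∂μ - ∫ ω, expI (X ω) * (V ω : ℂ) ^ 2 ∂μ‖ ≤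
      ∫ ω, |Y ω| * V ω ^ 2 ∂μ := by
    rw [← integral_sub (integrable_expI_mul (hX.fun_add hY.aemeasurable) iV2)
      (integrable_expI_mul hX iV2)]
    refine norm_integral_le_of_norm_le (integrable_abs_mul_sq hV hY) (ae_of_all _ fun ω => ?_)
    rw [← sub_mul, norm_mul, norm_pow, Complex.norm_real, Real.norm_eq_abs, sq_abs]
    gcongr
    simpa using norm_expI_sub_expI_le (X ω + Y ω) (X ω)
  have hnorm : ‖∫ ω, (V ω : ℂ) ^ 2 ∂μ‖ ≤ ∫ ω, V ω ^ 2 ∂μ :=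
    (norm_integral_le_integral_norm _).trans_eq (by simp)
  calc _ = ‖(∫ ω, expI (X ω + Y ω) * (V ω : ℂ) ^ 2 ∂μ - ∫ ω, expI (X ω) * (V ω : ℂ) ^ 2 ∂μ)
          + covC μ (fun ω => expI (X ω)) (fun ω => (V ω : ℂ) ^ 2)
          - (z - ∫ ω, expI (X ω) ∂μ) * ∫ ω, (V ω : ℂ) ^ 2 ∂μ‖ := by rw [covC]; ring_nf
    _ ≤ _ := norm_sub_le_of_le (norm_add_le_of_le hdrop le_rfl)
      ((norm_mul_le _ _).trans (by gcongr))

lemma norm_integral_expI_add_mul_sq_sub_le_of_moments {X Y V : Ω → ℝ} (hX : AEMeasurable X μ)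
    (hY : MemLp Y 3 μ) (hV : MemLp V 3 μ) {η e : ℝ} (hη : 0 < η) {z : ℂ}
    (hz : ‖z - ∫ ω, expI (X ω) ∂μ‖ ≤ η) (mY : ∫ ω, |Y ω| ^ 3 ∂μ ≤ η ^ 3)
    (mV : ∫ ω, |V ω| ^ 3 ∂μ ≤ η ^ 3)
    (cV : ‖covC μ (fun ω => expI (X ω)) (fun ω => (V ω : ℂ) ^ 2)‖ ≤ e) :
    ‖∫ ω, expI (X ω + Y ω) * (V ω : ℂ) ^ 2 ∂μ - z * (∫ ω, V ω ^ 2 ∂μ : ℝ)‖ ≤ e + 3 * η ^ 3 := by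
  have hcast : ((∫ ω, V ω ^ 2 ∂μ : ℝ) : ℂ) = ∫ ω, (V ω : ℂ) ^ 2 ∂μ := by
    rw [← integral_complex_ofReal]; push_cast; rfl
  have hV2 : ∫ ω, V ω ^ 2 ∂μ ≤ η ^ 2 := by
    simpa using integral_abs_pow_le_pow (p := 3) (k := 2) hV (by norm_num) hη mV
  rw [hcast]
  refine (norm_integral_expI_add_mul_sq_sub_le hX hY hV z).trans ?_
  linarith [integral_abs_mul_sq_le hV hY,
    mul_le_mul hz hV2 (integral_nonneg fun ω => sq_nonneg (V ω)) hη.le]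

/-- One step of the block recursion. The new block is `U`; the gap `G` separates it from `X + Y`,
the gaps `Y` and `G` together separate it from `X`. Then `expI (X + Y)` decorrelates from `U`,
while `expI X` decorrelates from the squares of `G` and `G + U`. -/
lemma norm_integral_expI_block_step_le {X Y G U : Ω → ℝ} (hX : AEMeasurable X μ)
    (hY : MemLp Y 3 μ) (hG : MemLp G 3 μ) (hU : MemLp U 3 μ) {η e : ℝ} (hη : 0 < η)
    (hU0 : ∫ ω, U ω ∂μ = 0)
    (mY : ∫ ω, |Y ω| ^ 3 ∂μ ≤ η ^ 3) (mYG : ∫ ω, |Y ω + G ω| ^ 3 ∂μ ≤ η ^ 3)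
    (mG : ∫ ω, |G ω| ^ 3 ∂μ ≤ η ^ 3) (mGU : ∫ ω, |G ω + U ω| ^ 3 ∂μ ≤ η ^ 3)
    (cU : ‖covC μ (fun ω => expI (X ω + Y ω)) (fun ω => (U ω : ℂ))‖ ≤ e)
    (cG : ‖covC μ (fun ω => expI (X ω)) (fun ω => (G ω : ℂ) ^ 2)‖ ≤ e)
    (cGU : ‖covC μ (fun ω => expI (X ω)) (fun ω => ((G ω + U ω : ℝ) : ℂ) ^ 2)‖ ≤ e) :
    ‖∫ ω, expI (X ω + Y ω + G ω + U ω) ∂μ - (∫ ω, expI (X ω + Y ω + G ω) ∂μ) *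
        (1 - ((∫ ω, (G ω + U ω) ^ 2 ∂μ - ∫ ω, G ω ^ 2 ∂μ : ℝ) : ℂ) / 2)‖
      ≤ 2 * e + 9 * η ^ 3 := by
  have hGU : MemLp (fun ω => G ω + U ω) 3 μ := hG.add hU
  have hYG : MemLp (fun ω => Y ω + G ω) 3 μ := hY.add hG
  have aXY : AEMeasurable (fun ω => X ω + Y ω) μ := hX.fun_add hY.aemeasurable
  have hTaylorGU := norm_integral_expI_add_sub_taylor_le aXY hGU
  have hTaylorG := norm_integral_expI_add_sub_taylor_le aXY hG
  set z := ∫ ω, expI (X ω + Y ω + G ω) ∂μ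
  have hz : ‖z - ∫ ω, expI (X ω) ∂μ‖ ≤ η :=
    calc _ ≤ ∫ ω, |X ω + Y ω + G ω - X ω| ∂μ :=
          norm_integral_expI_sub_le (aXY.fun_add hG.aemeasurable) hX
            (by simpa [add_assoc] using hYG.integrable (by norm_num))
      _ ≤ η := by
          simpa [add_assoc] using integral_abs_pow_le_pow (p := 3) (k := 1) hYG (by norm_num) hη mYG
  have hsqG := norm_integral_expI_add_mul_sq_sub_le_of_moments hX hY hG hη hz mY mG cG
  have hsqGU := norm_integral_expI_add_mul_sq_sub_le_of_moments hX hY hGU hη hz mY mGU cGU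
  rw [integral_expI_mul_add_eq_of_centered aXY (hG.integrable (by norm_num))
    (hU.integrable (by norm_num)) hU0] at hTaylorGU
  have hhalf : ‖(1 / 2 : ℂ)‖ ≤ 1 / 2 := by norm_num
  simp only [← add_assoc] at hTaylorGU
  have htri := norm_sub_le_of_le
    (norm_add_le_of_le (norm_sub_le_of_le hTaylorGU hTaylorG)
      (norm_mul_le_of_le Complex.norm_I.le cU))
    (norm_mul_le_of_le hhalf (norm_sub_le_of_le hsqGU hsqG))
  refine (le_of_eq (congrArg norm ?_)).trans (htri.trans (by linarith))
  push_cast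
  ring

end Covariance

section Recursion

lemma abs_one_sub_half_sub_exp_le {v d : ℝ} (hv : |v| ≤ d) (hd : d ≤ 1) :
    |(1 - v / 2) - Real.exp (-v / 2)| ≤ d ^ 2 := by
  have hhalf : |-v / 2| ≤ d / 2 := by rw [abs_div, abs_neg, abs_two]; linarith
  calc |(1 - v / 2) - Real.exp (-v / 2)| = |Real.exp (-v / 2) - 1 - -v / 2| := by
        rw [abs_sub_comm]; ring_nf
    _ ≤ (-v / 2) ^ 2 := Real.abs_exp_sub_one_sub_id_le (by linarith)
    _ ≤ (d / 2) ^ 2 := sq_le_sq' (by linarith [abs_le.mp hhalf]) (abs_le.mp hhalf).2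
    _ ≤ d ^ 2 := by nlinarith

lemma norm_mul_exp_sub_mul_exp_le {z z' : ℂ} {q q' d e M : ℝ} (hd : d ≤ 1) (hz : ‖z‖ ≤ 1)
    (hq : |q' - q| ≤ d) (hM : q' ≤ M) (hstep : ‖z' - z * (1 - ((q' - q : ℝ) : ℂ) / 2)‖ ≤ e) :
    ‖z' * Real.exp (q' / 2) - z * Real.exp (q / 2)‖ ≤ Real.exp (M / 2) * (e + d ^ 2) := by
  set v := q' - q with hv
  have hexp : Real.exp (q / 2) = Real.exp (q' / 2) * Real.exp (-v / 2) := by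
    rw [← Real.exp_add, hv]; ring_nf
  have hfactor : z' * Real.exp (q' / 2) - z * Real.exp (q / 2) = Real.exp (q' / 2) *
      ((z' - z * (1 - (v : ℂ) / 2)) + z * ((1 - v / 2 - Real.exp (-v / 2) : ℝ) : ℂ)) := by
    rw [hexp]; push_cast; ring
  have hrem : ‖((1 - v / 2 - Real.exp (-v / 2) : ℝ) : ℂ)‖ ≤ d ^ 2 := by
    rw [Complex.norm_real]; exact abs_one_sub_half_sub_exp_le hq hd
  rw [hfactor]
  refine norm_mul_le_of_le ?_ (norm_add_le_of_le hstep ?_)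
  · rw [Complex.norm_real, Real.norm_of_nonneg (Real.exp_nonneg _)]
    exact Real.exp_le_exp.2 (by linarith)
  · simpa using norm_mul_le_of_le hz hrem

lemma abs_le_mul_of_abs_sub_le {q : ℕ → ℝ} {J : ℕ} {d : ℝ} (hq0 : q 0 = 0)
    (hq : ∀ j < J, |q (j + 1) - q j| ≤ d) : |q J| ≤ J * d := by
  have hsum : dist (q 0) (q J) ≤ ∑ _i ∈ Finset.range J, d :=
    dist_le_range_sum_of_dist_le J fun hi => by rw [dist_comm, Real.dist_eq]; exact hq _ hi
  simpa [hq0, dist_comm, Real.dist_eq] using hsum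

/-- The product `z j * e^{q j / 2}` is almost constant in `j`. -/
lemma norm_sub_exp_le_of_recursion {z : ℕ → ℂ} {q : ℕ → ℝ} {J : ℕ} {d e : ℝ} (hd0 : 0 ≤ d)
    (hd : d ≤ 1) (hz0 : z 0 = 1) (hq0 : q 0 = 0) (hqJ : 0 ≤ q J) (hz : ∀ j < J, ‖z j‖ ≤ 1)
    (hq : ∀ j < J, |q (j + 1) - q j| ≤ d)
    (hstep : ∀ j < J, ‖z (j + 1) - z j * (1 - ((q (j + 1) - q j : ℝ) : ℂ) / 2)‖ ≤ e) :
    ‖z J - (Real.exp (-q J / 2) : ℂ)‖ ≤ J * (Real.exp (J * d / 2) * (e + d ^ 2)) := by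
  set w : ℕ → ℂ := fun j => z j * Real.exp (q j / 2) with hw
  have hw_step (j : ℕ) (hj : j < J) :
      dist (w j) (w (j + 1)) ≤ Real.exp (J * d / 2) * (e + d ^ 2) := by
    have hqj : q (j + 1) ≤ J * d :=
      calc q (j + 1) ≤ (j + 1 : ℕ) * d :=
            (le_abs_self _).trans (abs_le_mul_of_abs_sub_le hq0 fun i hi => hq i (by omega))
        _ ≤ J * d := by gcongr; exact hj
    rw [dist_comm, dist_eq_norm]
    exact norm_mul_exp_sub_mul_exp_le hd (hz j hj) (hq j hj) hqj (hstep j hj)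
  have hwJ : z J - (Real.exp (-q J / 2) : ℂ) = Real.exp (-q J / 2) * (w J - w 0) := by
    have hinv : (Real.exp (-q J / 2) : ℂ) * Real.exp (q J / 2) = 1 := by
      rw [← Complex.ofReal_mul, ← Real.exp_add, neg_div, neg_add_cancel, Real.exp_zero,
        Complex.ofReal_one]
    simp only [hw, hz0, hq0, zero_div, Real.exp_zero, Complex.ofReal_one, mul_one, mul_sub]
    rw [mul_left_comm, hinv, mul_one]
  calc ‖z J - (Real.exp (-q J / 2) : ℂ)‖ ≤ 1 * dist (w 0) (w J) := by
        rw [hwJ, dist_comm, dist_eq_norm]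
        refine norm_mul_le_of_le ?_ le_rfl
        rw [Complex.norm_real, Real.norm_of_nonneg (Real.exp_nonneg _), Real.exp_le_one_iff]
        linarith
    _ ≤ ∑ _j ∈ Finset.range J, Real.exp (J * d / 2) * (e + d ^ 2) := by
        rw [one_mul]; exact dist_le_range_sum_of_dist_le J fun hj => hw_step _ hj
    _ = J * (Real.exp (J * d / 2) * (e + d ^ 2)) := by simp

end Recursion

section Scenery

variable {Ω : Type*} [MeasurableSpace Ω] {μ : Measure Ω} {ξ : ℤ → Ω → ℝ}

lemma Cond3.memLp (h3 : Cond3 μ ξ) (hm : ∀ k, Measurable (ξ k)) (k : ℤ) : MemLp (ξ k) 4 μ := by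
  rw [← integrable_norm_rpow_iff (hm k).aestronglyMeasurable (by norm_num) (by norm_num)]
  refine (h3.2.2 k).congr (ae_of_all _ fun ω => ?_)
  simp only [ENNReal.toReal_ofNat, Real.norm_eq_abs]
  exact_mod_cast (Even.pow_abs (by decide) (ξ k ω)).symm

lemma IsStationarySeq.integral_comp {E : Type*} [NormedAddCommGroup E] [NormedSpace ℝ E]
    (hs : IsStationarySeq μ ξ) (hm : ∀ k, Measurable (ξ k)) {q : ℕ} (k : Fin q → ℤ) (j : ℤ)
    {f : (Fin q → ℝ) → E} (hf : StronglyMeasurable f) :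
    ∫ ω, f (fun i => ξ (k i + j) ω) ∂μ = ∫ ω, f (fun i => ξ (k i) ω) ∂μ := by
  have hshift : Measurable (fun ω i => ξ (k i + j) ω) := measurable_pi_lambda _ fun i => hm _
  have hunshift : Measurable (fun ω i => ξ (k i) ω) := measurable_pi_lambda _ fun i => hm _
  rw [← integral_map hshift.aemeasurable hf.aestronglyMeasurable,
    ← integral_map hunshift.aemeasurable hf.aestronglyMeasurable, hs j q k]

/-- The autocovariance `E[ξ₀ ξ_p]` of a centered stationary sequence. -/
def autocov (μ : Measure Ω) (ξ : ℤ → Ω → ℝ) (p : ℤ) : ℝ := ∫ ω, ξ 0 ω * ξ p ω ∂μ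

lemma IsStationarySeq.integral_mul_eq_autocov (hs : IsStationarySeq μ ξ)
    (hm : ∀ k, Measurable (ξ k)) (k l : ℤ) :
    ∫ ω, ξ k ω * ξ l ω ∂μ = autocov μ ξ (l - k) := by
  have := hs.integral_comp hm ![0, l - k] k (f := fun x => x 0 * x 1)
    (by fun_prop : Measurable fun x : Fin 2 → ℝ => x 0 * x 1).stronglyMeasurable
  simpa [autocov] using this

lemma IsStationarySeq.autocov_neg (hs : IsStationarySeq μ ξ) (hm : ∀ k, Measurable (ξ k))
    (p : ℤ) : autocov μ ξ (-p) = autocov μ ξ p := by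
  have h := hs.integral_mul_eq_autocov hm p 0
  rw [zero_sub] at h
  rw [← h, autocov]
  simp only [mul_comm]

/-- The asymptotic variance `∑_{p ∈ ℤ} E[ξ₀ ξ_p]` of the scenery. -/
def asymptoticVariance (μ : Measure Ω) (ξ : ℤ → Ω → ℝ) : ℝ := ∑' p : ℤ, autocov μ ξ p

/-- The sum `∑_{p ∈ ℤ} √(1 + |p|) |E[ξ₀ ξ_p]|`, finite under `Cond4`, which measures how fast
correlations decay. -/
def autocovMoment (μ : Measure Ω) (ξ : ℤ → Ω → ℝ) : ℝ :=
  ∑' p : ℤ, √(1 + |(p : ℝ)|) * |autocov μ ξ p|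

lemma autocovMoment_nonneg : 0 ≤ autocovMoment μ ξ := tsum_nonneg fun _ => by positivity

lemma summable_sqrt_mul_abs_autocov (hs : IsStationarySeq μ ξ) (hm : ∀ k, Measurable (ξ k))
    (h4 : Cond4 μ ξ) : Summable fun p : ℤ => √(1 + |(p : ℝ)|) * |autocov μ ξ p| := by
  have hnat : Summable fun p : ℕ => √(1 + |((p : ℤ) : ℝ)|) * |autocov μ ξ (p : ℤ)| := by
    simpa [autocov] using h4.1
  refine Summable.of_nat_of_neg hnat ?_
  simpa [hs.autocov_neg hm] using hnat

lemma abs_autocov_le_sqrt_mul (p : ℤ) :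
    |autocov μ ξ p| ≤ √(1 + |(p : ℝ)|) * |autocov μ ξ p| :=
  le_mul_of_one_le_left (abs_nonneg _) (Real.one_le_sqrt.2 (by linarith [abs_nonneg (p : ℝ)]))

lemma summable_abs_autocov (hs : IsStationarySeq μ ξ) (hm : ∀ k, Measurable (ξ k))
    (h4 : Cond4 μ ξ) : Summable fun p : ℤ => |autocov μ ξ p| :=
  .of_nonneg_of_le (fun _ => abs_nonneg _) abs_autocov_le_sqrt_mul
    (summable_sqrt_mul_abs_autocov hs hm h4)

lemma tsum_abs_autocov_le (hs : IsStationarySeq μ ξ) (hm : ∀ k, Measurable (ξ k))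
    (h4 : Cond4 μ ξ) : ∑' p : ℤ, |autocov μ ξ p| ≤ autocovMoment μ ξ :=
  (summable_abs_autocov hs hm h4).tsum_le_tsum abs_autocov_le_sqrt_mul
    (summable_sqrt_mul_abs_autocov hs hm h4)

lemma integrable_mul_mul_mul {x y z u : Ω → ℝ} (hx : MemLp x 4 μ) (hy : MemLp y 4 μ)
    (hz : MemLp z 4 μ) (hu : MemLp u 4 μ) : Integrable (fun ω => x ω * y ω * z ω * u ω) μ := by
  have : ENNReal.HolderTriple 4 4 2 := ⟨by
    rw [← ENNReal.toReal_eq_toReal_iff' (by simp) (by simp)]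
    norm_num [ENNReal.toReal_add]⟩
  have := MemLp.integrable_mul (hy.mul (r := 2) hx) (hu.mul (r := 2) hz)
  refine this.congr (ae_of_all _ fun ω => ?_)
  simp only [Pi.mul_apply]; ring

lemma sum_pow_four_eq {ι R : Type*} [CommSemiring R] (s : Finset ι) (x : ι → R) :
    (∑ i ∈ s, x i) ^ 4 =
      ∑ k₁ ∈ s, ∑ k₂ ∈ s, ∑ k₃ ∈ s, ∑ k₄ ∈ s, x k₁ * x k₂ * x k₃ * x k₄ := by
  simp only [← Finset.mul_sum, ← Finset.sum_mul]
  ring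

lemma integral_sum_pow_four_eq {ι : Type*} (s : Finset ι) {x : ι → Ω → ℝ}
    (hx : ∀ i, MemLp (x i) 4 μ) :
    ∫ ω, (∑ i ∈ s, x i ω) ^ 4 ∂μ = ∑ k₁ ∈ s, ∑ k₂ ∈ s, ∑ k₃ ∈ s, ∑ k₄ ∈ s,
      ∫ ω, x k₁ ω * x k₂ ω * x k₃ ω * x k₄ ω ∂μ := by
  have hint (k₁ k₂ k₃ k₄ : ι) := integrable_mul_mul_mul (hx k₁) (hx k₂) (hx k₃) (hx k₄)
  have hint₁ (k₁ k₂ k₃ : ι) := integrable_finsetSum s fun k₄ _ => hint k₁ k₂ k₃ k₄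
  have hint₂ (k₁ k₂ : ι) := integrable_finsetSum s fun k₃ _ => hint₁ k₁ k₂ k₃
  simp only [sum_pow_four_eq]
  rw [integral_finsetSum _ fun k₁ _ => integrable_finsetSum _ fun k₂ _ => hint₂ k₁ k₂]
  refine Finset.sum_congr rfl fun k₁ _ => ?_
  rw [integral_finsetSum _ fun k₂ _ => hint₂ k₁ k₂]
  refine Finset.sum_congr rfl fun k₂ _ => ?_
  rw [integral_finsetSum _ fun k₃ _ => hint₁ k₁ k₂ k₃]
  exact Finset.sum_congr rfl fun k₃ _ => integral_finsetSum _ fun k₄ _ => hint k₁ k₂ k₃ k₄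

lemma IsStationarySeq.abs_integral_mul_mul_mul_le (hs : IsStationarySeq μ ξ)
    (hm : ∀ k, Measurable (ξ k)) {β : ℕ → ℝ} {c : ℝ} (hβ : ∀ k, |β k| ≤ c) (m k₁ k₂ k₃ k₄ : ℕ) :
    |∫ ω, (β k₁ * ξ (k₁ + m) ω) * (β k₂ * ξ (k₂ + m) ω) * (β k₃ * ξ (k₃ + m) ω) *
        (β k₄ * ξ (k₄ + m) ω) ∂μ| ≤
      c ^ 4 * |∫ ω, ξ k₁ ω * ξ k₂ ω * ξ k₃ ω * ξ k₄ ω ∂μ| := by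
  have hc : 0 ≤ c := (abs_nonneg _).trans (hβ 0)
  have hshift := hs.integral_comp hm ![(k₁ : ℤ), k₂, k₃, k₄] m
    (f := fun x => x 0 * x 1 * x 2 * x 3)
    (by fun_prop : Measurable fun x : Fin 4 → ℝ => x 0 * x 1 * x 2 * x 3).stronglyMeasurable
  simp only [Matrix.cons_val] at hshift
  have hfactor (ω : Ω) : (β k₁ * ξ (k₁ + m) ω) * (β k₂ * ξ (k₂ + m) ω) * (β k₃ * ξ (k₃ + m) ω) *
      (β k₄ * ξ (k₄ + m) ω) = (β k₁ * β k₂ * β k₃ * β k₄) *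
        (ξ (k₁ + m) ω * ξ (k₂ + m) ω * ξ (k₃ + m) ω * ξ (k₄ + m) ω) := by ring
  simp only [hfactor, integral_const_mul, abs_mul, hshift]
  gcongr
  calc |β k₁| * |β k₂| * |β k₃| * |β k₄| ≤ c * c * c * c := by gcongr <;> exact hβ _
    _ = c ^ 4 := by ring

/-- The second half of `Cond4`, with an explicit constant. -/
def FourthMomentBound (μ : Measure Ω) (ξ : ℤ → Ω → ℝ) (B : ℝ) : Prop :=
  ∀ N : ℕ, 1 ≤ N →
    ∑ k₁ ∈ Finset.range N, ∑ k₂ ∈ Finset.range N, ∑ k₃ ∈ Finset.range N, ∑ k₄ ∈ Finset.range N,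
      |∫ ω, ξ (k₁ : ℤ) ω * ξ (k₂ : ℤ) ω * ξ (k₃ : ℤ) ω * ξ (k₄ : ℤ) ω ∂μ| ≤ B * (N : ℝ) ^ 2

lemma FourthMomentBound.nonneg {B : ℝ} (hB : FourthMomentBound μ ξ B) : 0 ≤ B := by
  have h : (0 : ℝ) ≤ B * ((1 : ℕ) : ℝ) ^ 2 := le_trans (by positivity) (hB 1 le_rfl)
  simpa using h

/-- The partial sum `∑_{k < m} b_k ξ_k`. -/
def weightedSum {Ω : Type*} (ξ : ℤ → Ω → ℝ) (b : ℕ → ℝ) (m : ℕ) (ω : Ω) : ℝ :=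
  ∑ k ∈ Finset.range m, b k * ξ k ω

lemma weightedSum_sub {Ω : Type*} {ξ : ℤ → Ω → ℝ} (b : ℕ → ℝ) {m m' : ℕ} (h : m ≤ m') (ω : Ω) :
    weightedSum ξ b m' ω - weightedSum ξ b m ω = ∑ k ∈ Finset.Ico m m', b k * ξ k ω :=
  (Finset.sum_Ico_eq_sub _ h).symm

lemma Cond3.memLp_weightedSum (h3 : Cond3 μ ξ) (hm : ∀ k, Measurable (ξ k)) (b : ℕ → ℝ) (m : ℕ) :
    MemLp (weightedSum ξ b m) 4 μ :=
  memLp_finsetSum _ fun k _ => (h3.memLp hm k).const_mul (b k)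

lemma integral_weightedSum_sub_pow_four_le (hm : ∀ k, Measurable (ξ k)) (h3 : Cond3 μ ξ) {B : ℝ}
    (hB : FourthMomentBound μ ξ B) {b : ℕ → ℝ} {c : ℝ} (hb : ∀ k, |b k| ≤ c) {m m' w : ℕ}
    (h : m ≤ m') (hw : m' ≤ m + w) :
    ∫ ω, (weightedSum ξ b m' ω - weightedSum ξ b m ω) ^ 4 ∂μ ≤ c ^ 4 * (B * (w : ℝ) ^ 2) := by
  have hB0 := hB.nonneg
  rcases h.eq_or_lt with rfl | hlt
  · simp only [sub_self, zero_pow four_ne_zero, integral_zero]; positivity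
  have hcast (i : ℕ) : ((m + i : ℕ) : ℤ) = (i : ℤ) + m := by push_cast; ring
  simp only [weightedSum_sub b h, Finset.sum_Ico_eq_sum_range, hcast]
  rw [integral_sum_pow_four_eq _ fun i => (h3.memLp hm _).const_mul _]
  have hwidth : ((m' - m : ℕ) : ℝ) ≤ w := by exact_mod_cast (by omega : m' - m ≤ w)
  calc _ ≤ ∑ k₁ ∈ Finset.range (m' - m), ∑ k₂ ∈ Finset.range (m' - m),
        ∑ k₃ ∈ Finset.range (m' - m), ∑ k₄ ∈ Finset.range (m' - m),
          c ^ 4 * |∫ ω, ξ (k₁ : ℤ) ω * ξ (k₂ : ℤ) ω * ξ (k₃ : ℤ) ω * ξ (k₄ : ℤ) ω ∂μ| := by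
        gcongr with k₁ _ k₂ _ k₃ _ k₄ _
        exact (le_abs_self _).trans
          (h3.1.abs_integral_mul_mul_mul_le hm (β := fun i => b (m + i)) (fun k => hb _) m ..)
    _ ≤ c ^ 4 * (B * ((m' - m : ℕ) : ℝ) ^ 2) := by
        simp only [← Finset.mul_sum]
        gcongr
        exact hB _ (by omega)
    _ ≤ c ^ 4 * (B * (w : ℝ) ^ 2) := by gcongr

lemma integral_abs_weightedSum_sub_pow_three_le [IsProbabilityMeasure μ]
    (hm : ∀ k, Measurable (ξ k)) (h3 : Cond3 μ ξ) {B : ℝ} (hB : FourthMomentBound μ ξ B)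
    {b : ℕ → ℝ} {c : ℝ} (hc : 0 < c) (hb : ∀ k, |b k| ≤ c) {m m' w : ℕ} (hw0 : 0 < w)
    (h : m ≤ m') (hw : m' ≤ m + w) :
    ∫ ω, |weightedSum ξ b m' ω - weightedSum ξ b m ω| ^ 3 ∂μ ≤ ((B + 1) * c * √w) ^ 3 := by
  have hB0 := hB.nonneg
  refine integral_abs_pow_le_pow (p := 4)
    ((h3.memLp_weightedSum hm b m').sub (h3.memLp_weightedSum hm b m)) (by norm_num)
    (by positivity) ?_
  calc _ = ∫ ω, (weightedSum ξ b m' ω - weightedSum ξ b m ω) ^ 4 ∂μ := by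
        simp only [Even.pow_abs (show Even 4 by decide)]; rfl
    _ ≤ c ^ 4 * (B * (w : ℝ) ^ 2) := integral_weightedSum_sub_pow_four_le hm h3 hB hb h hw
    _ ≤ c ^ 4 * ((B + 1) ^ 4 * (w : ℝ) ^ 2) := by
        gcongr
        nlinarith [pow_le_pow_right₀ (by linarith : 1 ≤ B + 1) (by norm_num : 1 ≤ 4)]
    _ = ((B + 1) * c * √w) ^ 4 := by
        rw [mul_pow, mul_pow, show √(w : ℝ) ^ 4 = (√w ^ 2) ^ 2 by ring,
          Real.sq_sqrt (Nat.cast_nonneg w)]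
        ring

end Scenery

section Blocks

variable {Ω : Type*} [MeasurableSpace Ω] {μ : Measure Ω} {ξ : ℤ → Ω → ℝ}

lemma sum_abs_le_mul {ι : Type*} {s : Finset ι} {b : ι → ℝ} {c x : ℝ} (hc : 0 ≤ c)
    (hb : ∀ k, |b k| ≤ c) (hs : (s.card : ℝ) ≤ x) : ∑ k ∈ s, |b k| ≤ x * c :=
  (Finset.sum_le_card_nsmul _ _ c fun k _ => hb k).trans (by rw [nsmul_eq_mul]; gcongr)

lemma weightedSum_neg {Ω : Type*} (ξ : ℤ → Ω → ℝ) (b : ℕ → ℝ) (m : ℕ) (ω : Ω) :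
    weightedSum ξ (-b) m ω = -weightedSum ξ b m ω := by
  simp [weightedSum]

lemma Cond5Bound.norm_covC_weightedSum_le [IsProbabilityMeasure μ] {C : ℝ} {φ : ℕ → ℕ → ℝ}
    (hC : 0 ≤ C) (hφ : ∀ p s, 0 ≤ φ p s) (hbd : Cond5Bound μ ξ C φ) {b β : ℕ → ℝ} {c : ℝ}
    (hb : ∀ k, |b k| ≤ c) (hβ : ∀ k, |β k| ≤ c) {n g w m m' : ℕ} (hnm : n ≤ m) (h : m ≤ m')
    (hw : m' ≤ n + w) :
    ‖covC μ (fun ω => expI (weightedSum ξ b (n - g) ω))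
        (fun ω => expI (weightedSum ξ β m' ω - weightedSum ξ β m ω))‖
      ≤ C * (1 + n * c + w * c) * φ g w := by
  have hc : 0 ≤ c := (abs_nonneg _).trans (hb 0)
  have hφ0 := hφ g w
  rcases le_total n g with hng | hgn
  · have hzero : covC μ (fun ω => expI (weightedSum ξ b (n - g) ω))
        (fun ω => expI (weightedSum ξ β m' ω - weightedSum ξ β m ω)) = 0 := by
      simp [covC, weightedSum, expI_zero, Nat.sub_eq_zero_of_le hng]
    rw [hzero, norm_zero]
    positivity
  have hpast : Finset.range (n - g) ⊆ Finset.Icc 0 (n - g) := fun k => by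
    simp only [Finset.mem_range, Finset.mem_Icc]; omega
  have hfuture : Finset.Ico m m' ⊆ Finset.Icc n (n + w) := fun k => by
    simp only [Finset.mem_Ico, Finset.mem_Icc]; omega
  have hcov := hbd 0 (n - g) n (n + w) (Nat.zero_le _) (Nat.sub_le _ _) (Nat.le_add_right _ _)
    (fun k => if k ∈ Finset.range (n - g) then b k else 0)
    (fun k => if k ∈ Finset.Ico m m' then β k else 0)
  simp only [ite_mul, zero_mul, apply_ite abs, abs_zero, Finset.sum_ite_mem,
    Finset.inter_eq_right.2 hpast, Finset.inter_eq_right.2 hfuture, Nat.sub_sub_self hgn,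
    Nat.add_sub_cancel_left] at hcov
  simp only [weightedSum_sub β h]
  refine hcov.trans ?_
  gcongr
  · exact sum_abs_le_mul hc hb (by rw [Finset.card_range]; exact_mod_cast Nat.sub_le n g)
  · exact sum_abs_le_mul hc hβ (by rw [Nat.card_Ico]; exact_mod_cast (by omega : m' - m ≤ w))

/-- Decorrelation across a gap of `g` sites: for weights bounded by `c`, characteristic functions
of sums over a window of `w` sites starting at `n ≤ M` and of sums stopped at `n - g` have
covariance at most `e`. The truncated `n - g` makes the sums empty when there is no room. -/
def GapDecorrelation (μ : Measure Ω) (ξ : ℤ → Ω → ℝ) (c e : ℝ) (M g w : ℕ) : Prop :=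
  ∀ b β : ℕ → ℝ, (∀ k, |b k| ≤ c) → (∀ k, |β k| ≤ c) → ∀ n ≤ M, ∀ m m', n ≤ m → m ≤ m' →
    m' ≤ n + w → ‖covC μ (fun ω => expI (weightedSum ξ b (n - g) ω))
      (fun ω => expI (weightedSum ξ β m' ω - weightedSum ξ β m ω))‖ ≤ e

lemma Cond5Bound.gapDecorrelation [IsProbabilityMeasure μ] {C : ℝ} {φ : ℕ → ℕ → ℝ} (hC : 0 ≤ C)
    (hφ : ∀ p s, 0 ≤ φ p s) (hbd : Cond5Bound μ ξ C φ) {c : ℝ} (hc : 0 ≤ c) (M g w : ℕ) :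
    GapDecorrelation μ ξ c (C * (1 + M * c + w * c) * φ g w) M g w := by
  intro b β hb hβ n hn m m' hnm h hw
  refine (hbd.norm_covC_weightedSum_le hC hφ hb hβ hnm h hw).trans ?_
  have := hφ g w
  gcongr

section GapDecorrelation

variable {b : ℕ → ℝ} {c e κ : ℝ} {M g w n m m' : ℕ}

lemma GapDecorrelation.mono {e' : ℝ} (hD : GapDecorrelation μ ξ c e M g w) (he : e ≤ e') :
    GapDecorrelation μ ξ c e' M g w := fun b β hb hβ n hn m m' hnm h hw =>
  (hD b β hb hβ n hn m m' hnm h hw).trans he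

lemma GapDecorrelation.norm_covC_neg_sub_le (hD : GapDecorrelation μ ξ c e M g w)
    (hb : ∀ k, |b k| ≤ c) (hn : n ≤ M) (hnm : n ≤ m) (h : m ≤ m') (hw : m' ≤ n + w) :
    ‖covC μ (fun ω => expI (weightedSum ξ b (n - g) ω))
      (fun ω => expI (-(weightedSum ξ b m' ω - weightedSum ξ b m ω)))‖ ≤ e := by
  have hneg := hD b (-b) hb (fun k => by simpa using hb k) n hn m m' hnm h hw
  simp only [weightedSum_neg] at hneg
  simpa only [neg_sub, neg_sub_neg] using hneg

lemma GapDecorrelation.norm_covC_sub_le [IsProbabilityMeasure μ]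
    (hD : GapDecorrelation μ ξ c e M g w) (hm : ∀ k, Measurable (ξ k)) (h3 : Cond3 μ ξ)
    (hb : ∀ k, |b k| ≤ c) (hn : n ≤ M) (hnm : n ≤ m) (h : m ≤ m') (hw : m' ≤ n + w)
    (hκ : ∫ ω, |weightedSum ξ b m' ω - weightedSum ξ b m ω| ^ 3 ∂μ ≤ κ ^ 3) :
    ‖covC μ (fun ω => expI (weightedSum ξ b (n - g) ω))
      (fun ω => ((weightedSum ξ b m' ω - weightedSum ξ b m ω : ℝ) : ℂ))‖ ≤ e + 6 * κ ^ 3 := by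
  have hp (m : ℕ) := (h3.memLp_weightedSum hm b m).mono_exponent (p := 3) (by norm_num)
  refine (norm_covC_ofReal_le (hp _).aemeasurable ((hp m').sub (hp m))
    (hD b b hb hb n hn m m' hnm h hw)
    (hD.norm_covC_neg_sub_le hb hn hnm h hw)).trans ?_
  simpa using hκ

lemma GapDecorrelation.norm_covC_sub_sq_le [IsProbabilityMeasure μ]
    (hD : GapDecorrelation μ ξ c e M g w) (hm : ∀ k, Measurable (ξ k)) (h3 : Cond3 μ ξ)
    (hb : ∀ k, |b k| ≤ c) (hn : n ≤ M) (hnm : n ≤ m) (h : m ≤ m') (hw : m' ≤ n + w)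
    (hκ : ∫ ω, |weightedSum ξ b m' ω - weightedSum ξ b m ω| ^ 3 ∂μ ≤ κ ^ 3) :
    ‖covC μ (fun ω => expI (weightedSum ξ b (n - g) ω))
      (fun ω => ((weightedSum ξ b m' ω - weightedSum ξ b m ω : ℝ) : ℂ) ^ 2)‖
      ≤ 2 * e + 12 * κ ^ 3 := by
  have hp (m : ℕ) := (h3.memLp_weightedSum hm b m).mono_exponent (p := 3) (by norm_num)
  refine (norm_covC_ofReal_sq_le (hp _).aemeasurable ((hp m').sub (hp m))
    (hD b b hb hb n hn m m' hnm h hw)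
    (hD.norm_covC_neg_sub_le hb hn hnm h hw)).trans ?_
  simpa using hκ

end GapDecorrelation

/-- The sum `∑_{p ≥ g} |E[ξ₀ ξ_p]|` of the correlations at distance at least `g`. -/
def autocovTail (μ : Measure Ω) (ξ : ℤ → Ω → ℝ) (g : ℕ) : ℝ :=
  ∑' p : ℕ, |autocov μ ξ ((p + g : ℕ) : ℤ)|

lemma autocovTail_nonneg (g : ℕ) : 0 ≤ autocovTail μ ξ g := tsum_nonneg fun _ => abs_nonneg _

lemma tendsto_autocovTail : Tendsto (autocovTail μ ξ) atTop (nhds 0) :=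
  tendsto_sum_nat_add fun p : ℕ => |autocov μ ξ p|

lemma sum_abs_autocov_le_autocovTail (hsum : Summable fun p : ℤ => |autocov μ ξ p|)
    {k g n : ℕ} (hk : n + g ≤ k) :
    ∑ l ∈ Finset.range n, |autocov μ ξ ((k : ℤ) - l)| ≤ autocovTail μ ξ g := by
  have htail : Summable fun p : ℕ => |autocov μ ξ ((p + g : ℕ) : ℤ)| :=
    (summable_nat_add_iff g).2 (hsum.comp_injective Nat.cast_injective)
  have hinj : Set.InjOn (fun l => k - l - g) (Finset.range n) := by
    intro x hx y hy hxy
    simp only [Finset.coe_range, Set.mem_Iio] at hx hy hxy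
    omega
  calc ∑ l ∈ Finset.range n, |autocov μ ξ ((k : ℤ) - l)|
      = ∑ l ∈ Finset.range n, |autocov μ ξ ((k - l - g + g : ℕ) : ℤ)| := by
        refine Finset.sum_congr rfl fun l hl => ?_
        rw [Finset.mem_range] at hl
        congr 2
        omega
    _ = ∑ p ∈ (Finset.range n).image (fun l => k - l - g), |autocov μ ξ ((p + g : ℕ) : ℤ)| :=
        (Finset.sum_image (f := fun p : ℕ => |autocov μ ξ ((p + g : ℕ) : ℤ)|) hinj).symm
    _ ≤ autocovTail μ ξ g := htail.sum_le_tsum _ fun _ _ => abs_nonneg _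

lemma abs_integral_sub_mul_weightedSum_le (hm : ∀ k, Measurable (ξ k)) (h3 : Cond3 μ ξ)
    [IsFiniteMeasure μ] (hsum : Summable fun p : ℤ => |autocov μ ξ p|) {b : ℕ → ℝ} {c : ℝ}
    (hb : ∀ k, |b k| ≤ c) {m m' w : ℕ} (h : m ≤ m') (hw : m' ≤ m + w) (g : ℕ) :
    |∫ ω, (weightedSum ξ b m' ω - weightedSum ξ b m ω) * weightedSum ξ b (m - g) ω ∂μ| ≤
      c ^ 2 * (w * autocovTail μ ξ g) := by
  have hint (k l : ℕ) : Integrable (fun ω => (b k * ξ k ω) * (b l * ξ l ω)) μ :=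
    MemLp.integrable_mul (p := 2) (q := 2)
      (((h3.memLp hm k).mono_exponent (by norm_num)).const_mul (b k))
      (((h3.memLp hm l).mono_exponent (by norm_num)).const_mul (b l))
  have hpair (k l : ℕ) : |∫ ω, (b k * ξ k ω) * (b l * ξ l ω) ∂μ| ≤
      c ^ 2 * |autocov μ ξ ((k : ℤ) - l)| := by
    have hfactor (ω : Ω) : (b k * ξ k ω) * (b l * ξ l ω) = (b k * b l) * (ξ l ω * ξ k ω) := by ring
    simp only [hfactor, integral_const_mul, h3.1.integral_mul_eq_autocov hm, abs_mul]
    rw [sq]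
    gcongr
    exacts [(abs_nonneg _).trans (hb k), hb k, hb l]
  simp only [weightedSum_sub b h]
  simp only [weightedSum, Finset.sum_mul_sum]
  rw [integral_finsetSum _ fun k _ => integrable_finsetSum _ fun l _ => hint k l]
  simp only [integral_finsetSum _ fun l _ => hint _ l]
  calc _ ≤ ∑ k ∈ Finset.Ico m m', ∑ l ∈ Finset.range (m - g),
        |∫ ω, (b k * ξ k ω) * (b l * ξ l ω) ∂μ| :=
        (Finset.abs_sum_le_sum_abs _ _).trans
          (Finset.sum_le_sum fun k _ => Finset.abs_sum_le_sum_abs _ _)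
    _ ≤ ∑ _k ∈ Finset.Ico m m', c ^ 2 * autocovTail μ ξ g := by
        refine Finset.sum_le_sum fun k hk => (Finset.sum_le_sum fun l _ => hpair k l).trans ?_
        rw [← Finset.mul_sum]
        gcongr
        rcases le_total g m with hgm | hmg
        · exact sum_abs_autocov_le_autocovTail hsum
            (by rw [Nat.sub_add_cancel hgm]; exact (Finset.mem_Ico.1 hk).1)
        · simpa [Nat.sub_eq_zero_of_le hmg] using autocovTail_nonneg g
    _ ≤ c ^ 2 * (w * autocovTail μ ξ g) := by
        have := autocovTail_nonneg (μ := μ) (ξ := ξ) g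
        have hcard : ((m' - m : ℕ) : ℝ) ≤ w := by exact_mod_cast (by omega : m' - m ≤ w)
        rw [Finset.sum_const, Nat.card_Ico, nsmul_eq_mul, mul_left_comm]
        gcongr

lemma integral_sq_sub_integral_sq_eq {A B D : Ω → ℝ} (hA : MemLp A 2 μ) (hB : MemLp B 2 μ)
    (hD : MemLp D 2 μ) :
    ∫ ω, B ω ^ 2 ∂μ - ∫ ω, A ω ^ 2 ∂μ =
      (∫ ω, (B ω - D ω) ^ 2 ∂μ - ∫ ω, (A ω - D ω) ^ 2 ∂μ) + 2 * ∫ ω, (B ω - A ω) * D ω ∂μ := by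
  have hBD : Integrable (fun ω => (B ω - D ω) ^ 2) μ := (hB.sub hD).integrable_sq
  have hAD : Integrable (fun ω => (A ω - D ω) ^ 2) μ := (hA.sub hD).integrable_sq
  have hcross : Integrable (fun ω => (B ω - A ω) * D ω) μ := (hB.sub hA).integrable_mul hD
  rw [← integral_sub hB.integrable_sq hA.integrable_sq, ← integral_sub hBD hAD,
    ← integral_const_mul, ← integral_add (hBD.sub' hAD) (hcross.const_mul 2)]
  congr 1 with ω
  ring

end Blocks

section CentralLimit

variable {Ω : Type*} [MeasurableSpace Ω] {μ : Measure Ω} [IsProbabilityMeasure μ]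
  {ξ : ℤ → Ω → ℝ}

lemma Cond3.integral_weightedSum (h3 : Cond3 μ ξ) (hm : ∀ k, Measurable (ξ k)) (b : ℕ → ℝ)
    (m : ℕ) : ∫ ω, weightedSum ξ b m ω ∂μ = 0 := by
  unfold weightedSum
  rw [integral_finsetSum _ fun (k : ℕ) _ =>
    ((h3.memLp hm k).integrable (by norm_num)).const_mul (b k)]
  simp [integral_const_mul, h3.2.1]

/-- The moment bound entering the block estimates: the increments of the partial sums over at most
`w` sites have third absolute moment at most `κ ^ 3`. -/
def IncrementBound (μ : Measure Ω) (ξ : ℤ → Ω → ℝ) (b : ℕ → ℝ) (w : ℕ) (κ : ℝ) : Prop :=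
  ∀ m m', m ≤ m' → m' ≤ m + w →
    ∫ ω, |weightedSum ξ b m' ω - weightedSum ξ b m ω| ^ 3 ∂μ ≤ κ ^ 3

lemma norm_integral_expI_weightedSum_succ_local_le (hm : ∀ k, Measurable (ξ k)) (h3 : Cond3 μ ξ)
    {b : ℕ → ℝ} {c e κ : ℝ} (hb : ∀ k, |b k| ≤ c) {M r s j : ℕ} (hj : j * s ≤ M) (hκ0 : 0 < κ)
    (hκ : IncrementBound μ ξ b ((r + 1) ^ 2 * s) κ)
    (hnear : GapDecorrelation μ ξ c e M (r * s) s)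
    (hfar : GapDecorrelation μ ξ c e M (r * ((r + 1) * s)) ((r + 1) * s)) :
    ‖∫ ω, expI (weightedSum ξ b ((j + 1) * s) ω) ∂μ -
        (∫ ω, expI (weightedSum ξ b (j * s) ω) ∂μ) * (1 -
          ((∫ ω, (weightedSum ξ b ((j + 1) * s) ω - weightedSum ξ b (j * s - r * s) ω) ^ 2 ∂μ -
            ∫ ω, (weightedSum ξ b (j * s) ω - weightedSum ξ b (j * s - r * s) ω) ^ 2 ∂μ : ℝ) :
              ℂ) / 2)‖
      ≤ 4 * e + 33 * κ ^ 3 := by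
  have hp (m : ℕ) := (h3.memLp_weightedSum hm b m).mono_exponent (p := 3) (by norm_num)
  have hcube {m m' : ℕ} (h : m ≤ m') (hw : m' ≤ m + (r + 1) ^ 2 * s) := hκ m m' h hw
  set i₁ := j * s - r * s
  set i₂ := i₁ - r * ((r + 1) * s)
  have hj_succ : (j + 1) * s = j * s + s := by ring
  have hwidth : (r + 1) ^ 2 * s = r * s + r * ((r + 1) * s) + s := by ring
  have hwindow : (r + 1) * s = r * s + s := by ring
  set A := weightedSum ξ b
  have hU0 : ∫ ω, (A ((j + 1) * s) ω - A (j * s) ω) ∂μ = 0 := by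
    rw [integral_sub ((hp _).integrable (by norm_num)) ((hp _).integrable (by norm_num)),
      h3.integral_weightedSum hm, h3.integral_weightedSum hm, sub_zero]
  have hcovU := hnear.norm_covC_sub_le hm h3 hb hj le_rfl (m' := (j + 1) * s) (by omega)
    (by omega) (hcube (by omega) (by omega))
  have hcovG := hfar.norm_covC_sub_sq_le hm h3 hb (n := i₁) (m' := j * s) (by omega) le_rfl
    (by omega) (by omega) (hcube (by omega) (by omega))
  have hcovGU := hfar.norm_covC_sub_sq_le hm h3 hb (n := i₁) (m' := (j + 1) * s) (by omega) le_rfl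
    (by omega) (by omega) (hcube (by omega) (by omega))
  have he : 0 ≤ e + 6 * κ ^ 3 := (norm_nonneg _).trans hcovU
  have hcancel (x y z : ℝ) : (y - x) + (z - y) = z - x := by ring
  have hstep := norm_integral_expI_block_step_le (hp i₂).aemeasurable ((hp i₁).sub (hp i₂))
    ((hp (j * s)).sub (hp i₁)) ((hp ((j + 1) * s)).sub (hp (j * s))) (η := κ)
    (e := 2 * e + 12 * κ ^ 3) hκ0 hU0
  simp only [Pi.sub_apply, hcancel, add_sub_cancel] at hstep
  refine (hstep (hcube (by omega) (by omega)) (hcube (by omega) (by omega))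
    (hcube (by omega) (by omega)) (hcube (by omega) (by omega)) ?_ hcovG hcovGU).trans
    (by linarith)
  exact hcovU.trans (by linarith)

lemma norm_integral_expI_weightedSum_succ_le (hm : ∀ k, Measurable (ξ k)) (h3 : Cond3 μ ξ)
    (hsum : Summable fun p : ℤ => |autocov μ ξ p|) {b : ℕ → ℝ} {c e κ : ℝ}
    (hb : ∀ k, |b k| ≤ c) {M r s j : ℕ} (hj : j * s ≤ M) (hκ0 : 0 < κ)
    (hκ : IncrementBound μ ξ b ((r + 1) ^ 2 * s) κ)
    (hnear : GapDecorrelation μ ξ c e M (r * s) s)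
    (hfar : GapDecorrelation μ ξ c e M (r * ((r + 1) * s)) ((r + 1) * s)) :
    ‖∫ ω, expI (weightedSum ξ b ((j + 1) * s) ω) ∂μ -
        (∫ ω, expI (weightedSum ξ b (j * s) ω) ∂μ) * (1 -
          ((∫ ω, weightedSum ξ b ((j + 1) * s) ω ^ 2 ∂μ -
            ∫ ω, weightedSum ξ b (j * s) ω ^ 2 ∂μ : ℝ) : ℂ) / 2)‖
      ≤ 4 * e + 33 * κ ^ 3 + c ^ 2 * (s * autocovTail μ ξ (r * s)) := by
  have hp (m : ℕ) := (h3.memLp_weightedSum hm b m).mono_exponent (p := 2) (by norm_num)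
  have hstep := norm_integral_expI_weightedSum_succ_local_le hm h3 hb hj hκ0 hκ hnear hfar
  have hcross := abs_integral_sub_mul_weightedSum_le hm h3 hsum hb (m := j * s)
    (m' := (j + 1) * s) (w := s) (by gcongr; omega) (by rw [add_mul, one_mul]) (r * s)
  rw [integral_sq_sub_integral_sq_eq (hp _) (hp _) (hp (j * s - r * s))]
  set z := ∫ ω, expI (weightedSum ξ b (j * s) ω) ∂μ
  set f := ∫ ω, (weightedSum ξ b ((j + 1) * s) ω - weightedSum ξ b (j * s) ω) *
    weightedSum ξ b (j * s - r * s) ω ∂μ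
  have hz : ‖z‖ ≤ 1 := norm_integral_expI_le_one _
  have hzf := norm_add_le_of_le hstep
    (norm_mul_le_of_le hz ((Complex.norm_real f).trans_le hcross))
  rw [one_mul] at hzf
  refine (le_of_eq (congrArg norm ?_)).trans hzf
  push_cast
  ring

lemma abs_integral_sq_weightedSum_sub_le (hm : ∀ k, Measurable (ξ k)) (h3 : Cond3 μ ξ)
    (hsum : Summable fun p : ℤ => |autocov μ ξ p|) {b : ℕ → ℝ} {c κ : ℝ} (hb : ∀ k, |b k| ≤ c)
    {w m m' : ℕ} (h : m ≤ m') (hw : m' ≤ m + w) (hκ0 : 0 < κ)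
    (hκ : ∫ ω, |weightedSum ξ b m' ω - weightedSum ξ b m ω| ^ 3 ∂μ ≤ κ ^ 3) :
    |∫ ω, weightedSum ξ b m' ω ^ 2 ∂μ - ∫ ω, weightedSum ξ b m ω ^ 2 ∂μ| ≤
      κ ^ 2 + 2 * (c ^ 2 * (w * autocovTail μ ξ 0)) := by
  have hp (m : ℕ) := h3.memLp_weightedSum hm b m
  have hp2 (m : ℕ) := (hp m).mono_exponent (p := 2) (by norm_num)
  have hcross := abs_integral_sub_mul_weightedSum_le hm h3 hsum hb h hw 0
  rw [Nat.sub_zero] at hcross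
  have hsq : ∫ ω, (weightedSum ξ b m' ω - weightedSum ξ b m ω) ^ 2 ∂μ ≤ κ ^ 2 := by
    have := integral_abs_pow_le_pow (p := 3) (k := 2)
      (((hp m').sub (hp m)).mono_exponent (by norm_num)) (by norm_num) hκ0 hκ
    simpa only [Pi.sub_apply, sq_abs] using this
  have hpos : 0 ≤ ∫ ω, (weightedSum ξ b m' ω - weightedSum ξ b m ω) ^ 2 ∂μ :=
    integral_nonneg fun ω => sq_nonneg _
  rw [integral_sq_sub_integral_sq_eq (hp2 m) (hp2 m') (hp2 m)]
  simp only [sub_self, ne_eq, OfNat.ofNat_ne_zero, not_false_eq_true, zero_pow, integral_zero,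
    sub_zero]
  refine (abs_add_le _ _).trans ?_
  rw [abs_of_nonneg hpos, abs_mul, abs_two]
  gcongr

lemma Cond5.exists_eventually_gapDecorrelation (h5 : Cond5 μ ξ) :
    ∃ r : ℕ, 1 ≤ r ∧ ∀ (J a : ℕ) (K ε : ℝ), 1 ≤ J → 1 ≤ a → 0 ≤ K → 0 < ε →
      ∀ᶠ s : ℕ in atTop,
        GapDecorrelation μ ξ (K / √(J * s : ℕ)) ε (J * s) (r * (a * s)) (a * s) := by
  obtain ⟨C, hC, φ, r, hr, hφ, -, hlim, hbd⟩ := h5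
  refine ⟨r, hr, fun J a K ε hJ ha hK hε => ?_⟩
  have hlim_a : Tendsto (fun s : ℕ => C * (1 + (J + a) * K) *
      (√(a * s : ℕ) * φ (r * (a * s)) (a * s))) atTop (nhds 0) := by
    simpa using (hlim.comp (tendsto_id.const_mul_atTop' ha)).const_mul (C * (1 + (J + a) * K))
  filter_upwards [hlim_a.eventually_le_const hε, eventually_ge_atTop 1] with s hs hs1
  refine (hbd.gapDecorrelation hC.le hφ (by positivity) (J * s) (r * (a * s)) (a * s)).mono
    (le_trans ?_ hs)
  have hφ0 := hφ (r * (a * s)) (a * s)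
  have hsc : (s : ℝ) * (K / √(J * s : ℕ)) ≤ K * √(a * s : ℕ) := by
    have hs_le : (s : ℝ) ≤ √(a * s : ℕ) * √(J * s : ℕ) := by
      rw [← Real.sqrt_mul (Nat.cast_nonneg _)]
      refine Real.le_sqrt_of_sq_le ?_
      exact_mod_cast (sq s).trans_le (Nat.mul_le_mul (Nat.le_mul_of_pos_left s ha)
        (Nat.le_mul_of_pos_left s hJ))
    rw [mul_div_left_comm]
    gcongr
    exact div_le_of_le_mul₀ (by positivity) (by positivity) hs_le
  have hone : 1 ≤ √(a * s : ℕ) :=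
    Real.one_le_sqrt.2 (by exact_mod_cast Nat.one_le_iff_ne_zero.2 (by positivity))
  calc C * (1 + (J * s : ℕ) * (K / √(J * s : ℕ)) + (a * s : ℕ) * (K / √(J * s : ℕ))) *
        φ (r * (a * s)) (a * s)
      = C * (1 + (J + a) * (s * (K / √(J * s : ℕ)))) * φ (r * (a * s)) (a * s) := by
        push_cast; ring
    _ ≤ C * (√(a * s : ℕ) + (J + a) * (K * √(a * s : ℕ))) * φ (r * (a * s)) (a * s) := by gcongr
    _ = C * (1 + (J + a) * K) * (√(a * s : ℕ) * φ (r * (a * s)) (a * s)) := by ring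

lemma norm_integral_expI_weightedSum_mul_sub_exp_le (hm : ∀ k, Measurable (ξ k))
    (h3 : Cond3 μ ξ) (hsum : Summable fun p : ℤ => |autocov μ ξ p|) {b : ℕ → ℝ} {c d κ : ℝ}
    (hb : ∀ k, |b k| ≤ c) {J r s : ℕ} (hκ0 : 0 < κ)
    (hκ : IncrementBound μ ξ b ((r + 1) ^ 2 * s) κ)
    (hnear : GapDecorrelation μ ξ c (κ ^ 3) (J * s) (r * s) s)
    (hfar : GapDecorrelation μ ξ c (κ ^ 3) (J * s) (r * ((r + 1) * s)) ((r + 1) * s))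
    (htail : c ^ 2 * (s * autocovTail μ ξ (r * s)) ≤ κ ^ 3)
    (hvar : κ ^ 2 + 2 * (c ^ 2 * (s * autocovTail μ ξ 0)) ≤ d) (hd : d ≤ 1) :
    ‖∫ ω, expI (weightedSum ξ b (J * s) ω) ∂μ -
        (Real.exp (-(∫ ω, weightedSum ξ b (J * s) ω ^ 2 ∂μ) / 2) : ℂ)‖
      ≤ J * (Real.exp (J * d / 2) * (38 * κ ^ 3 + d ^ 2)) := by
  have hd0 : 0 ≤ d := hvar.trans' (by have := autocovTail_nonneg (μ := μ) (ξ := ξ) 0; positivity)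
  have hsucc (j : ℕ) : j * s ≤ (j + 1) * s := by gcongr; omega
  have hlt {j : ℕ} (hj : j < J) : j * s ≤ J * s := by gcongr
  refine norm_sub_exp_le_of_recursion (z := fun j => ∫ ω, expI (weightedSum ξ b (j * s) ω) ∂μ)
    (q := fun j => ∫ ω, weightedSum ξ b (j * s) ω ^ 2 ∂μ) hd0 hd (by simp [weightedSum, expI_zero])
    (by simp [weightedSum]) (integral_nonneg fun ω => sq_nonneg _)
    (fun j _ => norm_integral_expI_le_one _) (fun j _ => ?_) (fun j hj => ?_)
  · exact (abs_integral_sq_weightedSum_sub_le hm h3 hsum hb (hsucc j)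
      (w := s) (by rw [add_mul, one_mul]) hκ0 (hκ _ _ (hsucc j) (by
        nlinarith [Nat.zero_le (r ^ 2 * s), Nat.zero_le (r * s)]))).trans hvar
  · exact (norm_integral_expI_weightedSum_succ_le hm h3 hsum hb (hlt hj) hκ0 hκ hnear hfar).trans
      (by linarith)

lemma exists_blockCount_error_le (a D : ℝ) {δ : ℝ} (hδ : 0 < δ) :
    ∃ J : ℕ, 0 < J ∧ D / J ≤ 1 ∧
      J * (Real.exp (J * (D / J) / 2) * (38 * (a / √J) ^ 3 + (D / J) ^ 2)) ≤ δ := by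
  have hinv : Tendsto (fun J : ℕ => (√(J : ℝ))⁻¹) atTop (nhds 0) :=
    tendsto_inv_atTop_zero.comp (Real.tendsto_sqrt_atTop.comp tendsto_natCast_atTop_atTop)
  have hlim : Tendsto (fun J : ℕ => Real.exp (D / 2) *
      (38 * a ^ 3 * (√(J : ℝ))⁻¹ + D ^ 2 * (√(J : ℝ))⁻¹ ^ 2)) atTop (nhds 0) := by
    simpa using ((hinv.const_mul (38 * a ^ 3)).add ((hinv.pow 2).const_mul (D ^ 2))).const_mul
      (Real.exp (D / 2))
  obtain ⟨J, hJδ, hJ1, hJD⟩ := ((hlim.eventually_le_const hδ).and ((eventually_gt_atTop 0).and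
    (tendsto_natCast_atTop_atTop (R := ℝ) |>.eventually_ge_atTop D))).exists
  have hJ0 : (0 : ℝ) < J := by exact_mod_cast hJ1
  refine ⟨J, hJ1, (div_le_one hJ0).2 hJD, (le_of_eq ?_).trans hJδ⟩
  obtain ⟨u, hu, hJu⟩ : ∃ u : ℝ, 0 < u ∧ (J : ℝ) = u ^ 2 :=
    ⟨√J, by positivity, (Real.sq_sqrt hJ0.le).symm⟩
  rw [hJu, Real.sqrt_sq hu.le, mul_div_cancel₀ _ (by positivity)]
  field_simp

lemma exists_norm_integral_expI_weightedSum_mul_sub_exp_le (hm : ∀ k, Measurable (ξ k))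
    (h3 : Cond3 μ ξ) (h4 : Cond4 μ ξ) (h5 : Cond5 μ ξ) {K δ : ℝ} (hK : 0 < K) (hδ : 0 < δ) :
    ∃ J : ℕ, 0 < J ∧ ∀ᶠ s : ℕ in atTop, ∀ b : ℕ → ℝ, (∀ k, |b k| ≤ K / √(J * s : ℕ)) →
      ‖∫ ω, expI (weightedSum ξ b (J * s) ω) ∂μ -
        (Real.exp (-(∫ ω, weightedSum ξ b (J * s) ω ^ 2 ∂μ) / 2) : ℂ)‖ ≤ δ := by
  obtain ⟨r, hr, hgap⟩ := h5.exists_eventually_gapDecorrelation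
  obtain ⟨B, hB⟩ : ∃ B, FourthMomentBound μ ξ B := h4.2
  have hB0 := hB.nonneg
  have hsum := summable_abs_autocov h3.1 hm h4
  set a := (B + 1) * (r + 1) * K with ha
  obtain ⟨J, hJ, hJ1, hJδ⟩ :=
    exists_blockCount_error_le a (a ^ 2 + 2 * (K ^ 2 * autocovTail μ ξ 0)) hδ
  have hJ0 : (0 : ℝ) < J := by exact_mod_cast hJ
  set κ := a / √(J : ℝ) with hκ
  have hκ0 : 0 < κ := by positivity
  have hκ2 : κ ^ 2 = a ^ 2 / J := by rw [hκ, div_pow, Real.sq_sqrt hJ0.le]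
  have htail : Tendsto (fun s : ℕ => K ^ 2 / J * autocovTail μ ξ (r * s)) atTop (nhds 0) := by
    simpa using (tendsto_autocovTail.comp (tendsto_id.const_mul_atTop' hr)).const_mul (K ^ 2 / J)
  refine ⟨J, hJ, ?_⟩
  filter_upwards [hgap J 1 K _ hJ le_rfl hK.le (pow_pos hκ0 3),
    hgap J (r + 1) K _ hJ (by omega) hK.le (pow_pos hκ0 3),
    htail.eventually_le_const (pow_pos hκ0 3), eventually_gt_atTop 0] with s hnear hfar hs hs0 b hb
  have : (0 : ℝ) < s := by exact_mod_cast hs0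
  have hsJ : √(J * s : ℕ) = √J * √s := by rw [Nat.cast_mul, Real.sqrt_mul hJ0.le]
  have hc2 : (K / √(J * s : ℕ)) ^ 2 * s = K ^ 2 / J := by
    rw [div_pow, Real.sq_sqrt (by positivity)]; push_cast; field_simp
  have hκc : (B + 1) * (K / √(J * s : ℕ)) * √((r + 1) ^ 2 * s : ℕ) = κ := by
    rw [hsJ, hκ, ha]
    push_cast
    rw [Real.sqrt_mul (by positivity), Real.sqrt_sq (by positivity)]
    field_simp
  refine (norm_integral_expI_weightedSum_mul_sub_exp_le hm h3 hsum hb hκ0 (fun m m' h hw => ?_)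
    (by simpa only [one_mul] using hnear) hfar ?_ (le_of_eq ?_) hJ1).trans hJδ
  · rw [← hκc]
    exact integral_abs_weightedSum_sub_pow_three_le hm h3 hB (by positivity) hb (by positivity) h hw
  · rw [← mul_assoc, hc2]; exact hs
  · rw [← mul_assoc (_ ^ 2), hc2, hκ2]; field_simp

lemma exists_norm_integral_expI_weightedSum_sub_exp_le (hm : ∀ k, Measurable (ξ k))
    (h3 : Cond3 μ ξ) (h4 : Cond4 μ ξ) (h5 : Cond5 μ ξ) {K δ : ℝ} (hK : 0 < K) (hδ : 0 < δ) :
    ∃ N₀ : ℕ, ∀ N ≥ N₀, ∀ b : ℕ → ℝ, (∀ k, |b k| ≤ K / √N) → (∀ k ≥ N, b k = 0) →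
      ‖∫ ω, expI (weightedSum ξ b N ω) ∂μ -
        (Real.exp (-(∫ ω, weightedSum ξ b N ω ^ 2 ∂μ) / 2) : ℂ)‖ ≤ δ := by
  obtain ⟨J, hJ, hCLT⟩ := exists_norm_integral_expI_weightedSum_mul_sub_exp_le hm h3 h4 h5
    (K := K * √2) (by positivity) hδ
  obtain ⟨s₀, hs₀⟩ := eventually_atTop.1 hCLT
  refine ⟨J * (s₀ + 1), fun N hN b hb hb0 => ?_⟩
  have hJN : J ≤ N := (Nat.le_mul_of_pos_right J (Nat.succ_pos _)).trans hN
  have hs₀N : s₀ + 1 ≤ N / J := (Nat.le_div_iff_mul_le hJ).2 (by rwa [mul_comm])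
  set s := N / J + 1 with hs
  have hlow : N ≤ J * s := (Nat.lt_mul_div_succ N hJ).le
  have hup : J * s ≤ 2 * N := by
    have := Nat.mul_div_le N J
    rw [hs, mul_add, mul_one]
    omega
  have hN0 : (0 : ℝ) < N := by exact_mod_cast hJ.trans_le hJN
  have : (0 : ℝ) < (J * s : ℕ) := hN0.trans_le (by exact_mod_cast hlow)
  have hextend : weightedSum ξ b (J * s) = weightedSum ξ b N := by
    funext ω
    rw [← sub_eq_zero, weightedSum_sub b hlow]
    exact Finset.sum_eq_zero fun k hk => by rw [hb0 k (Finset.mem_Ico.1 hk).1, zero_mul]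
  rw [← hextend]
  refine hs₀ s (by omega) b fun k => (hb k).trans ?_
  rw [div_le_div_iff₀ (by positivity) (by positivity), mul_assoc, ← Real.sqrt_mul (by norm_num)]
  gcongr
  exact_mod_cast hup

end CentralLimit

section QuadraticForm

lemma sum_comp_add_le {f : ℤ → ℝ} {T : ℝ} (hT : ∀ F : Finset ℤ, ∑ k ∈ F, f k ≤ T)
    (F : Finset ℤ) (p : ℤ) : ∑ k ∈ F, f (k + p) ≤ T :=
  (Finset.sum_map F (addRightEmbedding p) f).symm.trans_le (hT _)

lemma sum_sq_add_natCast_sub_le {a : ℤ → ℝ} {T : ℝ}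
    (hT : ∀ F : Finset ℤ, ∑ k ∈ F, (a (k + 1) - a k) ^ 2 ≤ T) (F : Finset ℤ) (p : ℕ) :
    ∑ k ∈ F, (a (k + p) - a k) ^ 2 ≤ (p : ℝ) ^ 2 * T := by
  have htel (k : ℤ) : a (k + p) - a k = ∑ i ∈ Finset.range p, (a (k + i + 1) - a (k + i)) := by
    simpa [← add_assoc] using (Finset.sum_range_sub (fun i : ℕ => a (k + i)) p).symm
  calc ∑ k ∈ F, (a (k + p) - a k) ^ 2
      ≤ ∑ k ∈ F, p * ∑ i ∈ Finset.range p, (a (k + i + 1) - a (k + i)) ^ 2 := by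
        gcongr with k
        simpa only [htel, Finset.card_range] using sq_sum_le_card_mul_sum_sq
          (s := Finset.range p) (f := fun i : ℕ => a (k + i + 1) - a (k + i))
    _ = p * ∑ i ∈ Finset.range p, ∑ k ∈ F, (a (k + i + 1) - a (k + i)) ^ 2 := by
        rw [← Finset.mul_sum, Finset.sum_comm]
    _ ≤ p * ∑ _i ∈ Finset.range p, T := by
        gcongr with i
        exact sum_comp_add_le hT F i
    _ = (p : ℝ) ^ 2 * T := by simp only [Finset.sum_const, Finset.card_range, nsmul_eq_mul]; ring

lemma sum_sq_add_sub_le {a : ℤ → ℝ} {T : ℝ}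
    (hT : ∀ F : Finset ℤ, ∑ k ∈ F, (a (k + 1) - a k) ^ 2 ≤ T) (F : Finset ℤ) (p : ℤ) :
    ∑ k ∈ F, (a (k + p) - a k) ^ 2 ≤ (p : ℝ) ^ 2 * T := by
  obtain ⟨q, rfl | rfl⟩ := Int.eq_nat_or_neg p
  · exact_mod_cast sum_sq_add_natCast_sub_le hT F q
  · have h := sum_comp_add_le (fun F => sum_sq_add_natCast_sub_le hT F q) F (-(q : ℤ))
    simp only [neg_add_cancel_right] at h
    rw [Int.cast_neg, neg_sq, Int.cast_natCast]
    exact (Finset.sum_congr rfl fun k _ => by ring).trans_le h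

lemma sum_sq_add_sub_le_four_mul {a : ℤ → ℝ} {A : ℝ} (hA : ∀ F : Finset ℤ, ∑ k ∈ F, a k ^ 2 ≤ A)
    (F : Finset ℤ) (p : ℤ) : ∑ k ∈ F, (a (k + p) - a k) ^ 2 ≤ 4 * A := by
  calc ∑ k ∈ F, (a (k + p) - a k) ^ 2 ≤ ∑ k ∈ F, (2 * a (k + p) ^ 2 + 2 * a k ^ 2) := by
        gcongr with k
        linarith [sq_nonneg (a (k + p) + a k)]
    _ = 2 * ∑ k ∈ F, a (k + p) ^ 2 + 2 * ∑ k ∈ F, a k ^ 2 := by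
        rw [Finset.sum_add_distrib, Finset.mul_sum, Finset.mul_sum]
    _ ≤ 4 * A := by linarith [sum_comp_add_le hA F p, hA F]

lemma sum_sq_add_sub_le_abs_mul {a : ℤ → ℝ} {A T : ℝ}
    (hA : ∀ F : Finset ℤ, ∑ k ∈ F, a k ^ 2 ≤ A)
    (hT : ∀ F : Finset ℤ, ∑ k ∈ F, (a (k + 1) - a k) ^ 2 ≤ T) (F : Finset ℤ) (p : ℤ) {η : ℝ}
    (hη : 0 < η) :
    ∑ k ∈ F, (a (k + p) - a k) ^ 2 ≤ |(p : ℝ)| * (η ^ 2 * A + T / η ^ 2) := by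
  have hA0 : 0 ≤ A := by simpa using hA ∅
  have hT0 : 0 ≤ T := by simpa using hT ∅
  refine le_of_sq_le_sq ?_ (by positivity)
  calc (∑ k ∈ F, (a (k + p) - a k) ^ 2) ^ 2 ≤ (p : ℝ) ^ 2 * T * (4 * A) := by
        rw [sq (∑ k ∈ F, _)]
        exact mul_le_mul (sum_sq_add_sub_le hT F p) (sum_sq_add_sub_le_four_mul hA F p)
          (by positivity) (by positivity)
    _ = (p : ℝ) ^ 2 * (4 * (η ^ 2 * A) * (T / η ^ 2)) := by field_simp
    _ ≤ (p : ℝ) ^ 2 * (η ^ 2 * A + T / η ^ 2) ^ 2 := by gcongr; exact four_mul_le_sq_add ..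
    _ = (|(p : ℝ)| * (η ^ 2 * A + T / η ^ 2)) ^ 2 := by rw [mul_pow, sq_abs]

lemma sum_abs_mul_abs_add_sub_le {a : ℤ → ℝ} {A T : ℝ}
    (hA : ∀ F : Finset ℤ, ∑ k ∈ F, a k ^ 2 ≤ A)
    (hT : ∀ F : Finset ℤ, ∑ k ∈ F, (a (k + 1) - a k) ^ 2 ≤ T) (F : Finset ℤ) (p : ℤ) {η : ℝ}
    (hη : 0 < η) :
    ∑ k ∈ F, |a k| * |a (k + p) - a k| ≤ √(1 + |(p : ℝ)|) * (η * A + T / (2 * η ^ 3)) := by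
  have hA0 : 0 ≤ A := by simpa using hA ∅
  have hT0 : 0 ≤ T := by simpa using hT ∅
  set x := √(1 + |(p : ℝ)|)
  have hx0 : 0 < x := by positivity
  have hx2 : x ^ 2 = 1 + |(p : ℝ)| := Real.sq_sqrt (by positivity)
  have hyoung (u v : ℝ) : |u| * |v| ≤ η * x / 2 * u ^ 2 + (2 * (η * x))⁻¹ * v ^ 2 := by
    rw [← sq_abs u, ← sq_abs v, ← sub_nonneg]
    calc 0 ≤ (2 * (η * x))⁻¹ * (η * x * |u| - |v|) ^ 2 := by positivity
      _ = _ := by field_simp; ring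
  calc ∑ k ∈ F, |a k| * |a (k + p) - a k|
      ≤ ∑ k ∈ F, (η * x / 2 * a k ^ 2 + (2 * (η * x))⁻¹ * (a (k + p) - a k) ^ 2) := by
        gcongr; exact hyoung ..
    _ = η * x / 2 * ∑ k ∈ F, a k ^ 2 + (2 * (η * x))⁻¹ * ∑ k ∈ F, (a (k + p) - a k) ^ 2 := by
        rw [Finset.sum_add_distrib, Finset.mul_sum, Finset.mul_sum]
    _ ≤ η * x / 2 * A + (2 * (η * x))⁻¹ * (x ^ 2 * (η ^ 2 * A + T / η ^ 2)) := by
        gcongr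
        · exact hA F
        · refine (sum_sq_add_sub_le_abs_mul hA hT F p hη).trans ?_
          gcongr
          linarith
    _ = x * (η * A + T / (2 * η ^ 3)) := by field_simp; ring

variable {Ω : Type*} [MeasurableSpace Ω] {μ : Measure Ω} {ξ : ℤ → Ω → ℝ}

lemma IsStationarySeq.tsum_integral_mul (hs : IsStationarySeq μ ξ) (hm : ∀ k, Measurable (ξ k))
    (k : ℤ) : ∑' m : ℤ, ∫ ω, ξ k ω * ξ m ω ∂μ = asymptoticVariance μ ξ := by
  simp only [hs.integral_mul_eq_autocov hm]
  exact (Equiv.subRight k).tsum_eq (autocov μ ξ)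

lemma Cond3.memLp_sum (h3 : Cond3 μ ξ) (hm : ∀ k, Measurable (ξ k)) (a : ℤ → ℝ) (I : Finset ℤ) :
    MemLp (fun ω => ∑ k ∈ I, a k * ξ k ω) 4 μ :=
  memLp_finsetSum _ fun _ _ => (h3.memLp hm _).const_mul _

lemma sum_abs_autocov_sub_le (hs : IsStationarySeq μ ξ) (hm : ∀ k, Measurable (ξ k))
    (h4 : Cond4 μ ξ) (I : Finset ℤ) (k : ℤ) :
    ∑ l ∈ I, |autocov μ ξ (l - k)| ≤ autocovMoment μ ξ := by
  have hsum := summable_abs_autocov hs hm h4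
  calc ∑ l ∈ I, |autocov μ ξ (l - k)| ≤ ∑' l : ℤ, |autocov μ ξ (l - k)| :=
        ((Equiv.subRight k).summable_iff.2 hsum).sum_le_tsum I fun _ _ => abs_nonneg _
    _ = ∑' p : ℤ, |autocov μ ξ p| := (Equiv.subRight k).tsum_eq fun p => |autocov μ ξ p|
    _ ≤ autocovMoment μ ξ := tsum_abs_autocov_le hs hm h4

variable [IsProbabilityMeasure μ]

lemma Cond3.integral_sum_sq (h3 : Cond3 μ ξ) (hm : ∀ k, Measurable (ξ k)) (a : ℤ → ℝ)
    (I : Finset ℤ) :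
    ∫ ω, (∑ k ∈ I, a k * ξ k ω) ^ 2 ∂μ = ∑ k ∈ I, ∑ l ∈ I, a k * a l * autocov μ ξ (l - k) := by
  have hL2 (k : ℤ) : MemLp (fun ω => a k * ξ k ω) 2 μ :=
    ((h3.memLp hm k).const_mul (a k)).mono_exponent (by norm_num)
  have hint (k l : ℤ) : Integrable (fun ω => a k * ξ k ω * (a l * ξ l ω)) μ :=
    (hL2 k).integrable_mul (hL2 l)
  simp only [sq, Finset.sum_mul_sum]
  rw [integral_finsetSum _ fun k _ => integrable_finsetSum _ fun l _ => hint k l]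
  refine Finset.sum_congr rfl fun k _ => ?_
  rw [integral_finsetSum _ fun l _ => hint k l]
  refine Finset.sum_congr rfl fun l _ => ?_
  rw [← h3.1.integral_mul_eq_autocov hm, ← integral_const_mul]
  simp only [mul_mul_mul_comm]

lemma Cond3.integral_sum_sq_le (h3 : Cond3 μ ξ) (hm : ∀ k, Measurable (ξ k))
    (h4 : Cond4 μ ξ) (a : ℤ → ℝ) (I : Finset ℤ) :
    ∫ ω, (∑ k ∈ I, a k * ξ k ω) ^ 2 ∂μ ≤ autocovMoment μ ξ * ∑ k ∈ I, a k ^ 2 := by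
  have hterm (k l : ℤ) : a k * a l * autocov μ ξ (l - k) ≤
      a k ^ 2 / 2 * |autocov μ ξ (l - k)| + a l ^ 2 / 2 * |autocov μ ξ (k - l)| := by
    rw [← h3.1.autocov_neg hm (k - l), neg_sub, ← add_mul]
    refine (le_abs_self _).trans ?_
    rw [abs_mul, abs_mul]
    gcongr
    nlinarith [sq_nonneg (|a k| - |a l|), sq_abs (a k), sq_abs (a l)]
  have hhalf : ∑ k ∈ I, ∑ l ∈ I, a k ^ 2 / 2 * |autocov μ ξ (l - k)| ≤
      autocovMoment μ ξ * (∑ k ∈ I, a k ^ 2) / 2 := by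
    simp only [← Finset.mul_sum]
    rw [Finset.mul_sum, Finset.sum_div]
    gcongr with k
    calc _ ≤ a k ^ 2 / 2 * autocovMoment μ ξ := by
          gcongr; exact sum_abs_autocov_sub_le h3.1 hm h4 I k
      _ = _ := by ring
  rw [h3.integral_sum_sq hm]
  calc _ ≤ ∑ k ∈ I, ∑ l ∈ I,
        (a k ^ 2 / 2 * |autocov μ ξ (l - k)| + a l ^ 2 / 2 * |autocov μ ξ (k - l)|) := by
        gcongr; exact hterm ..
    _ = 2 * ∑ k ∈ I, ∑ l ∈ I, a k ^ 2 / 2 * |autocov μ ξ (l - k)| := by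
        simp only [Finset.sum_add_distrib]
        rw [Finset.sum_comm (f := fun k l => a l ^ 2 / 2 * |autocov μ ξ (k - l)|), two_mul]
    _ ≤ _ := by linarith

lemma Cond3.integral_sum_sq_sub_eq_tsum (h3 : Cond3 μ ξ) (hm : ∀ k, Measurable (ξ k))
    (h4 : Cond4 μ ξ) {a : ℤ → ℝ} {I : Finset ℤ} (hI : ∀ k ∉ I, a k = 0) :
    ∫ ω, (∑ k ∈ I, a k * ξ k ω) ^ 2 ∂μ - asymptoticVariance μ ξ * ∑ k ∈ I, a k ^ 2 =
      ∑' p : ℤ, ∑ k ∈ I, a k * (a (k + p) - a k) * autocov μ ξ p := by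
  have hsum (k : ℤ) : Summable fun p : ℤ => a k ^ 2 * autocov μ ξ p :=
    (summable_abs_autocov h3.1 hm h4).of_abs.mul_left _
  have hfin (k : ℤ) : Summable fun p : ℤ => a k * a (k + p) * autocov μ ξ p := by
    refine summable_of_hasFiniteSupport ((I.map (addRightEmbedding (-k))).finite_toSet.subset ?_)
    refine Function.support_subset_iff'.2 fun p hp => ?_
    rw [hI (k + p) fun h => hp (by simpa [add_comm] using h), mul_zero, zero_mul]
  have hrow (k : ℤ) : ∑ l ∈ I, a k * a l * autocov μ ξ (l - k) =
      ∑' p : ℤ, a k * a (k + p) * autocov μ ξ p := by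
    rw [← (Equiv.subRight k).tsum_eq, tsum_eq_sum (s := I) fun l hl => by simp [hI l hl]]
    simp
  have hdiff (k p : ℤ) : a k * (a (k + p) - a k) * autocov μ ξ p =
      a k * a (k + p) * autocov μ ξ p - a k ^ 2 * autocov μ ξ p := by ring
  simp only [h3.integral_sum_sq hm, hrow, hdiff, asymptoticVariance]
  rw [Summable.tsum_finsetSum fun k _ => (hfin k).sub (hsum k), Finset.mul_sum,
    ← Finset.sum_sub_distrib]
  refine Finset.sum_congr rfl fun k _ => ?_
  rw [(hfin k).tsum_sub (hsum k), tsum_mul_left, mul_comm (a k ^ 2)]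

lemma Cond3.abs_integral_sum_sq_sub_le (h3 : Cond3 μ ξ) (hm : ∀ k, Measurable (ξ k))
    (h4 : Cond4 μ ξ) {a : ℤ → ℝ} {I : Finset ℤ} (hI : ∀ k ∉ I, a k = 0) {T : ℝ}
    (hT : ∀ F : Finset ℤ, ∑ k ∈ F, (a (k + 1) - a k) ^ 2 ≤ T) {η : ℝ} (hη : 0 < η) :
    |∫ ω, (∑ k ∈ I, a k * ξ k ω) ^ 2 ∂μ - asymptoticVariance μ ξ * ∑ k ∈ I, a k ^ 2| ≤
      autocovMoment μ ξ * (η * ∑ k ∈ I, a k ^ 2 + T / (2 * η ^ 3)) := by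
  have hA (F : Finset ℤ) : ∑ k ∈ F, a k ^ 2 ≤ ∑ k ∈ I, a k ^ 2 := by
    rw [Finset.sum_subset Finset.subset_union_right fun k (_ : k ∈ F ∪ I) hk => by simp [hI k hk]]
    exact Finset.sum_le_sum_of_subset_of_nonneg Finset.subset_union_left fun _ _ _ => sq_nonneg _
  rw [h3.integral_sum_sq_sub_eq_tsum hm h4 hI, autocovMoment, ← tsum_mul_right, ← Real.norm_eq_abs]
  refine tsum_of_norm_bounded ((summable_sqrt_mul_abs_autocov h3.1 hm h4).mul_right _).hasSum
    fun p => ?_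
  rw [← Finset.sum_mul, norm_mul, Real.norm_eq_abs, Real.norm_eq_abs, mul_right_comm]
  gcongr
  refine (Finset.abs_sum_le_sum_abs _ _).trans ?_
  simp only [abs_mul]
  exact sum_abs_mul_abs_add_sub_le hA hT I p hη

lemma sum_sq_indicator_Ico_sub_le (N : ℤ) (F : Finset ℤ) :
    ∑ k ∈ F, ((if k + 1 ∈ Finset.Ico 0 N then (1 : ℝ) else 0) -
      if k ∈ Finset.Ico 0 N then 1 else 0) ^ 2 ≤ 2 := by
  calc _ ≤ ∑ k ∈ F, ((if k = -1 then (1 : ℝ) else 0) + if k = N - 1 then 1 else 0) := by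
        gcongr with k
        simp only [Finset.mem_Ico]
        split_ifs <;> first | omega | norm_num
    _ ≤ 2 := by
        rw [Finset.sum_add_distrib, Finset.sum_ite_eq', Finset.sum_ite_eq']
        split_ifs <;> norm_num

lemma Cond3.asymptoticVariance_mul_add_nonneg (h3 : Cond3 μ ξ) (hm : ∀ k, Measurable (ξ k))
    (h4 : Cond4 μ ξ) (N : ℕ) {η : ℝ} (hη : 0 < η) :
    0 ≤ asymptoticVariance μ ξ * N + autocovMoment μ ξ * (η * N + 1 / η ^ 3) := by
  let a (k : ℤ) : ℝ := if k ∈ Finset.Ico 0 (N : ℤ) then 1 else 0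
  have h := (abs_le.1 (h3.abs_integral_sum_sq_sub_le hm h4 (a := a) (fun k hk => if_neg hk)
    (sum_sq_indicator_Ico_sub_le N) hη)).2
  have hcard : ∑ k ∈ Finset.Ico 0 (N : ℤ), a k ^ 2 = N := by
    rw [Finset.sum_congr rfl fun k hk => by rw [show a k = 1 from if_pos hk, one_pow]]
    simp
  have hsq : 0 ≤ ∫ ω, (∑ k ∈ Finset.Ico 0 (N : ℤ), a k * ξ k ω) ^ 2 ∂μ :=
    integral_nonneg fun ω => sq_nonneg _
  rw [hcard, ← div_div, div_self two_ne_zero] at h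
  linarith

lemma Cond3.asymptoticVariance_nonneg (h3 : Cond3 μ ξ) (hm : ∀ k, Measurable (ξ k))
    (h4 : Cond4 μ ξ) : 0 ≤ asymptoticVariance μ ξ := by
  have hbound (m : ℕ) (hm0 : 0 < m) :
      0 ≤ asymptoticVariance μ ξ + 2 * autocovMoment μ ξ / m := by
    have hm0' : (0 : ℝ) < m := by exact_mod_cast hm0
    refine nonneg_of_mul_nonneg_left (b := (m : ℝ) ^ 4) ?_ (by positivity)
    refine (h3.asymptoticVariance_mul_add_nonneg hm h4 (m ^ 4) (inv_pos.2 hm0')).trans_eq ?_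
    push_cast
    field_simp
    ring
  have hlim := (tendsto_const_div_atTop_nhds_zero_nat (2 * autocovMoment μ ξ)).const_add
    (asymptoticVariance μ ξ)
  rw [add_zero] at hlim
  exact ge_of_tendsto hlim ((eventually_gt_atTop 0).mono hbound)

end QuadraticForm

section Walk

variable {Ω : Type*} {S : ℕ → Ω → ℤ}

/-- `G` is a function of the first `n` steps of the walk. Real functions of this kind are
automatically integrable, since almost surely only finitely many paths occur. -/
def DependsOnPath {E : Type*} (S : ℕ → Ω → ℤ) (n : ℕ) (G : Ω → E) : Prop :=
  ∀ ω ω', (∀ i ≤ n, S i ω = S i ω') → G ω = G ω'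

lemma dependsOnPath_walk {i n : ℕ} (h : i ≤ n) : DependsOnPath S n (S i) := fun _ _ hω => hω i h

lemma DependsOnPath.mono {E : Type*} {m n : ℕ} {G : Ω → E} (hG : DependsOnPath S m G)
    (h : m ≤ n) : DependsOnPath S n G :=
  fun ω ω' hω => hG ω ω' fun i hi => hω i (hi.trans h)

lemma DependsOnPath.comp {E F : Type*} {n : ℕ} {G : Ω → E} (hG : DependsOnPath S n G)
    (f : E → F) : DependsOnPath S n fun ω => f (G ω) :=
  fun ω ω' hω => congrArg f (hG ω ω' hω)

lemma DependsOnPath.eval {E F : Type*} {n : ℕ} {Φ : E → Ω → F} {G : Ω → E}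
    (hΦ : ∀ x, DependsOnPath S n (Φ x)) (hG : DependsOnPath S n G) :
    DependsOnPath S n fun ω => Φ (G ω) ω :=
  fun ω ω' hω => by simp only [hG ω ω' hω, hΦ _ ω ω' hω]

lemma DependsOnPath.mul {n : ℕ} {G H : Ω → ℝ} (hG : DependsOnPath S n G)
    (hH : DependsOnPath S n H) : DependsOnPath S n fun ω => G ω * H ω :=
  .eval (Φ := fun x ω => x * H ω) (fun x => hH.comp (x * ·)) hG

lemma DependsOnPath.sum {ι : Type*} {n : ℕ} {s : Finset ι} {G : ι → Ω → ℝ}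
    (hG : ∀ i ∈ s, DependsOnPath S n (G i)) : DependsOnPath S n fun ω => ∑ i ∈ s, G i ω :=
  fun ω ω' hω => Finset.sum_congr rfl fun i hi => hG i hi ω ω' hω

lemma DependsOnPath.mul_comp_sub {m n : ℕ} {H : Ω → ℝ} (hH : DependsOnPath S m H) (hmn : m ≤ n)
    (f : ℤ → ℝ) : DependsOnPath S n fun ω => H ω * f (S n ω - S m ω) :=
  (hH.mono hmn).mul (.eval (Φ := fun x ω => f (x - S m ω))
    (fun x => (dependsOnPath_walk hmn).comp fun y => f (x - y)) (dependsOnPath_walk le_rfl))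

/-- The path of the walk up to time `n`. -/
def walkPath (S : ℕ → Ω → ℤ) (n : ℕ) (ω : Ω) (i : Fin (n + 1)) : ℤ := S i ω

lemma DependsOnPath.exists_eq_comp_walkPath {n : ℕ} {G : Ω → ℝ} (hG : DependsOnPath S n G) :
    ∃ f : (Fin (n + 1) → ℤ) → ℝ, G = f ∘ walkPath S n :=
  (Function.factorsThrough_iff G).1 fun ω ω' hω =>
    hG ω ω' fun i hi => congrFun hω ⟨i, Nat.lt_succ_of_le hi⟩

variable [MeasurableSpace Ω] {μ : Measure Ω}

lemma IsSSRW.measurable_walkPath (hS : IsSSRW μ S) (n : ℕ) : Measurable (walkPath S n) :=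
  measurable_pi_lambda _ fun i => hS.meas i

lemma IsSSRW.measurable_step (hS : IsSSRW μ S) (n : ℕ) :
    Measurable fun ω => S (n + 1) ω - S n ω :=
  (hS.meas _).sub (hS.meas _)

lemma IsSSRW.indepFun_step_walkPath (hS : IsSSRW μ S) (n : ℕ) :
    IndepFun (fun ω => S (n + 1) ω - S n ω) (walkPath S n) μ := by
  let partialSums (x : Finset.range n → ℤ) (i : Fin (n + 1)) : ℤ :=
    ∑ l ∈ Finset.range i, if h : l ∈ Finset.range n then x ⟨l, h⟩ else 0
  have hpath : walkPath S n =
      partialSums ∘ fun ω (l : Finset.range n) => S (l + 1) ω - S l ω := by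
    funext ω i
    have htel : S i ω = ∑ l ∈ Finset.range i, (S (l + 1) ω - S l ω) := by
      rw [Finset.sum_range_sub (fun l => S l ω), hS.init, sub_zero]
    simp only [walkPath, Function.comp, partialSums, htel]
    refine Finset.sum_congr rfl fun l hl => ?_
    rw [dif_pos (Finset.mem_range.2 ((Finset.mem_range.1 hl).trans_le i.is_le))]
  rw [hpath]
  exact (hS.indep.indepFun_finset {n} (Finset.range n) (by simp) hS.measurable_step).comp
    (φ := fun x : ({n} : Finset ℕ) → ℤ => x ⟨n, by simp⟩) (measurable_of_countable _)
    (measurable_of_countable _)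

lemma DependsOnPath.measurable (hS : IsSSRW μ S) {n : ℕ} {G : Ω → ℝ} (hG : DependsOnPath S n G) :
    Measurable G := by
  obtain ⟨f, rfl⟩ := hG.exists_eq_comp_walkPath
  exact (measurable_of_countable f).comp (hS.measurable_walkPath n)

lemma IsSSRW.setIntegral_step_eq_one (hS : IsSSRW μ S) {n : ℕ} {G : Ω → ℝ}
    (hG : DependsOnPath S n G) :
    ∫ ω in {ω | S (n + 1) ω - S n ω = 1}, G ω ∂μ = (∫ ω, G ω ∂μ) / 2 := by
  obtain ⟨f, rfl⟩ := hG.exists_eq_comp_walkPath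
  have hprob : μ.real {ω | S (n + 1) ω - S n ω = 1} = 2⁻¹ := by
    simp [measureReal_def, hS.step_one]
  rw [div_eq_inv_mul, ← hprob]
  exact Indep.setIntegral_eq_mul (X := walkPath S n) (hS.measurable_step n).comap_le
    ((IndepFun_iff_Indep _ _ _).1 (hS.indepFun_step_walkPath n))
    (hS.measurable_walkPath n).aemeasurable ⟨{1}, measurableSet_singleton 1, rfl⟩
    (measurable_of_countable f).aestronglyMeasurable

variable [IsProbabilityMeasure μ]

lemma IsSSRW.step_ae (hS : IsSSRW μ S) (n : ℕ) :
    ∀ᵐ ω ∂μ, S (n + 1) ω - S n ω = 1 ∨ S (n + 1) ω - S n ω = -1 := by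
  have hmeas (d : ℤ) : MeasurableSet {ω | S (n + 1) ω - S n ω = d} :=
    hS.measurable_step n (measurableSet_singleton d)
  have hdisj : Disjoint {ω | S (n + 1) ω - S n ω = 1} {ω | S (n + 1) ω - S n ω = -1} :=
    Set.disjoint_left.2 fun ω h h' => by rw [Set.mem_ofPred_eq] at h h'; omega
  refine (prob_compl_eq_zero_iff ((hmeas 1).union (hmeas (-1)))).2 ?_
  rw [measure_union hdisj (hmeas (-1)), hS.step_one, hS.step_neg_one, ENNReal.add_halves]

lemma IsSSRW.abs_le_ae (hS : IsSSRW μ S) : ∀ᵐ ω ∂μ, ∀ n : ℕ, |S n ω| ≤ n := by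
  filter_upwards [ae_all_iff.2 hS.step_ae] with ω hω n
  induction n with
  | zero => simp [hS.init]
  | succ n ih =>
    have := hω n
    rw [abs_le] at ih ⊢
    omega

lemma DependsOnPath.integrable (hS : IsSSRW μ S) {n : ℕ} {G : Ω → ℝ} (hG : DependsOnPath S n G) :
    Integrable G μ := by
  have hmeas := hG.measurable hS
  obtain ⟨f, rfl⟩ := hG.exists_eq_comp_walkPath
  let paths := Fintype.piFinset fun _ : Fin (n + 1) => Finset.Icc (-(n : ℤ)) n
  refine .mono' (integrable_const (∑ p ∈ paths, |f p|)) hmeas.aestronglyMeasurable ?_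
  filter_upwards [hS.abs_le_ae] with ω hω
  refine Finset.single_le_sum (f := fun p => |f p|) (fun _ _ => abs_nonneg _) ?_
  refine Fintype.mem_piFinset.2 fun i => Finset.mem_Icc.2 (abs_le.1 ((hω i).trans ?_))
  exact_mod_cast i.is_le

lemma IsSSRW.integral_step (hS : IsSSRW μ S) {n : ℕ} {Φ : ℤ → Ω → ℝ}
    (hΦ : ∀ x, DependsOnPath S n (Φ x)) :
    ∫ ω, Φ (S (n + 1) ω) ω ∂μ =
      (∫ ω, Φ (S n ω + 1) ω ∂μ + ∫ ω, Φ (S n ω - 1) ω ∂μ) / 2 := by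
  let up := {ω | S (n + 1) ω - S n ω = 1}
  have hup : MeasurableSet up := hS.measurable_step n (measurableSet_singleton 1)
  have hwalk : DependsOnPath S n (S n) := dependsOnPath_walk le_rfl
  have hplus : DependsOnPath S n fun ω => Φ (S n ω + 1) ω := .eval hΦ (hwalk.comp (· + 1))
  have hminus : DependsOnPath S n fun ω => Φ (S n ω - 1) ω := .eval hΦ (hwalk.comp (· - 1))
  have hnext : Integrable (fun ω => Φ (S (n + 1) ω) ω) μ :=
    DependsOnPath.integrable hS (n := n + 1)
      (.eval (fun x => (hΦ x).mono n.le_succ) (dependsOnPath_walk le_rfl))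
  have honup : ∫ ω in up, Φ (S (n + 1) ω) ω ∂μ = (∫ ω, Φ (S n ω + 1) ω ∂μ) / 2 := by
    rw [← hS.setIntegral_step_eq_one hplus]
    refine setIntegral_congr_fun hup fun ω hω => ?_
    simp only [sub_eq_iff_eq_add'.1 (show S (n + 1) ω - S n ω = 1 from hω)]
  have honup' : ∫ ω in upᶜ, Φ (S (n + 1) ω) ω ∂μ = (∫ ω, Φ (S n ω - 1) ω ∂μ) / 2 := by
    have hsplit := integral_add_compl hup (hminus.integrable hS)
    rw [hS.setIntegral_step_eq_one hminus] at hsplit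
    rw [eq_sub_of_add_eq' hsplit |>.trans (sub_half _) |>.symm]
    refine setIntegral_congr_ae hup.compl ?_
    filter_upwards [hS.step_ae n] with ω hω hdown
    rw [sub_eq_iff_eq_add'.1 (hω.resolve_left hdown), ← sub_eq_add_neg]
  rw [← integral_add_compl hup hnext, honup, honup', add_div]

lemma IsSSRW.integral_mul_comp_sub_succ (hS : IsSSRW μ S) {m n : ℕ} (hmn : m ≤ n) {H : Ω → ℝ}
    (hH : DependsOnPath S m H) (f : ℤ → ℝ) :
    ∫ ω, H ω * f (S (n + 1) ω - S m ω) ∂μ =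
      ∫ ω, H ω * ((f (S n ω - S m ω + 1) + f (S n ω - S m ω - 1)) / 2) ∂μ := by
  rw [hS.integral_step (Φ := fun x ω => H ω * f (x - S m ω)) fun x =>
    (hH.mono hmn).mul ((dependsOnPath_walk hmn).comp fun y => f (x - y))]
  have hplus := (hH.mul_comp_sub hmn fun y => f (y + 1)).integrable hS
  have hminus := (hH.mul_comp_sub hmn fun y => f (y - 1)).integrable hS
  simp only [add_sub_right_comm, sub_right_comm _ (1 : ℤ)]
  rw [← integral_add hplus hminus, ← integral_div]
  simp only [mul_add, add_div, mul_div_assoc]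

end Walk

section LocalTime

variable {Ω : Type*} {S : ℕ → Ω → ℤ}

/-- The indicator of the event that the walk is at the same site at times `m` and `j`. -/
def sameSite (S : ℕ → Ω → ℤ) (m j : ℕ) (ω : Ω) : ℝ := if S m ω = S j ω then 1 else 0

lemma dependsOnPath_sameSite {m j : ℕ} (hj : j ≤ m) : DependsOnPath S m (sameSite S m j) :=
  fun ω ω' h => by rw [sameSite, sameSite, h m le_rfl, h j hj]

lemma localTime_nonneg (n : ℕ) (k : ℤ) (ω : Ω) : 0 ≤ localTime S n k ω := Nat.cast_nonneg _

lemma localTime_zero (k : ℤ) (ω : Ω) : localTime S 0 k ω = 0 := by simp [localTime]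

lemma localTime_eq_sum (n : ℕ) (k : ℤ) (ω : Ω) :
    localTime S n k ω = ∑ j ∈ Finset.Icc 1 n, if S j ω = k then (1 : ℝ) else 0 := by
  simp [localTime]

lemma localTime_succ (n : ℕ) (k : ℤ) (ω : Ω) :
    localTime S (n + 1) k ω = localTime S n k ω + if S (n + 1) ω = k then 1 else 0 := by
  rw [localTime_eq_sum, localTime_eq_sum, Finset.sum_Icc_succ_top (by omega)]

lemma localTime_self (m : ℕ) (ω : Ω) :
    localTime S m (S m ω) ω = ∑ j ∈ Finset.Icc 1 m, sameSite S m j ω := by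
  rw [localTime_eq_sum]
  exact Finset.sum_congr rfl fun j _ => by simp only [sameSite, eq_comm]

lemma dependsOnPath_localTime (n : ℕ) (k : ℤ) : DependsOnPath S n (localTime S n k) :=
  fun ω ω' h => by
    rw [localTime_eq_sum, localTime_eq_sum]
    exact Finset.sum_congr rfl fun j hj => by rw [h j (Finset.mem_Icc.1 hj).2]

lemma dependsOnPath_localTime_self (j : ℕ) :
    DependsOnPath S j fun ω => localTime S j (S j ω) ω :=
  .eval (dependsOnPath_localTime j) (dependsOnPath_walk le_rfl)

lemma localTime_succ_pow_le (p n : ℕ) (k : ℤ) (ω : Ω) :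
    localTime S (n + 1) k ω ^ (p + 1) ≤ localTime S n k ω ^ (p + 1) +
      if S (n + 1) ω = k then (p + 1) * localTime S (n + 1) k ω ^ p else 0 := by
  have h := localTime_succ (S := S) n k ω
  have hpos := localTime_nonneg (S := S) n k ω
  split_ifs at h ⊢
  · have := pow_add_mul_le_add_pow (R := ℝ) (a := localTime S (n + 1) k ω) (b := -1)
      (by linarith) (by linarith) (p + 1)
    rw [← sub_eq_add_neg, h, add_sub_cancel_right, Nat.add_sub_cancel] at this
    rw [h]
    push_cast at this
    linarith
  · rw [h, add_zero, add_zero]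

lemma sum_mul_localTime_pow_succ_le (p n : ℕ) (F : Finset ℤ) {w : ℤ → ℝ} (hw : ∀ k, 0 ≤ w k)
    (ω : Ω) :
    ∑ k ∈ F, w k * localTime S n k ω ^ (p + 1) ≤
      (p + 1) * ∑ m ∈ Finset.Icc 1 n, w (S m ω) * localTime S m (S m ω) ω ^ p := by
  induction n with
  | zero => simp [localTime_zero]
  | succ n ih =>
    have hnew (k : ℤ) : 0 ≤ w k * ((p + 1) * localTime S (n + 1) k ω ^ p) :=
      mul_nonneg (hw k) (mul_nonneg (by positivity) (pow_nonneg (localTime_nonneg _ _ _) _))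
    calc ∑ k ∈ F, w k * localTime S (n + 1) k ω ^ (p + 1)
        ≤ ∑ k ∈ F, (w k * localTime S n k ω ^ (p + 1) + if S (n + 1) ω = k then
            w k * ((p + 1) * localTime S (n + 1) k ω ^ p) else 0) := by
          refine Finset.sum_le_sum fun k _ => ?_
          rw [← mul_ite_zero, ← mul_add]
          exact mul_le_mul_of_nonneg_left (localTime_succ_pow_le p n k ω) (hw k)
      _ ≤ (p + 1) * ∑ m ∈ Finset.Icc 1 n, w (S m ω) * localTime S m (S m ω) ω ^ p +
            w (S (n + 1) ω) * ((p + 1) * localTime S (n + 1) (S (n + 1) ω) ω ^ p) := by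
          rw [Finset.sum_add_distrib, Finset.sum_ite_eq]
          refine add_le_add ih ?_
          split_ifs
          exacts [le_rfl, hnew _]
      _ = _ := by
          rw [Finset.sum_Icc_succ_top (by omega), mul_add]
          ring

/-- The number of pairs of times `j ≤ m ≤ n` at which the walk is at the same site, each pair
being weighted by `H j`. -/
def weightedReturns (S : ℕ → Ω → ℤ) (H : ℕ → Ω → ℝ) (n : ℕ) (ω : Ω) : ℝ :=
  ∑ m ∈ Finset.Icc 1 n, ∑ j ∈ Finset.Icc 1 m, H j ω * sameSite S m j ω

lemma dependsOnPath_weightedReturns {H : ℕ → Ω → ℝ} (hH : ∀ j, DependsOnPath S j (H j)) (n : ℕ) :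
    DependsOnPath S n (weightedReturns S H n) :=
  .sum fun _ hm => .sum fun j hj =>
    (((hH j).mono (Finset.mem_Icc.1 hj).2).mul
      (dependsOnPath_sameSite (Finset.mem_Icc.1 hj).2)).mono (Finset.mem_Icc.1 hm).2

lemma mul_localTime_self (w : ℤ → ℝ) (m : ℕ) (ω : Ω) :
    w (S m ω) * localTime S m (S m ω) ω =
      ∑ j ∈ Finset.Icc 1 m, w (S j ω) * sameSite S m j ω := by
  rw [localTime_self, Finset.mul_sum]
  refine Finset.sum_congr rfl fun j _ => ?_
  unfold sameSite
  split_ifs with h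
  · rw [h]
  · simp only [mul_zero]

lemma sum_mul_localTime_sq_le (n : ℕ) (F : Finset ℤ) {w : ℤ → ℝ} (hw : ∀ k, 0 ≤ w k) (ω : Ω) :
    ∑ k ∈ F, w k * localTime S n k ω ^ 2 ≤ 2 * weightedReturns S (fun j ω => w (S j ω)) n ω := by
  have h := sum_mul_localTime_pow_succ_le (S := S) 1 n F hw ω
  simpa only [pow_one, Nat.cast_one, one_add_one_eq_two, mul_localTime_self,
    weightedReturns] using h

lemma localTime_self_sq_le (m : ℕ) (ω : Ω) :
    localTime S m (S m ω) ω ^ 2 ≤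
      2 * ∑ j ∈ Finset.Icc 1 m, localTime S j (S j ω) ω * sameSite S m j ω := by
  have h := sum_mul_localTime_pow_succ_le (S := S) 1 m {S m ω}
    (w := fun k => if S m ω = k then 1 else 0) (fun _ => by positivity) ω
  simp only [Finset.sum_singleton, if_true, one_mul, pow_one, Nat.cast_one,
    one_add_one_eq_two] at h
  simpa only [sameSite, mul_comm] using h

lemma sum_localTime_pow_three_le (n : ℕ) (F : Finset ℤ) (ω : Ω) :
    ∑ k ∈ F, localTime S n k ω ^ 3 ≤
      6 * weightedReturns S (fun j ω => localTime S j (S j ω) ω) n ω := by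
  have h := sum_mul_localTime_pow_succ_le (S := S) 2 n F (w := fun _ => 1)
    (fun _ => zero_le_one) ω
  have hsq := Finset.sum_le_sum fun m (_ : m ∈ Finset.Icc 1 n) => localTime_self_sq_le (S := S) m ω
  simp only [one_mul, Nat.cast_ofNat, ← Finset.mul_sum] at h hsq
  unfold weightedReturns
  linarith

lemma sum_localTime_sq_le_of_frequent_or_remote {n : ℕ} {F : Finset ℤ} {L : ℝ} {ω : Ω} (hL : 0 < L)
    (hF : ∀ k ∈ F, L ≤ localTime S n k ω ∨ L ≤ |(k : ℝ)|) :
    ∑ k ∈ F, localTime S n k ω ^ 2 ≤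
      6 * weightedReturns S (fun j ω => localTime S j (S j ω) ω) n ω / L +
        2 * weightedReturns S (fun j ω => (S j ω : ℝ) ^ 2) n ω / L ^ 2 := by
  have hsite : ∀ k ∈ F, localTime S n k ω ^ 2 ≤
      localTime S n k ω ^ 3 / L + (k : ℝ) ^ 2 * localTime S n k ω ^ 2 / L ^ 2 := by
    intro k hk
    have hpos := localTime_nonneg (S := S) n k ω
    rcases hF k hk with hfreq | hremote
    · refine le_add_of_le_of_nonneg ((le_div_iff₀ hL).2 ?_) (by positivity)
      rw [pow_succ _ 2]
      gcongr
    · refine le_add_of_nonneg_of_le (by positivity) ((le_div_iff₀ (by positivity)).2 ?_)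
      rw [mul_comm, ← sq_abs (k : ℝ)]
      gcongr
  refine (Finset.sum_le_sum hsite).trans ?_
  rw [Finset.sum_add_distrib, ← Finset.sum_div, ← Finset.sum_div]
  gcongr
  · exact sum_localTime_pow_three_le n F ω
  · exact sum_mul_localTime_sq_le n F (w := fun k => (k : ℝ) ^ 2) (fun _ => sq_nonneg _) ω

/-- The sites visited by the walk at times `1, …, n`. -/
def visitedSites (S : ℕ → Ω → ℤ) (n : ℕ) (ω : Ω) : Finset ℤ :=
  (Finset.Icc 1 n).image fun j => S j ω

lemma localTime_eq_zero {n : ℕ} {k : ℤ} {ω : Ω} (hk : k ∉ visitedSites S n ω) :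
    localTime S n k ω = 0 := by
  rw [localTime_eq_sum]
  exact Finset.sum_eq_zero fun j hj => if_neg fun h => hk (Finset.mem_image.2 ⟨j, hj, h⟩)

lemma sum_comp_walk_eq {n : ℕ} {ω : Ω} {J : Finset ℤ} (hJ : visitedSites S n ω ⊆ J)
    (y : ℤ → ℝ) : ∑ j ∈ Finset.Icc 1 n, y (S j ω) = ∑ k ∈ J, localTime S n k ω * y k := by
  simp only [localTime_eq_sum, Finset.sum_mul, ite_mul, one_mul, zero_mul]
  rw [Finset.sum_comm]
  refine Finset.sum_congr rfl fun j hj => ?_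
  rw [Finset.sum_ite_eq, if_pos (hJ (Finset.mem_image_of_mem _ hj))]

/-- The squared `ℓ²` norm of the discrete gradient of the local time. -/
def gradEnergy (S : ℕ → Ω → ℤ) (n : ℕ) (ω : Ω) : ℝ :=
  ∑' k : ℤ, (localTime S n (k + 1) ω - localTime S n k ω) ^ 2

lemma dependsOnPath_gradEnergy (n : ℕ) : DependsOnPath S n (gradEnergy S n) := fun ω ω' h => by
  simp only [gradEnergy, dependsOnPath_localTime _ _ ω ω' h]

lemma summable_sq_sub_localTime (n : ℕ) (ω : Ω) :
    Summable fun k : ℤ => (localTime S n (k + 1) ω - localTime S n k ω) ^ 2 := by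
  refine summable_of_ne_finset_zero
    (s := visitedSites S n ω ∪ (visitedSites S n ω).image (· - 1)) fun k hk => ?_
  rw [Finset.mem_union, not_or] at hk
  have hk' : k + 1 ∉ visitedSites S n ω := fun h =>
    hk.2 (Finset.mem_image.2 ⟨k + 1, h, add_sub_cancel_right k 1⟩)
  rw [localTime_eq_zero hk.1, localTime_eq_zero hk', sub_zero, zero_pow two_ne_zero]

lemma sum_sq_sub_localTime_le (n : ℕ) (F : Finset ℤ) (ω : Ω) :
    ∑ k ∈ F, (localTime S n (k + 1) ω - localTime S n k ω) ^ 2 ≤ gradEnergy S n ω :=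
  (summable_sq_sub_localTime n ω).sum_le_tsum F fun _ _ => sq_nonneg _

lemma gradEnergy_succ (n : ℕ) (ω : Ω) :
    gradEnergy S (n + 1) ω = gradEnergy S n ω + 4 * localTime S n (S (n + 1) ω) ω -
      2 * (localTime S n (S (n + 1) ω + 1) ω + localTime S n (S (n + 1) ω - 1) ω) + 2 := by
  let N := fun k => localTime S n k ω
  let x := S (n + 1) ω
  have hterm (k : ℤ) : (localTime S (n + 1) (k + 1) ω - localTime S (n + 1) k ω) ^ 2 =
      (N (k + 1) - N k) ^ 2 + ((if k = x - 1 then 2 * (N x - N (x - 1)) + 1 else 0) +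
        (if k = x then 2 * (N x - N (x + 1)) + 1 else 0)) := by
    rw [localTime_succ, localTime_succ]
    change (N (k + 1) + (if x = k + 1 then 1 else 0) - (N k + if x = k then 1 else 0)) ^ 2 = _
    rcases eq_or_ne k x with h | hx
    · rw [h, if_neg (by omega), if_pos rfl, if_neg (by omega), if_pos rfl]
      ring
    rcases eq_or_ne k (x - 1) with h | hx'
    · rw [h, sub_add_cancel, if_pos rfl, if_neg (by omega), if_pos rfl, if_neg (by omega)]
      ring
    · rw [if_neg (by omega), if_neg (by omega), if_neg hx', if_neg hx]
      ring
  have hsum := (summable_sq_sub_localTime (S := S) n ω).hasSum.add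
    ((hasSum_ite_eq (x - 1) (2 * (N x - N (x - 1)) + 1)).add
      (hasSum_ite_eq x (2 * (N x - N (x + 1)) + 1)))
  rw [gradEnergy, tsum_congr hterm, hsum.tsum_eq]
  change gradEnergy S n ω + _ = gradEnergy S n ω + 4 * N x - 2 * (N (x + 1) + N (x - 1)) + 2
  ring

variable [MeasurableSpace Ω] {μ : Measure Ω} [IsProbabilityMeasure μ]

lemma IsSSRW.integral_mul_sq (hS : IsSSRW μ S) {i : ℕ} {H : Ω → ℝ} (hH : DependsOnPath S i H)
    (d : ℕ) :
    ∫ ω, H ω * ((S (i + d) ω - S i ω : ℤ) : ℝ) ^ 2 ∂μ = d * ∫ ω, H ω ∂μ := by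
  induction d with
  | zero => simp
  | succ d ih =>
    have hsq (y : ℤ) : (((y + 1 : ℤ) : ℝ) ^ 2 + ((y - 1 : ℤ) : ℝ) ^ 2) / 2 = (y : ℝ) ^ 2 + 1 := by
      push_cast
      ring
    rw [← add_assoc, hS.integral_mul_comp_sub_succ (i.le_add_right d) hH fun y => (y : ℝ) ^ 2]
    simp only [hsq, mul_add, mul_one]
    rw [integral_add ((hH.mul_comp_sub (i.le_add_right d) fun y => (y : ℝ) ^ 2).integrable hS)
      (hH.integrable hS), ih]
    push_cast
    ring

lemma half_abs_add_one_add_abs_sub_one (y : ℤ) :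
    (|((y + 1 : ℤ) : ℝ)| + |((y - 1 : ℤ) : ℝ)|) / 2 = |(y : ℝ)| + if y = 0 then 1 else 0 := by
  have h : |y + 1| + |y - 1| = (|y| + if y = 0 then 1 else 0) * 2 := by
    split_ifs <;> grind
  rw [div_eq_iff two_ne_zero]
  exact_mod_cast h

/-- Tanaka's formula for the walk, integrated against a weight depending on its past. -/
lemma IsSSRW.integral_mul_abs (hS : IsSSRW μ S) {i : ℕ} {H : Ω → ℝ} (hH : DependsOnPath S i H)
    (d : ℕ) :
    ∫ ω, H ω * |((S (i + d) ω - S i ω : ℤ) : ℝ)| ∂μ =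
      ∑ l ∈ Finset.range d, ∫ ω, H ω * sameSite S (i + l) i ω ∂μ := by
  induction d with
  | zero => simp
  | succ d ih =>
    have hle : i ≤ i + d := i.le_add_right d
    rw [← add_assoc, hS.integral_mul_comp_sub_succ hle hH fun y => |(y : ℝ)|]
    simp only [half_abs_add_one_add_abs_sub_one, mul_add]
    rw [integral_add ((hH.mul_comp_sub hle fun y => |(y : ℝ)|).integrable hS)
      ((hH.mul_comp_sub hle fun y => if y = 0 then 1 else 0).integrable hS), ih,
      Finset.sum_range_succ]
    simp only [sub_eq_zero, sameSite]

lemma abs_le_half_add_sq_div {c : ℝ} (hc : 0 < c) (y : ℝ) : |y| ≤ c / 2 + y ^ 2 / (2 * c) := by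
  have hsq : c / 2 + y ^ 2 / (2 * c) - |y| = (c - |y|) ^ 2 / (2 * c) := by
    rw [← sq_abs y]
    field_simp
    ring
  rw [← sub_nonneg, hsq]
  positivity

lemma IsSSRW.sum_integral_mul_sameSite_le (hS : IsSSRW μ S) {i : ℕ} {H : Ω → ℝ}
    (hH : DependsOnPath S i H) (hH0 : ∀ ω, 0 ≤ H ω) (d : ℕ) :
    ∑ l ∈ Finset.range d, ∫ ω, H ω * sameSite S (i + l) i ω ∂μ ≤ √d * ∫ ω, H ω ∂μ := by
  rcases d.eq_zero_or_pos with rfl | hd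
  · simp
  have hc : 0 < √(d : ℝ) := Real.sqrt_pos.2 (Nat.cast_pos.2 hd)
  have hle : i ≤ i + d := i.le_add_right d
  have hHint := hH.integrable hS
  have hsqint := (hH.mul_comp_sub hle fun y => (y : ℝ) ^ 2).integrable hS
  calc ∑ l ∈ Finset.range d, ∫ ω, H ω * sameSite S (i + l) i ω ∂μ
      = ∫ ω, H ω * |((S (i + d) ω - S i ω : ℤ) : ℝ)| ∂μ := (hS.integral_mul_abs hH d).symm
    _ ≤ ∫ ω, (H ω * (√d / 2) + H ω * ((S (i + d) ω - S i ω : ℤ) : ℝ) ^ 2 / (2 * √d)) ∂μ := by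
        refine integral_mono ((hH.mul_comp_sub hle fun y => |(y : ℝ)|).integrable hS)
          ((hHint.mul_const _).add (hsqint.div_const _)) fun ω => ?_
        rw [mul_div_assoc, ← mul_add]
        exact mul_le_mul_of_nonneg_left (abs_le_half_add_sq_div hc _) (hH0 ω)
    _ = (∫ ω, H ω ∂μ) * (√d / 2) + d * (∫ ω, H ω ∂μ) / (2 * √d) := by
        rw [integral_add (hHint.mul_const _) (hsqint.div_const _), integral_mul_const,
          integral_div, hS.integral_mul_sq hH]
    _ = √d * ∫ ω, H ω ∂μ := by
        field_simp
        rw [Real.sq_sqrt d.cast_nonneg]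
        ring

lemma IsSSRW.integral_weightedReturns_le (hS : IsSSRW μ S) {H : ℕ → Ω → ℝ}
    (hH : ∀ j, DependsOnPath S j (H j)) (hH0 : ∀ j ω, 0 ≤ H j ω) (n : ℕ) :
    ∫ ω, weightedReturns S H n ω ∂μ ≤ √n * ∑ j ∈ Finset.Icc 1 n, ∫ ω, H j ω ∂μ := by
  have hint (m j : ℕ) (hj : j ∈ Finset.Icc 1 m) :
      Integrable (fun ω => H j ω * sameSite S m j ω) μ :=
    (((hH j).mono (Finset.mem_Icc.1 hj).2).mul
      (dependsOnPath_sameSite (Finset.mem_Icc.1 hj).2)).integrable hS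
  have hswap : ∫ ω, weightedReturns S H n ω ∂μ =
      ∑ j ∈ Finset.Icc 1 n, ∑ m ∈ Finset.Ico j (n + 1), ∫ ω, H j ω * sameSite S m j ω ∂μ := by
    simp only [weightedReturns]
    rw [integral_finsetSum _ fun m _ => integrable_finsetSum _ (hint m),
      Finset.sum_congr rfl fun m _ => integral_finsetSum _ (hint m)]
    refine Finset.sum_comm' fun m j => ?_
    simp only [Finset.mem_Icc, Finset.mem_Ico]
    omega
  rw [hswap, Finset.mul_sum]
  refine Finset.sum_le_sum fun j hj => ?_
  rw [Finset.sum_Ico_eq_sum_range]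
  refine (hS.sum_integral_mul_sameSite_le (hH j) (hH0 j) _).trans
    (mul_le_mul_of_nonneg_right (Real.sqrt_le_sqrt ?_) (integral_nonneg (hH0 j)))
  rw [Finset.mem_Icc] at hj
  exact_mod_cast (by omega : n + 1 - j ≤ n)

lemma IsSSRW.integral_weightedReturns_one_le (hS : IsSSRW μ S) (n : ℕ) :
    ∫ ω, weightedReturns S (fun _ _ => 1) n ω ∂μ ≤ √n * n := by
  simpa using hS.integral_weightedReturns_le (fun _ _ _ _ => rfl) (fun _ _ => zero_le_one) n

lemma IsSSRW.integral_sq (hS : IsSSRW μ S) (j : ℕ) : ∫ ω, (S j ω : ℝ) ^ 2 ∂μ = j := by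
  simpa [hS.init] using hS.integral_mul_sq (i := 0) (H := fun _ => 1) (fun _ _ _ => rfl) j

lemma IsSSRW.integral_weightedReturns_sq_le (hS : IsSSRW μ S) (n : ℕ) :
    ∫ ω, weightedReturns S (fun j ω => (S j ω : ℝ) ^ 2) n ω ∂μ ≤ √n * (n : ℝ) ^ 2 := by
  refine (hS.integral_weightedReturns_le
    (fun j => (dependsOnPath_walk le_rfl).comp fun y : ℤ => (y : ℝ) ^ 2)
    (fun _ _ => sq_nonneg _) n).trans (mul_le_mul_of_nonneg_left ?_ (Real.sqrt_nonneg _))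
  calc ∑ j ∈ Finset.Icc 1 n, ∫ ω, (S j ω : ℝ) ^ 2 ∂μ
      ≤ ∑ _j ∈ Finset.Icc 1 n, (n : ℝ) := Finset.sum_le_sum fun _ hj => by
        rw [hS.integral_sq]
        exact_mod_cast (Finset.mem_Icc.1 hj).2
    _ = (n : ℝ) ^ 2 := by simp [sq]

lemma IsSSRW.integral_weightedReturns_localTime_le (hS : IsSSRW μ S) (n : ℕ) :
    ∫ ω, weightedReturns S (fun j ω => localTime S j (S j ω) ω) n ω ∂μ ≤ (n : ℝ) ^ 2 := by
  have hone : ∑ j ∈ Finset.Icc 1 n, ∫ ω, localTime S j (S j ω) ω ∂μ =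
      ∫ ω, weightedReturns S (fun _ _ => 1) n ω ∂μ := by
    simp only [weightedReturns, one_mul, ← localTime_self]
    exact (integral_finsetSum _ fun _ _ => (dependsOnPath_localTime_self _).integrable hS).symm
  calc ∫ ω, weightedReturns S (fun j ω => localTime S j (S j ω) ω) n ω ∂μ
      ≤ √n * ∑ j ∈ Finset.Icc 1 n, ∫ ω, localTime S j (S j ω) ω ∂μ :=
        hS.integral_weightedReturns_le dependsOnPath_localTime_self
          (fun _ _ => localTime_nonneg _ _ _) n
    _ ≤ √n * (√n * n) := by
        rw [hone]
        exact mul_le_mul_of_nonneg_left (hS.integral_weightedReturns_one_le n) (Real.sqrt_nonneg _)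
    _ = (n : ℝ) ^ 2 := by rw [← mul_assoc, Real.mul_self_sqrt n.cast_nonneg, sq]

lemma IsSSRW.integral_localTime_succ_step (hS : IsSSRW μ S) (n : ℕ) :
    ∫ ω, localTime S (n + 1) (S (n + 2) ω) ω ∂μ =
      (∫ ω, localTime S n (S (n + 1) ω + 1) ω ∂μ +
        ∫ ω, localTime S n (S (n + 1) ω - 1) ω ∂μ) / 2 := by
  have hup (ω : Ω) : localTime S (n + 1) (S (n + 1) ω + 1) ω =
      localTime S n (S (n + 1) ω + 1) ω := by
    rw [localTime_succ, if_neg (by omega), add_zero]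
  have hdown (ω : Ω) : localTime S (n + 1) (S (n + 1) ω - 1) ω =
      localTime S n (S (n + 1) ω - 1) ω := by
    rw [localTime_succ, if_neg (by omega), add_zero]
  simpa only [hup, hdown] using hS.integral_step (dependsOnPath_localTime (n + 1))

lemma IsSSRW.integral_gradEnergy_add (hS : IsSSRW μ S) (n : ℕ) :
    ∫ ω, gradEnergy S n ω ∂μ + 4 * ∫ ω, localTime S n (S (n + 1) ω) ω ∂μ = 2 * n := by
  induction n with
  | zero => simp [gradEnergy, localTime_zero]
  | succ n ih =>
    have hN (f : ℤ → ℤ) : Integrable (fun ω => localTime S n (f (S (n + 1) ω)) ω) μ :=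
      DependsOnPath.integrable hS (n := n + 1) <|
        .eval (fun k => (dependsOnPath_localTime n k).mono n.le_succ)
          ((dependsOnPath_walk le_rfl).comp f)
    have hG := (dependsOnPath_gradEnergy (S := S) n).integrable hS
    have hself := hN id
    have hup := hN (· + 1)
    have hdown := hN (· - 1)
    simp only [id] at hself
    have hgain := hG.fun_add (hself.const_mul 4)
    have hloss := (hup.fun_add hdown).const_mul 2
    have hstep : ∫ ω, gradEnergy S (n + 1) ω ∂μ = ∫ ω, gradEnergy S n ω ∂μ +
        4 * ∫ ω, localTime S n (S (n + 1) ω) ω ∂μ -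
        2 * (∫ ω, localTime S n (S (n + 1) ω + 1) ω ∂μ +
          ∫ ω, localTime S n (S (n + 1) ω - 1) ω ∂μ) + 2 := by
      simp only [gradEnergy_succ]
      rw [integral_add (hgain.sub' hloss) (integrable_const _), integral_sub hgain hloss,
        integral_add hG (hself.const_mul 4), integral_const_mul, integral_const_mul,
        integral_add hup hdown, integral_const, probReal_univ, one_smul]
    rw [hstep, hS.integral_localTime_succ_step]
    push_cast
    linarith

lemma IsSSRW.integral_gradEnergy_le (hS : IsSSRW μ S) (n : ℕ) :
    ∫ ω, gradEnergy S n ω ∂μ ≤ 2 * n := by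
  have hN : 0 ≤ ∫ ω, localTime S n (S (n + 1) ω) ω ∂μ :=
    integral_nonneg fun _ => localTime_nonneg _ _ _
  linarith [hS.integral_gradEnergy_add n]

end LocalTime

section Truncation

variable {Ω : Type*} {S : ℕ → Ω → ℤ}

/-- The local time, set to zero at the sites that are visited more than `L` times or lie further
than `L` from the origin. -/
def truncatedLocalTime (S : ℕ → Ω → ℤ) (L : ℝ) (n : ℕ) (k : ℤ) (ω : Ω) : ℝ :=
  if localTime S n k ω ≤ L ∧ k ∈ Finset.Icc (-(⌊L⌋₊ : ℤ)) ⌊L⌋₊ then localTime S n k ω else 0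

lemma truncatedLocalTime_eq_zero {L : ℝ} {k : ℤ} (hk : k ∉ Finset.Icc (-(⌊L⌋₊ : ℤ)) ⌊L⌋₊)
    (n : ℕ) (ω : Ω) : truncatedLocalTime S L n k ω = 0 :=
  if_neg fun h => hk h.2

lemma abs_truncatedLocalTime_le {L : ℝ} (hL : 0 ≤ L) (n : ℕ) (k : ℤ) (ω : Ω) :
    |truncatedLocalTime S L n k ω| ≤ L := by
  rw [truncatedLocalTime]
  split_ifs with h
  · rw [abs_of_nonneg (localTime_nonneg n k ω)]
    exact h.1
  · rwa [abs_zero]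

lemma abs_mul_truncatedLocalTime_le {L : ℝ} (hL : 1 ≤ L) (θ : ℝ) (n : ℕ) (k : ℤ) (ω : Ω) :
    |θ * truncatedLocalTime S L n k ω| ≤ √(3 * θ ^ 2 * L ^ 3) / √(2 * ⌊L⌋₊ + 1 : ℝ) := by
  have hfloor : (⌊L⌋₊ : ℝ) ≤ L := Nat.floor_le (by linarith)
  rw [le_div_iff₀ (by positivity)]
  refine Real.le_sqrt_of_sq_le ?_
  rw [mul_pow, Real.sq_sqrt (by positivity), abs_mul, mul_pow, sq_abs]
  calc θ ^ 2 * |truncatedLocalTime S L n k ω| ^ 2 * (2 * ⌊L⌋₊ + 1)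
      ≤ θ ^ 2 * L ^ 2 * (3 * L) := by
        gcongr
        · exact abs_truncatedLocalTime_le (by linarith) n k ω
        · linarith
    _ = 3 * θ ^ 2 * L ^ 3 := by ring

lemma sum_sq_localTime_sub_truncatedLocalTime_le {L : ℝ} (hL : 0 < L) (n : ℕ) (F : Finset ℤ)
    (ω : Ω) :
    ∑ k ∈ F, (localTime S n k ω - truncatedLocalTime S L n k ω) ^ 2 ≤
      6 * weightedReturns S (fun j ω => localTime S j (S j ω) ω) n ω / L +
        2 * weightedReturns S (fun j ω => (S j ω : ℝ) ^ 2) n ω / L ^ 2 := by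
  let kept (k : ℤ) : Prop := localTime S n k ω ≤ L ∧ k ∈ Finset.Icc (-(⌊L⌋₊ : ℤ)) ⌊L⌋₊
  have hcut (k : ℤ) : (localTime S n k ω - truncatedLocalTime S L n k ω) ^ 2 =
      if ¬ kept k then localTime S n k ω ^ 2 else 0 := by
    simp only [truncatedLocalTime, kept]
    split_ifs <;> simp_all
  simp only [hcut, ← Finset.sum_filter]
  refine sum_localTime_sq_le_of_frequent_or_remote hL fun k hk => ?_
  by_contra! hk'
  refine (Finset.mem_filter.1 hk).2 ⟨hk'.1.le, ?_⟩
  have : k.natAbs ≤ ⌊L⌋₊ := Nat.le_floor (by rw [Nat.cast_natAbs, Int.cast_abs]; exact hk'.2.le)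
  rw [Finset.mem_Icc]
  omega

/-- The random part of the error in the conditional central limit theorem along a walk, when the
local time is truncated at level `L` and `η` is the free parameter of the Young inequalities. -/
def cltError (S : ℕ → Ω → ℤ) (L η : ℝ) (n : ℕ) (ω : Ω) : ℝ :=
  3 / (2 * η) * (6 * weightedReturns S (fun j ω => localTime S j (S j ω) ω) n ω / L +
      2 * weightedReturns S (fun j ω => (S j ω : ℝ) ^ 2) n ω / L ^ 2) +
    η * (2 * weightedReturns S (fun _ _ => 1) n ω) + gradEnergy S n ω / (4 * η ^ 3)

lemma sum_sq_add_sum_sq_add_le_cltError {L η : ℝ} (hL : 0 < L) (hη : 0 < η) (θ : ℝ) (n : ℕ)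
    (F : Finset ℤ) (ω : Ω) :
    3 / (2 * η) * ∑ k ∈ F, (θ * localTime S n k ω - θ * truncatedLocalTime S L n k ω) ^ 2 +
      η * ∑ k ∈ F, (θ * localTime S n k ω) ^ 2 + θ ^ 2 * gradEnergy S n ω / (4 * η ^ 3) ≤
      θ ^ 2 * cltError S L η n ω := by
  have hsq : ∑ k ∈ F, localTime S n k ω ^ 2 ≤ 2 * weightedReturns S (fun _ _ => 1) n ω := by
    simpa only [one_mul] using
      sum_mul_localTime_sq_le n F (w := fun _ => 1) (fun _ => zero_le_one) ω
  simp only [← mul_sub, mul_pow, ← Finset.mul_sum]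
  calc _ = θ ^ 2 * (3 / (2 * η) *
          ∑ k ∈ F, (localTime S n k ω - truncatedLocalTime S L n k ω) ^ 2 +
        η * ∑ k ∈ F, localTime S n k ω ^ 2 + gradEnergy S n ω / (4 * η ^ 3)) := by ring
    _ ≤ _ := by
        rw [cltError]
        gcongr
        exact sum_sq_localTime_sub_truncatedLocalTime_le hL n F ω

lemma dependsOnPath_cltError (L η : ℝ) (n : ℕ) : DependsOnPath S n (cltError S L η n) :=
  fun ω ω' h => by
    simp only [cltError, dependsOnPath_gradEnergy n ω ω' h,
      dependsOnPath_weightedReturns dependsOnPath_localTime_self n ω ω' h,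
      dependsOnPath_weightedReturns (fun _ => (dependsOnPath_walk le_rfl).comp
        fun x : ℤ => (x : ℝ) ^ 2) n ω ω' h,
      dependsOnPath_weightedReturns (S := S) (H := fun _ _ => 1) (fun _ _ _ _ => rfl) n ω ω' h]

lemma IsSSRW.integral_cltError_le [MeasurableSpace Ω] {μ : Measure Ω} [IsProbabilityMeasure μ]
    (hS : IsSSRW μ S) {L η : ℝ} (hL : 0 < L) (hη : 0 < η) (n : ℕ) :
    ∫ ω, cltError S L η n ω ∂μ ≤
      3 / (2 * η) * (6 * (n : ℝ) ^ 2 / L + 2 * (√n * (n : ℝ) ^ 2) / L ^ 2) +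
        η * (2 * (√n * n)) + 2 * n / (4 * η ^ 3) := by
  have hint {H : ℕ → Ω → ℝ} (hH : ∀ j, DependsOnPath S j (H j)) :=
    (dependsOnPath_weightedReturns hH n).integrable hS
  have hfreq := ((hint dependsOnPath_localTime_self).const_mul 6).div_const L
  have hrem := ((hint fun j => (dependsOnPath_walk le_rfl).comp
    fun x : ℤ => (x : ℝ) ^ 2).const_mul 2).div_const (L ^ 2)
  have hone := ((hint (H := fun _ _ => 1) fun _ _ _ _ => rfl).const_mul 2).const_mul η
  have hgrad := ((dependsOnPath_gradEnergy (S := S) n).integrable hS).div_const (4 * η ^ 3)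
  have htrunc := (hfreq.fun_add hrem).const_mul (3 / (2 * η))
  simp only [cltError]
  rw [integral_add (htrunc.fun_add hone) hgrad, integral_add htrunc hone, integral_const_mul,
    integral_add hfreq hrem, integral_const_mul, integral_const_mul, integral_div, integral_div,
    integral_div, integral_const_mul, integral_const_mul]
  gcongr
  · exact hS.integral_weightedReturns_localTime_le n
  · exact hS.integral_weightedReturns_sq_le n
  · exact hS.integral_weightedReturns_one_le n
  · exact hS.integral_gradEnergy_le n

lemma IsSSRW.integral_cltError_le_mul [MeasurableSpace Ω] {μ : Measure Ω} [IsProbabilityMeasure μ]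
    (hS : IsSSRW μ S) {η : ℝ} (hη : 0 < η) (hη1 : η ≤ 1) {n : ℕ} (hn : 1 ≤ 2 * η ^ 4 * √n) :
    ∫ ω, cltError S (√n / η ^ 2) η n ω ∂μ ≤ 15 * η * (n * √n) := by
  have hs0 : 0 < √(n : ℝ) := pos_of_mul_pos_right (one_pos.trans_le hn) (by positivity)
  refine (hS.integral_cltError_le (by positivity) hη n).trans ?_
  have hsn : (n : ℝ) = √n ^ 2 := (Real.sq_sqrt (Nat.cast_nonneg n)).symm
  generalize √(n : ℝ) = s at hn hs0 hsn ⊢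
  rw [hsn]
  have hη3 : η ^ 3 ≤ η := pow_le_of_le_one hη.le hη1 three_ne_zero
  calc _ = 9 * η * s ^ 3 + 3 * η ^ 3 * s ^ 3 + 2 * η * s ^ 3 + 1 * s ^ 2 / (2 * η ^ 3) := by
        field_simp
        ring
    _ ≤ 9 * η * s ^ 3 + 3 * η * s ^ 3 + 2 * η * s ^ 3 + 2 * η ^ 4 * s * s ^ 2 / (2 * η ^ 3) := by
        gcongr
    _ = 15 * η * (s ^ 2 * s) := by
        field_simp
        ring

end Truncation

section Conclusion

variable {Ω : Type*} [MeasurableSpace Ω] {μ : Measure Ω} {S : ℕ → Ω → ℤ} {ξ : ℤ → Ω → ℝ}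

lemma sum_Icc_neg_natCast_eq_sum_range {M : Type*} [AddCommMonoid M] (f : ℤ → M) (R : ℕ) :
    ∑ k ∈ Finset.Icc (-(R : ℤ)) R, f k = ∑ j ∈ Finset.range (2 * R + 1), f (j - R) := by
  refine Finset.sum_nbij' (fun k => (k + R).toNat) (fun j => j - R) ?_ ?_ ?_ ?_ ?_ <;>
    simp only [Finset.mem_Icc, Finset.mem_range]
  · omega
  · omega
  · omega
  · omega
  · intro k hk
    rw [Int.toNat_of_nonneg (by omega), add_sub_cancel_right]

lemma IsStationarySeq.integral_comp_sum_Icc {E : Type*} [NormedAddCommGroup E] [NormedSpace ℝ E]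
    (hs : IsStationarySeq μ ξ) (hm : ∀ k, Measurable (ξ k)) (a : ℤ → ℝ) (R : ℕ) {f : ℝ → E}
    (hf : StronglyMeasurable f) :
    ∫ ω, f (∑ k ∈ Finset.Icc (-(R : ℤ)) R, a k * ξ k ω) ∂μ =
      ∫ ω, f (weightedSum ξ (fun j => a (j - R)) (2 * R + 1) ω) ∂μ := by
  have hsum : Measurable fun x : Fin (2 * R + 1) → ℝ =>
      ∑ i : Fin (2 * R + 1), a (i - R) * x i := by fun_prop
  have h := hs.integral_comp hm (fun i : Fin (2 * R + 1) => (i : ℤ) - R) R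
    (hf.comp_measurable hsum)
  simp only [Function.comp_apply, sub_add_cancel] at h
  simp only [sum_Icc_neg_natCast_eq_sum_range, weightedSum, Finset.sum_range]
  exact h.symm

lemma abs_sq_sub_sq_le {η : ℝ} (hη : 0 < η) (hη1 : η ≤ 1) (x y : ℝ) :
    |x ^ 2 - y ^ 2| ≤ η * y ^ 2 + 2 / η * (y - x) ^ 2 := by
  have hd : (y - x) ^ 2 ≤ (y - x) ^ 2 / η := le_div_self (sq_nonneg _) hη hη1
  have hplus : 0 ≤ (y - x + η * y) ^ 2 / η := by positivity
  have hminus : 0 ≤ (y - x - η * y) ^ 2 / η := by positivity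
  rw [show (y - x + η * y) ^ 2 / η = (y - x) ^ 2 / η + 2 * (y - x) * y + η * y ^ 2 by
    field_simp; ring] at hplus
  rw [show (y - x - η * y) ^ 2 / η = (y - x) ^ 2 / η - 2 * (y - x) * y + η * y ^ 2 by
    field_simp; ring] at hminus
  rw [show 2 / η * (y - x) ^ 2 = (y - x) ^ 2 / η + (y - x) ^ 2 / η by ring, abs_le]
  constructor <;> nlinarith [sq_nonneg (y - x)]

lemma abs_integral_sq_sub_le {X Y : Ω → ℝ} (hX : MemLp X 2 μ) (hY : MemLp Y 2 μ) {η : ℝ}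
    (hη : 0 < η) (hη1 : η ≤ 1) :
    |∫ ω, Y ω ^ 2 ∂μ - ∫ ω, X ω ^ 2 ∂μ| ≤
      η * ∫ ω, X ω ^ 2 ∂μ + 2 / η * ∫ ω, (X ω - Y ω) ^ 2 ∂μ := by
  have hX2 : Integrable (fun ω => η * X ω ^ 2) μ := hX.integrable_sq.const_mul _
  have hXY2 : Integrable (fun ω => 2 / η * (X ω - Y ω) ^ 2) μ :=
    (hX.sub hY).integrable_sq.const_mul _
  rw [← integral_sub hY.integrable_sq hX.integrable_sq, ← integral_const_mul, ← integral_const_mul,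
    ← integral_add hX2 hXY2]
  exact norm_integral_le_of_norm_le (f := fun ω => Y ω ^ 2 - X ω ^ 2) (hX2.fun_add hXY2)
    (ae_of_all _ fun ω => abs_sq_sub_sq_le hη hη1 (Y ω) (X ω))

variable [IsProbabilityMeasure μ]

lemma eventually_norm_integral_expI_sum_Icc_sub_exp_le (hm : ∀ k, Measurable (ξ k))
    (h3 : Cond3 μ ξ) (h4 : Cond4 μ ξ) (h5 : Cond5 μ ξ) {K δ : ℝ} (hK : 0 < K) (hδ : 0 < δ) :
    ∀ᶠ R : ℕ in atTop, ∀ a : ℤ → ℝ, (∀ k, |a k| ≤ K / √(2 * R + 1 : ℝ)) →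
      ‖∫ ω, expI (∑ k ∈ Finset.Icc (-(R : ℤ)) R, a k * ξ k ω) ∂μ -
        (Real.exp (-(∫ ω, (∑ k ∈ Finset.Icc (-(R : ℤ)) R, a k * ξ k ω) ^ 2 ∂μ) / 2) : ℂ)‖ ≤ δ := by
  obtain ⟨N₀, hN₀⟩ := exists_norm_integral_expI_weightedSum_sub_exp_le hm h3 h4 h5 hK hδ
  filter_upwards [eventually_ge_atTop N₀] with R hR a ha
  let b (j : ℕ) : ℝ := if j < 2 * R + 1 then a (j - R) else 0
  have hb (ω : Ω) : weightedSum ξ (fun j => a (j - R)) (2 * R + 1) ω =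
      weightedSum ξ b (2 * R + 1) ω :=
    Finset.sum_congr rfl fun j hj => by rw [show b j = _ from if_pos (Finset.mem_range.1 hj)]
  rw [h3.1.integral_comp_sum_Icc hm a R measurable_expI.stronglyMeasurable,
    h3.1.integral_comp_sum_Icc hm a R (f := fun x => x ^ 2)
      (measurable_id.pow_const 2).stronglyMeasurable]
  simp only [hb]
  refine hN₀ (2 * R + 1) (by omega) b (fun j => ?_) fun j hj => if_neg (by omega)
  push_cast
  simp only [b]
  split_ifs
  · exact ha _
  · rw [abs_zero]
    positivity

lemma abs_exp_neg_half_sub_le {x y : ℝ} (hx : 0 ≤ x) (hy : 0 ≤ y) :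
    |Real.exp (-x / 2) - Real.exp (-y / 2)| ≤ |x - y| / 2 := by
  wlog h : x ≤ y generalizing x y
  · rw [abs_sub_comm, abs_sub_comm x]
    exact this hy hx (le_of_not_ge h)
  have hsplit : Real.exp (-y / 2) = Real.exp (-x / 2) * Real.exp (-(y - x) / 2) := by
    rw [← Real.exp_add]
    ring_nf
  rw [abs_of_nonneg (sub_nonneg.2 (Real.exp_le_exp.2 (by linarith))), abs_of_nonpos (by linarith),
    hsplit]
  nlinarith [Real.exp_le_one_iff.2 (by linarith : -x / 2 ≤ 0), Real.add_one_le_exp (-(y - x) / 2),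
    Real.exp_pos (-x / 2)]

lemma norm_integral_expI_sub_le_of_memLp_two {X Y : Ω → ℝ} (hX : MemLp X 2 μ) (hY : MemLp Y 2 μ)
    {η : ℝ} (hη : 0 < η) :
    ‖∫ ω, expI (X ω) ∂μ - ∫ ω, expI (Y ω) ∂μ‖ ≤ η / 2 + (∫ ω, (X ω - Y ω) ^ 2 ∂μ) / (2 * η) := by
  have hXY := (hX.sub hY).integrable (by norm_num)
  have hsq : Integrable (fun ω => (X ω - Y ω) ^ 2) μ := (hX.sub hY).integrable_sq
  refine (norm_integral_expI_sub_le hX.1.aemeasurable hY.1.aemeasurable hXY).trans ?_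
  calc ∫ ω, |X ω - Y ω| ∂μ ≤ ∫ ω, (η / 2 + (X ω - Y ω) ^ 2 / (2 * η)) ∂μ :=
        integral_mono hXY.abs ((integrable_const _).add (hsq.div_const _)) fun ω =>
          abs_le_half_add_sq_div hη _
    _ = η / 2 + (∫ ω, (X ω - Y ω) ^ 2 ∂μ) / (2 * η) := by
        rw [integral_add (integrable_const _) (hsq.div_const _), integral_const,
          integral_div, probReal_univ, one_smul]

lemma norm_integral_expI_sub_exp_le_of_perturbation {X Y : Ω → ℝ} (hX : MemLp X 2 μ)
    (hY : MemLp Y 2 μ) {v η δ : ℝ} (hv : 0 ≤ v) (hη : 0 < η) (hη1 : η ≤ 1)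
    (hδ : ‖∫ ω, expI (Y ω) ∂μ - (Real.exp (-(∫ ω, Y ω ^ 2 ∂μ) / 2) : ℂ)‖ ≤ δ) :
    ‖∫ ω, expI (X ω) ∂μ - (Real.exp (-v / 2) : ℂ)‖ ≤
      δ + η / 2 + 3 / (2 * η) * ∫ ω, (X ω - Y ω) ^ 2 ∂μ + η / 2 * ∫ ω, X ω ^ 2 ∂μ +
        |∫ ω, X ω ^ 2 ∂μ - v| / 2 := by
  have hchar := norm_integral_expI_sub_le_of_memLp_two hX hY hη
  have hexp : ‖(Real.exp (-(∫ ω, Y ω ^ 2 ∂μ) / 2) : ℂ) - (Real.exp (-v / 2) : ℂ)‖ ≤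
      (η * ∫ ω, X ω ^ 2 ∂μ + 2 / η * ∫ ω, (X ω - Y ω) ^ 2 ∂μ +
        |∫ ω, X ω ^ 2 ∂μ - v|) / 2 := by
    rw [← Complex.ofReal_sub, Complex.norm_real, Real.norm_eq_abs]
    refine (abs_exp_neg_half_sub_le (integral_nonneg fun _ => sq_nonneg _) hv).trans ?_
    have := abs_sub_le (∫ ω, Y ω ^ 2 ∂μ) (∫ ω, X ω ^ 2 ∂μ) v
    linarith [abs_integral_sq_sub_le hX hY hη hη1]
  have hXY := norm_sub_le_norm_sub_add_norm_sub (∫ ω, expI (X ω) ∂μ) (∫ ω, expI (Y ω) ∂μ)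
    (Real.exp (-v / 2) : ℂ)
  have hYv := norm_sub_le_norm_sub_add_norm_sub (∫ ω, expI (Y ω) ∂μ)
    (Real.exp (-(∫ ω, Y ω ^ 2 ∂μ) / 2) : ℂ) (Real.exp (-v / 2) : ℂ)
  have hdist : 3 / (2 * η) * ∫ ω, (X ω - Y ω) ^ 2 ∂μ =
      (∫ ω, (X ω - Y ω) ^ 2 ∂μ) / (2 * η) + 2 / η * (∫ ω, (X ω - Y ω) ^ 2 ∂μ) / 2 := by ring
  linarith

lemma Cond3.norm_integral_expI_sum_sub_exp_le (h3 : Cond3 μ ξ) (hm : ∀ k, Measurable (ξ k))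
    (h4 : Cond4 μ ξ) {a b : ℤ → ℝ} {J : Finset ℤ} {T η δ : ℝ} (ha : ∀ k ∉ J, a k = 0)
    (hT : ∀ F : Finset ℤ, ∑ k ∈ F, (a (k + 1) - a k) ^ 2 ≤ T) (hη : 0 < η) (hη1 : η ≤ 1)
    (hδ : ‖∫ ω, expI (∑ k ∈ J, b k * ξ k ω) ∂μ -
      (Real.exp (-(∫ ω, (∑ k ∈ J, b k * ξ k ω) ^ 2 ∂μ) / 2) : ℂ)‖ ≤ δ) :
    ‖∫ ω, expI (∑ k ∈ J, a k * ξ k ω) ∂μ -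
      (Real.exp (-(asymptoticVariance μ ξ * ∑ k ∈ J, a k ^ 2) / 2) : ℂ)‖ ≤
      δ + η / 2 + autocovMoment μ ξ * (3 / (2 * η) * ∑ k ∈ J, (a k - b k) ^ 2 +
        η * ∑ k ∈ J, a k ^ 2 + T / (4 * η ^ 3)) := by
  have hL2 (c : ℤ → ℝ) : MemLp (fun ω => ∑ k ∈ J, c k * ξ k ω) 2 μ :=
    (h3.memLp_sum hm c J).mono_exponent (by norm_num)
  refine (norm_integral_expI_sub_exp_le_of_perturbation (hL2 a) (hL2 b) (mul_nonneg
    (h3.asymptoticVariance_nonneg hm h4) (by positivity)) hη hη1 hδ).trans ?_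
  have hdiff := h3.integral_sum_sq_le hm h4 (fun k => a k - b k) J
  simp only [sub_mul, Finset.sum_sub_distrib] at hdiff
  calc _ ≤ δ + η / 2 + 3 / (2 * η) * (autocovMoment μ ξ * ∑ k ∈ J, (a k - b k) ^ 2) +
        η / 2 * (autocovMoment μ ξ * ∑ k ∈ J, a k ^ 2) +
        autocovMoment μ ξ * (η * ∑ k ∈ J, a k ^ 2 + T / (2 * η ^ 3)) / 2 := by
        gcongr
        · exact h3.integral_sum_sq_le hm h4 a J
        · exact h3.abs_integral_sum_sq_sub_le hm h4 ha hT hη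
    _ = _ := by ring

lemma Cond3.norm_integral_expI_walk_sub_exp_le (h3 : Cond3 μ ξ) (hm : ∀ k, Measurable (ξ k))
    (h4 : Cond4 μ ξ) {L η δ : ℝ} (hL : 0 < L) (hη : 0 < η) (hη1 : η ≤ 1) (θ : ℝ) (n : ℕ) (ω : Ω)
    (hδ : ‖∫ ω', expI (∑ k ∈ Finset.Icc (-(⌊L⌋₊ : ℤ)) ⌊L⌋₊,
        θ * truncatedLocalTime S L n k ω * ξ k ω') ∂μ -
      (Real.exp (-(∫ ω', (∑ k ∈ Finset.Icc (-(⌊L⌋₊ : ℤ)) ⌊L⌋₊,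
        θ * truncatedLocalTime S L n k ω * ξ k ω') ^ 2 ∂μ) / 2) : ℂ)‖ ≤ δ) :
    ‖∫ ω', expI (θ * ∑ j ∈ Finset.Icc 1 n, ξ (S j ω) ω') ∂μ -
      (Real.exp (-(asymptoticVariance μ ξ * (θ ^ 2 * ∑' k, localTime S n k ω ^ 2)) / 2) : ℂ)‖ ≤
      δ + η / 2 + autocovMoment μ ξ * θ ^ 2 * cltError S L η n ω := by
  set J := visitedSites S n ω ∪ Finset.Icc (-(⌊L⌋₊ : ℤ)) ⌊L⌋₊
  have hoff (k : ℤ) (hk : k ∉ J) : localTime S n k ω = 0 :=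
    localTime_eq_zero fun h => hk (Finset.mem_union_left _ h)
  have htrunc (ω' : Ω) : ∑ k ∈ Finset.Icc (-(⌊L⌋₊ : ℤ)) ⌊L⌋₊,
      θ * truncatedLocalTime S L n k ω * ξ k ω' =
        ∑ k ∈ J, θ * truncatedLocalTime S L n k ω * ξ k ω' :=
    Finset.sum_subset Finset.subset_union_right fun k _ hk => by
      rw [truncatedLocalTime_eq_zero hk, mul_zero, zero_mul]
  have hwalk (ω' : Ω) : θ * ∑ j ∈ Finset.Icc 1 n, ξ (S j ω) ω' =
      ∑ k ∈ J, θ * localTime S n k ω * ξ k ω' := by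
    have hsub : visitedSites S n ω ⊆ J := Finset.subset_union_left
    rw [sum_comp_walk_eq hsub fun k => ξ k ω', Finset.mul_sum]
    simp only [mul_assoc]
  have hgrad (F : Finset ℤ) : ∑ k ∈ F, (θ * localTime S n (k + 1) ω - θ * localTime S n k ω) ^ 2 ≤
      θ ^ 2 * gradEnergy S n ω := by
    simp only [← mul_sub, mul_pow, ← Finset.mul_sum]
    exact mul_le_mul_of_nonneg_left (sum_sq_sub_localTime_le n F ω) (sq_nonneg θ)
  have hsq : ∑ k ∈ J, (θ * localTime S n k ω) ^ 2 = θ ^ 2 * ∑' k, localTime S n k ω ^ 2 := by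
    rw [tsum_eq_sum fun k hk => by rw [hoff k hk, zero_pow two_ne_zero], Finset.mul_sum]
    simp only [mul_pow]
  simp only [htrunc] at hδ
  simp only [hwalk, ← hsq]
  refine (h3.norm_integral_expI_sum_sub_exp_le hm h4
    (fun k hk => by simp only [hoff k hk, mul_zero]) hgrad hη hη1 hδ).trans ?_
  rw [mul_assoc (autocovMoment μ ξ)]
  gcongr
  · exact autocovMoment_nonneg
  · exact sum_sq_add_sum_sq_add_le_cltError hL hη θ n J ω

lemma eventually_norm_integral_expI_walk_sub_exp_le (hm : ∀ k, Measurable (ξ k))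
    (h3 : Cond3 μ ξ) (h4 : Cond4 μ ξ) (h5 : Cond5 μ ξ) (t : ℝ) {η : ℝ} (hη : 0 < η) (hη1 : η ≤ 1) :
    ∀ᶠ n : ℕ in atTop, ∀ θ : ℝ, θ ^ 2 * (n * √n) = t ^ 2 → ∀ ω,
      ‖∫ ω', expI (θ * ∑ j ∈ Finset.Icc 1 n, ξ (S j ω) ω') ∂μ -
        (Real.exp (-(asymptoticVariance μ ξ * (θ ^ 2 * ∑' k, localTime S n k ω ^ 2)) / 2) : ℂ)‖ ≤
        η + η / 2 + autocovMoment μ ξ * θ ^ 2 * cltError S (√n / η ^ 2) η n ω := by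
  have hlevel : Tendsto (fun n : ℕ => √(n : ℝ) / η ^ 2) atTop atTop :=
    (Real.tendsto_sqrt_atTop.comp tendsto_natCast_atTop_atTop).atTop_div_const (by positivity)
  filter_upwards [hlevel.eventually_ge_atTop 1, (tendsto_nat_floor_atTop.comp hlevel).eventually
    (eventually_norm_integral_expI_sum_Icc_sub_exp_le hm h3 h4 h5
      (K := √(3 * t ^ 2 / η ^ 6 + 1)) (by positivity) hη)] with n hL hclt θ hθ ω
  refine h3.norm_integral_expI_walk_sub_exp_le hm h4 (by linarith) hη hη1 θ n ω
    (hclt _ fun k => (abs_mul_truncatedLocalTime_le hL θ n k ω).trans ?_)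
  have hvar : 3 * θ ^ 2 * (√n / η ^ 2) ^ 3 = 3 * t ^ 2 / η ^ 6 := by
    rw [← hθ, div_pow, pow_succ √(n : ℝ), Real.sq_sqrt (Nat.cast_nonneg n)]
    ring
  rw [hvar]
  dsimp only [Function.comp_apply]
  gcongr
  linarith

lemma integrable_and_integral_expI_walk_eq (hmS : ∀ n, Measurable (S n))
    (hm : ∀ k, Measurable (ξ k))
    (hindep : IndepFun (fun ω (n : ℕ) => S n ω) (fun ω (k : ℤ) => ξ k ω) μ) (θ : ℝ) (n : ℕ) :
    Integrable (fun ω => ∫ ω', expI (θ * ∑ j ∈ Finset.Icc 1 n, ξ (S j ω) ω') ∂μ) μ ∧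
    ∫ ω, expI (θ * ∑ j ∈ Finset.Icc 1 n, ξ (S j ω) ω) ∂μ =
      ∫ ω, ∫ ω', expI (θ * ∑ j ∈ Finset.Icc 1 n, ξ (S j ω) ω') ∂μ ∂μ := by
  have hS' : Measurable fun ω (n : ℕ) => S n ω := measurable_pi_lambda _ hmS
  have hξ' : Measurable fun ω (k : ℤ) => ξ k ω := measurable_pi_lambda _ hm
  have := Measure.isProbabilityMeasure_map (μ := μ) hS'.aemeasurable
  have := Measure.isProbabilityMeasure_map (μ := μ) hξ'.aemeasurable
  let g (p : (ℕ → ℤ) × (ℤ → ℝ)) : ℂ := expI (θ * ∑ j ∈ Finset.Icc 1 n, p.2 (p.1 j))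
  have heval : Measurable fun q : ℤ × (ℤ → ℝ) => q.2 q.1 :=
    measurable_from_prod_countable_right fun k => measurable_pi_apply k
  have hpair (j : ℕ) : Measurable fun p : (ℕ → ℤ) × (ℤ → ℝ) => (p.1 j, p.2) :=
    ((measurable_pi_apply j).comp measurable_fst).prodMk measurable_snd
  have hg : Measurable g := measurable_expI.comp
    ((Finset.measurable_sum _ fun j _ => heval.comp (hpair j)).const_mul θ)
  have hgi : Integrable g ((μ.map fun ω n => S n ω).prod (μ.map fun ω k => ξ k ω)) :=
    .of_bound hg.aestronglyMeasurable 1 (ae_of_all _ fun p => (norm_expI _).le)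
  have hinner (s : ℕ → ℤ) : ∫ x, g (s, x) ∂(μ.map fun ω k => ξ k ω) =
      ∫ ω', expI (θ * ∑ j ∈ Finset.Icc 1 n, ξ (s j) ω') ∂μ :=
    integral_map hξ'.aemeasurable (hg.comp measurable_prodMk_left).aestronglyMeasurable
  have houter := hgi.integral_prod_left
  simp only [hinner] at houter
  refine ⟨houter.comp_measurable hS', ?_⟩
  calc _ = ∫ p, g p ∂(μ.map fun ω => (fun n => S n ω, fun k => ξ k ω)) :=
        (integral_map (hS'.prodMk hξ').aemeasurable hg.aestronglyMeasurable).symm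
    _ = ∫ s, ∫ x, g (s, x) ∂(μ.map fun ω k => ξ k ω) ∂(μ.map fun ω n => S n ω) := by
        rw [(indepFun_iff_map_prod_eq_prod_map_map hS'.aemeasurable hξ'.aemeasurable).1 hindep,
          integral_prod _ hgi]
    _ = _ := by
        simp only [hinner]
        exact integral_map hS'.aemeasurable houter.aestronglyMeasurable

lemma IsSSRW.exists_eventually_norm_integral_expI_sub_le (hS : IsSSRW μ S)
    (hm : ∀ k, Measurable (ξ k))
    (hindep : IndepFun (fun ω (n : ℕ) => S n ω) (fun ω (k : ℤ) => ξ k ω) μ)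
    (h3 : Cond3 μ ξ) (h4 : Cond4 μ ξ) (h5 : Cond5 μ ξ) (t : ℝ) :
    ∃ C, ∀ η, 0 < η → η ≤ 1 → ∀ᶠ n : ℕ in atTop, ∀ θ : ℝ, θ ^ 2 * (n * √n) = t ^ 2 →
      ‖∫ ω, expI (θ * ∑ j ∈ Finset.Icc 1 n, ξ (S j ω) ω) ∂μ -
        ((∫ ω, Real.exp (-(asymptoticVariance μ ξ * (θ ^ 2 * ∑' k, localTime S n k ω ^ 2)) / 2)
          ∂μ : ℝ) : ℂ)‖ ≤ C * η := by
  refine ⟨3 / 2 + 15 * (autocovMoment μ ξ * t ^ 2), fun η hη hη1 => ?_⟩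
  have hlarge : ∀ᶠ n : ℕ in atTop, 1 ≤ 2 * η ^ 4 * √(n : ℝ) :=
    ((Real.tendsto_sqrt_atTop.comp tendsto_natCast_atTop_atTop).const_mul_atTop
      (by positivity)).eventually_ge_atTop 1
  filter_upwards [hlarge, eventually_norm_integral_expI_walk_sub_exp_le (S := S) hm h3 h4 h5 t
    hη hη1] with n hn hcond θ hθ
  obtain ⟨hint, heq⟩ := integrable_and_integral_expI_walk_eq hS.meas hm hindep θ n
  have hgauss : DependsOnPath S n fun ω =>
      Real.exp (-(asymptoticVariance μ ξ * (θ ^ 2 * ∑' k, localTime S n k ω ^ 2)) / 2) :=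
    fun ω ω' h => by simp only [dependsOnPath_localTime n _ ω ω' h]
  have herr := ((dependsOnPath_cltError (S := S) (√n / η ^ 2) η n).integrable hS).const_mul
    (autocovMoment μ ξ * θ ^ 2)
  have hgaussC : Integrable (fun ω => (Real.exp (-(asymptoticVariance μ ξ *
      (θ ^ 2 * ∑' k, localTime S n k ω ^ 2)) / 2) : ℂ)) μ := (hgauss.integrable hS).ofReal
  rw [heq, ← integral_complex_ofReal, ← integral_sub hint hgaussC]
  calc _ ≤ ∫ ω, (η + η / 2 + autocovMoment μ ξ * θ ^ 2 * cltError S (√n / η ^ 2) η n ω) ∂μ :=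
        norm_integral_le_of_norm_le ((integrable_const _).add herr) (ae_of_all _ (hcond θ hθ))
    _ = η + η / 2 + autocovMoment μ ξ * θ ^ 2 * ∫ ω, cltError S (√n / η ^ 2) η n ω ∂μ := by
        rw [integral_add (integrable_const _) herr, integral_const_mul, integral_const,
          probReal_univ, one_smul]
    _ ≤ η + η / 2 + autocovMoment μ ξ * θ ^ 2 * (15 * η * (n * √n)) := by
        gcongr
        · exact mul_nonneg autocovMoment_nonneg (sq_nonneg θ)
        · exact hS.integral_cltError_le_mul hη hη1 hn
    _ = _ := by rw [← hθ]; ring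

lemma rpow_three_halves_eq_mul_sqrt {x : ℝ} (hx : 0 < x) : x ^ ((3 : ℝ) / 2) = x * √x := by
  rw [Real.sqrt_eq_rpow, show (3 : ℝ) / 2 = 1 + 1 / 2 by norm_num, Real.rpow_add hx, Real.rpow_one]

lemma sq_div_rpow_three_quarters {x : ℝ} (hx : 0 < x) (t : ℝ) :
    (t / x ^ ((3 : ℝ) / 4)) ^ 2 = t ^ 2 / (x * √x) := by
  rw [div_pow, ← rpow_three_halves_eq_mul_sqrt hx, ← Real.rpow_mul_natCast hx.le]
  norm_num

lemma tendsto_zero_of_eventually_norm_le_mul {ι E : Type*} [SeminormedAddCommGroup E]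
    {l : Filter ι} {f : ι → E} {C : ℝ}
    (h : ∀ η : ℝ, 0 < η → η ≤ 1 → ∀ᶠ i in l, ‖f i‖ ≤ C * η) : Tendsto f l (nhds 0) := by
  refine tendsto_zero_iff_norm_tendsto_zero.2 (Metric.tendsto_nhds.2 fun ε hε => ?_)
  have hC : 0 < |C| + 1 := by positivity
  filter_upwards [h (min 1 (ε / (|C| + 1))) (by positivity) (min_le_left _ _)] with i hi
  rw [dist_zero_right, norm_norm]
  calc ‖f i‖ ≤ |C| * min 1 (ε / (|C| + 1)) := hi.trans (by gcongr; exact le_abs_self C)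
    _ < (|C| + 1) * min 1 (ε / (|C| + 1)) := by gcongr; exact lt_add_one _
    _ ≤ (|C| + 1) * (ε / (|C| + 1)) := by gcongr; exact min_le_right _ _
    _ = ε := mul_div_cancel₀ ε hC.ne'

end Conclusion

/-- Under conditions (3), (4), (5) on the stationary scenery `ξ`,
independent of the simple symmetric random walk `S`, the difference of the two
characteristic-function-type expectations tends to `0`. -/
theorem statement0 {Ω : Type*} [MeasurableSpace Ω] (μ : Measure Ω) [IsProbabilityMeasure μ]
    (S : ℕ → Ω → ℤ) (ξ : ℤ → Ω → ℝ)
    (hS : IsSSRW μ S)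
    (hξmeas : ∀ k, Measurable (ξ k))
    (hindep : IndepFun (fun ω (n : ℕ) => S n ω) (fun ω (k : ℤ) => ξ k ω) μ)
    (h3 : Cond3 μ ξ) (h4 : Cond4 μ ξ) (h5 : Cond5 μ ξ) (t : ℝ) :
    Tendsto (fun n : ℕ =>
        (∫ ω, Complex.exp (Complex.I * (t : ℂ) / (((n : ℝ) ^ ((3 : ℝ) / 4) : ℝ) : ℂ) *
            ((∑ k ∈ Finset.Icc 1 n, ξ (S k ω) ω : ℝ) : ℂ)) ∂μ) -
        ((∫ ω, Real.exp (-(t ^ 2 / (2 * (n : ℝ) ^ ((3 : ℝ) / 2))) *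
            ∑' ℓ : ℤ, (∑' m : ℤ, ∫ ω', ξ ℓ ω' * ξ m ω' ∂μ) * (localTime S n ℓ ω) ^ 2) ∂μ : ℝ) : ℂ))
      atTop (nhds 0) := by
  obtain ⟨C, hC⟩ := hS.exists_eventually_norm_integral_expI_sub_le hξmeas hindep h3 h4 h5 t
  refine tendsto_zero_of_eventually_norm_le_mul (C := C) fun η hη hη1 => ?_
  filter_upwards [hC η hη hη1, eventually_gt_atTop 0] with n hn hn0
  have hpos : (0 : ℝ) < n := Nat.cast_pos.2 hn0
  let θ : ℝ := t / (n : ℝ) ^ ((3 : ℝ) / 4)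
  have hθ : θ ^ 2 = t ^ 2 / (n * √n) := sq_div_rpow_three_quarters hpos t
  have hchar (ω : Ω) : Complex.exp (Complex.I * t / ((n : ℝ) ^ ((3 : ℝ) / 4) : ℝ) *
      (∑ k ∈ Finset.Icc 1 n, ξ (S k ω) ω : ℝ)) =
        expI (θ * ∑ k ∈ Finset.Icc 1 n, ξ (S k ω) ω) := by
    rw [expI, Complex.ofReal_mul, Complex.ofReal_div]
    ring_nf
  have hgauss (ω : Ω) : -(t ^ 2 / (2 * (n : ℝ) ^ ((3 : ℝ) / 2))) *
      ∑' ℓ : ℤ, (∑' m : ℤ, ∫ ω', ξ ℓ ω' * ξ m ω' ∂μ) * localTime S n ℓ ω ^ 2 =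
        -(asymptoticVariance μ ξ * (θ ^ 2 * ∑' ℓ, localTime S n ℓ ω ^ 2)) / 2 := by
    simp only [h3.1.tsum_integral_mul hξmeas]
    rw [tsum_mul_left, hθ, rpow_three_halves_eq_mul_sqrt hpos]
    ring
  simp only [hchar, hgauss]
  exact hn θ (by rw [hθ, div_mul_cancel₀ _ (by positivity)])
end
end

section
/- Let (S_n)_{n≥0} be a simple symmetric random walk on ℤ, independent of a stationary centered sequence (ξ_k)_{k∈ℤ} with finite fourth moments, and suppose C₂' := sup_{N≥1} N^{−2} Σ_{k₁,k₂,k₃,k₄=0}^{N−1} |E[ξ_{k₁}ξ_{k₂}ξ_{k₃}ξ_{k₄}]| < ∞. Let C₁ > 0 be a constant such that ‖N_n(k)‖_{L⁴} ≤ C₁ √n for all n ≥ 1 and all k ∈ ℤ. Then for all integers α ∈ ℤ, β ≥ 1 and n ≥ 1: E[(Σ_{ℓ=α+1}^{α+β} ξ_ℓ N_n(ℓ))⁴] ≤ C₁⁴ n² C₂' β². -/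
open MeasureTheory ProbabilityTheory Filter

noncomputable section

/-!
Expanding the `q`-th power turns the left-hand side into a sum over `q`-tuples of sites of
`E[∏ ξ · ∏ L]`, where `L` denotes the local time. By independence each term factors as
`E[∏ ξ] · E[∏ L]`, and Hölder's inequality bounds the second factor by the `q`-th power of the
uniform bound on `‖L k‖_q`, whatever the tuple. What is left is the sum of the `|E[∏ ξ]|`, which
stationarity moves from the window `α + 1, ..., α + β` to `0, ..., β - 1`.
-/

section Sums

variable {κ M : Type*} [AddCommMonoid M]

lemma sum_piFinset_const_fin_succ (s : Finset κ) {q : ℕ} (F : (Fin (q + 1) → κ) → M) :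
    ∑ k ∈ Fintype.piFinset fun _ : Fin (q + 1) => s, F k =
      ∑ a ∈ s, ∑ k ∈ Fintype.piFinset fun _ : Fin q => s, F (Fin.cons a k) := by
  rw [← Finset.sum_product']
  refine Finset.sum_equiv (Fin.consEquiv fun _ => κ).symm (fun k => ?_) fun k _ => ?_
  · simp [Fin.forall_fin_succ, Fin.consEquiv, Fin.tail]
  · simp [Fin.consEquiv]

lemma sum_piFinset_const_fin_four (s : Finset κ) (F : (Fin 4 → κ) → M) :
    ∑ k ∈ Fintype.piFinset fun _ : Fin 4 => s, F k =
      ∑ a ∈ s, ∑ b ∈ s, ∑ c ∈ s, ∑ d ∈ s, F ![a, b, c, d] := by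
  simp only [sum_piFinset_const_fin_succ, Fintype.piFinset_of_isEmpty, Fintype.sum_unique]
  rfl

lemma sum_Icc_add_one_add_natCast (f : ℤ → M) (α : ℤ) (N : ℕ) :
    ∑ ℓ ∈ Finset.Icc (α + 1) (α + N), f ℓ = ∑ k ∈ Finset.range N, f (k + (α + 1)) := by
  simp [Int.Icc_eq_finset_map, add_comm]

end Sums

section Holder

variable {ι Ω : Type*} [MeasurableSpace Ω] {μ : Measure Ω}

lemma eLpNorm_prod_le {𝕜 : Type*} [NormedCommRing 𝕜] [NormOneClass 𝕜] {f : ι → Ω → 𝕜}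
    {p : ι → ENNReal} {s : Finset ι} (hf : ∀ i ∈ s, AEStronglyMeasurable (f i) μ) :
    eLpNorm (∏ i ∈ s, f i) (∑ i ∈ s, (p i)⁻¹)⁻¹ μ ≤ ∏ i ∈ s, eLpNorm (f i) (p i) μ := by
  induction s using Finset.cons_induction with
  | empty =>
    simpa using! eLpNormEssSup_le_of_ae_bound (μ := μ) (f := (1 : Ω → 𝕜)) (C := 1) (by simp)
  | cons i s hi ih =>
    obtain ⟨hfi, hfs⟩ := (Finset.forall_mem_cons hi _).1 hf
    rw [Finset.prod_cons, Finset.prod_cons]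
    exact (eLpNorm_smul_le_mul_eLpNorm (s.aestronglyMeasurable_prod hfs) hfi
      (hpqr := ⟨by simp⟩)).trans (mul_le_mul_right (ih hfs) _)

variable [Fintype ι] [Nonempty ι]

lemma inv_sum_inv_card_eq_one : (∑ _i : ι, (Fintype.card ι : ENNReal)⁻¹)⁻¹ = 1 := by
  simp [ENNReal.mul_inv_cancel]

lemma integrable_prod_of_memLp_card {𝕜 : Type*} [NormedCommRing 𝕜] {f : ι → Ω → 𝕜}
    (hf : ∀ i, MemLp (f i) (Fintype.card ι) μ) : Integrable (fun ω => ∏ i, f i ω) μ := by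
  rw [← memLp_one_iff_integrable, ← inv_sum_inv_card_eq_one (ι := ι)]
  exact MemLp.prod' fun i _ => hf i

lemma norm_integral_prod_le_pow_card {𝕜 : Type*} [RCLike 𝕜] {f : ι → Ω → 𝕜} {c : ℝ}
    (hc : 0 ≤ c) (hf : ∀ i, AEStronglyMeasurable (f i) μ)
    (hfc : ∀ i, eLpNorm (f i) (Fintype.card ι) μ ≤ ENNReal.ofReal c) :
    ‖∫ ω, ∏ i, f i ω ∂μ‖ ≤ c ^ Fintype.card ι := by
  rw [← ENNReal.ofReal_le_ofReal_iff (by positivity), ofReal_norm, ENNReal.ofReal_pow hc]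
  calc ‖∫ ω, ∏ i, f i ω ∂μ‖ₑ
      ≤ eLpNorm (∏ i, f i) 1 μ := by
        rw [eLpNorm_one_eq_lintegral_enorm, Finset.prod_fn]
        exact enorm_integral_le_lintegral_enorm _
    _ ≤ ∏ i, eLpNorm (f i) (Fintype.card ι) μ := by
        rw [← inv_sum_inv_card_eq_one (ι := ι)]
        exact eLpNorm_prod_le fun i _ => hf i
    _ ≤ ENNReal.ofReal c ^ Fintype.card ι :=
        Finset.prod_le_pow_card _ _ _ fun i _ => hfc i

end Holder

section RandomWeights

variable {κ Ω : Type*} [MeasurableSpace Ω] {μ : Measure Ω} {L ξ : κ → Ω → ℝ}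

lemma indepFun_prod_of_indepFun_family {ι : Type*} [Fintype ι]
    (hindep : IndepFun (fun ω k => L k ω) (fun ω k => ξ k ω) μ) (k : ι → κ) :
    IndepFun (fun ω => ∏ i, L (k i) ω) (fun ω => ∏ i, ξ (k i) ω) μ :=
  have measurable_coordProd : Measurable fun x : κ → ℝ => ∏ i, x (k i) := by fun_prop
  hindep.comp measurable_coordProd measurable_coordProd

lemma integral_sum_mul_pow_le {q : ℕ} (hq : q ≠ 0)
    (hindep : IndepFun (fun ω k => L k ω) (fun ω k => ξ k ω) μ)
    (hξ : ∀ k, MemLp (ξ k) q μ) (hL : ∀ k, AEStronglyMeasurable (L k) μ) {c : ℝ} (hc : 0 ≤ c)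
    (hLc : ∀ k, eLpNorm (L k) q μ ≤ ENNReal.ofReal c) (s : Finset κ) :
    ∫ ω, (∑ k ∈ s, ξ k ω * L k ω) ^ q ∂μ ≤
      c ^ q * ∑ k ∈ Fintype.piFinset fun _ : Fin q => s, |∫ ω, ∏ i, ξ (k i) ω ∂μ| := by
  have : Nonempty (Fin q) := Fin.pos_iff_nonempty.1 hq.pos
  have hLq (k : κ) : MemLp (L k) q μ := ⟨hL k, (hLc k).trans_lt ENNReal.ofReal_lt_top⟩
  have integrable_ξ (k : Fin q → κ) : Integrable (fun ω => ∏ i, ξ (k i) ω) μ :=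
    integrable_prod_of_memLp_card fun i => by simpa using hξ (k i)
  have integrable_L (k : Fin q → κ) : Integrable (fun ω => ∏ i, L (k i) ω) μ :=
    integrable_prod_of_memLp_card fun i => by simpa using hLq (k i)
  have abs_integral_L (k : Fin q → κ) : |∫ ω, ∏ i, L (k i) ω ∂μ| ≤ c ^ q := by
    simpa using norm_integral_prod_le_pow_card (f := fun i => L (k i)) hc (fun i => hL (k i))
      (by simpa using fun i => hLc (k i))
  have indep (k : Fin q → κ) := (indepFun_prod_of_indepFun_family hindep k).symm
  have integrable_mul (k : Fin q → κ) :
      Integrable (fun ω => (∏ i, ξ (k i) ω) * ∏ i, L (k i) ω) μ :=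
    (indep k).integrable_mul (integrable_ξ k) (integrable_L k)
  simp only [Finset.sum_pow', Finset.prod_mul_distrib]
  rw [integral_finsetSum _ fun k _ => integrable_mul k, Finset.mul_sum]
  refine Finset.sum_le_sum fun k _ => ?_
  calc ∫ ω, (∏ i, ξ (k i) ω) * ∏ i, L (k i) ω ∂μ
      = (∫ ω, ∏ i, ξ (k i) ω ∂μ) * ∫ ω, ∏ i, L (k i) ω ∂μ :=
        (indep k).integral_fun_mul_eq_mul_integral (integrable_ξ k).1 (integrable_L k).1
    _ ≤ |∫ ω, ∏ i, L (k i) ω ∂μ| * |∫ ω, ∏ i, ξ (k i) ω ∂μ| := by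
        rw [← abs_mul, mul_comm]
        exact le_abs_self _
    _ ≤ c ^ q * |∫ ω, ∏ i, ξ (k i) ω ∂μ| := by gcongr; exact abs_integral_L k

end RandomWeights

section Stationary

variable {Ω : Type*} [MeasurableSpace Ω] {μ : Measure Ω} {ξ : ℤ → Ω → ℝ}

lemma IsStationarySeq.integral_prod_shift (hstat : IsStationarySeq μ ξ)
    (hξ : ∀ k, AEMeasurable (ξ k) μ) (j : ℤ) {q : ℕ} (k : Fin q → ℤ) :
    ∫ ω, ∏ i, ξ (k i + j) ω ∂μ = ∫ ω, ∏ i, ξ (k i) ω ∂μ := by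
  have hprod : Measurable fun x : Fin q → ℝ => ∏ i, x i := by fun_prop
  calc ∫ ω, ∏ i, ξ (k i + j) ω ∂μ
      = ∫ x, ∏ i, x i ∂(μ.map fun ω i => ξ (k i + j) ω) :=
        (integral_map (aemeasurable_pi_lambda _ fun i => hξ _) hprod.aestronglyMeasurable).symm
    _ = ∫ x, ∏ i, x i ∂(μ.map fun ω i => ξ (k i) ω) := by rw [hstat]
    _ = ∫ ω, ∏ i, ξ (k i) ω ∂μ :=
        integral_map (aemeasurable_pi_lambda _ fun i => hξ _) hprod.aestronglyMeasurable

lemma IsStationarySeq.integral_sum_Icc_mul_pow_le (hstat : IsStationarySeq μ ξ)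
    {L : ℤ → Ω → ℝ} {q : ℕ} (hq : q ≠ 0)
    (hindep : IndepFun (fun ω k => L k ω) (fun ω k => ξ k ω) μ)
    (hξ : ∀ k, MemLp (ξ k) q μ) (hL : ∀ k, AEStronglyMeasurable (L k) μ) {c : ℝ} (hc : 0 ≤ c)
    (hLc : ∀ k, eLpNorm (L k) q μ ≤ ENNReal.ofReal c) (α : ℤ) (N : ℕ) :
    ∫ ω, (∑ ℓ ∈ Finset.Icc (α + 1) (α + N), ξ ℓ ω * L ℓ ω) ^ q ∂μ ≤
      c ^ q * ∑ k ∈ Fintype.piFinset fun _ : Fin q => Finset.range N,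
        |∫ ω, ∏ i, ξ (k i : ℤ) ω ∂μ| := by
  have measurable_reindex :
      Measurable fun (x : ℤ → ℝ) (k : ℕ) => x (k + (α + 1)) := by fun_prop
  have indep_shift : IndepFun (fun ω (k : ℕ) => L (k + (α + 1)) ω)
      (fun ω (k : ℕ) => ξ (k + (α + 1)) ω) μ :=
    hindep.comp measurable_reindex measurable_reindex
  have integral_shift (k : Fin q → ℕ) :
      ∫ ω, ∏ i, ξ (k i + (α + 1)) ω ∂μ = ∫ ω, ∏ i, ξ (k i : ℤ) ω ∂μ :=
    hstat.integral_prod_shift (fun k => (hξ k).aestronglyMeasurable.aemeasurable) (α + 1) _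
  simpa only [sum_Icc_add_one_add_natCast, integral_shift] using
    integral_sum_mul_pow_le hq indep_shift (fun _ => hξ _) (fun _ => hL _) hc (fun _ => hLc _)
      (Finset.range N)

end Stationary

section LocalTime

variable {Ω : Type*} [MeasurableSpace Ω] {S : ℕ → Ω → ℤ}

lemma measurable_localTime (hS : ∀ n, Measurable (S n)) (n : ℕ) (k : ℤ) :
    Measurable (localTime S n k) := by
  have localTime_eq_sum : localTime S n k =
      fun ω => ∑ j ∈ Finset.Icc 1 n, if S j ω = k then (1 : ℝ) else 0 := by
    ext ω
    simp [localTime]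
  rw [localTime_eq_sum]
  exact Finset.measurable_sum _ fun j _ =>
    Measurable.ite (hS j (measurableSet_singleton k)) measurable_const measurable_const

lemma indepFun_localTime {μ : Measure Ω} {E : Type*} [MeasurableSpace E] {X : Ω → E}
    (hindep : IndepFun (fun ω n => S n ω) X μ) (n : ℕ) :
    IndepFun (fun ω k => localTime S n k ω) X μ :=
  -- The local time of `S` is the local time of the coordinate process, evaluated at the path.
  have measurable_pathLocalTime :
      Measurable fun (s : ℕ → ℤ) (k : ℤ) => localTime (fun j (s' : ℕ → ℤ) => s' j) n k s :=
    measurable_pi_lambda _ fun k => measurable_localTime measurable_pi_apply n k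
  hindep.comp measurable_pathLocalTime measurable_id

end LocalTime

lemma mul_sqrt_pow_four {x : ℝ} (hx : 0 ≤ x) (c : ℝ) : (c * √x) ^ 4 = c ^ 4 * x ^ 2 := by
  rw [mul_pow, show 4 = 2 * 2 from rfl, pow_mul √x, Real.sq_sqrt hx]

theorem statement2_general {Ω : Type*} [MeasurableSpace Ω] {μ : Measure Ω}
    {L ξ : ℤ → Ω → ℝ} {q : ℕ} (hq : q ≠ 0)
    (hindep : IndepFun (fun ω k => L k ω) (fun ω k => ξ k ω) μ)
    (hstat : IsStationarySeq μ ξ) (hξ : ∀ k, MemLp (ξ k) q μ)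
    {B : ℝ} {r : ℕ}
    (hB : ∀ N : ℕ, 1 ≤ N → ∑ k ∈ Fintype.piFinset fun _ : Fin q => Finset.range N,
      |∫ ω, ∏ i, ξ (k i : ℤ) ω ∂μ| ≤ B * (N : ℝ) ^ r)
    (hL : ∀ k, AEStronglyMeasurable (L k) μ) {c : ℝ} (hc : 0 ≤ c)
    (hLc : ∀ k, eLpNorm (L k) q μ ≤ ENNReal.ofReal c)
    (α β : ℤ) (hβ : 1 ≤ β) :
    ∫ ω, (∑ ℓ ∈ Finset.Icc (α + 1) (α + β), ξ ℓ ω * L ℓ ω) ^ q ∂μ ≤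
      c ^ q * (B * (β : ℝ) ^ r) := by
  lift β to ℕ using by lia
  calc ∫ ω, (∑ ℓ ∈ Finset.Icc (α + 1) (α + β), ξ ℓ ω * L ℓ ω) ^ q ∂μ
      ≤ c ^ q * ∑ k ∈ Fintype.piFinset fun _ : Fin q => Finset.range β,
          |∫ ω, ∏ i, ξ (k i : ℤ) ω ∂μ| :=
        hstat.integral_sum_Icc_mul_pow_le hq hindep hξ hL hc hLc α β
    _ ≤ c ^ q * (B * ((β : ℤ) : ℝ) ^ r) := by gcongr; exact hB β (mod_cast hβ)

/-- Fourth-moment bound for weighted local-time sums. -/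
theorem statement2 {Ω : Type*} [MeasurableSpace Ω] (μ : Measure Ω) [IsProbabilityMeasure μ]
    (S : ℕ → Ω → ℤ) (ξ : ℤ → Ω → ℝ)
    (hS : IsSSRW μ S)
    (hξmeas : ∀ k, Measurable (ξ k))
    (hindep : IndepFun (fun ω (n : ℕ) => S n ω) (fun ω (k : ℤ) => ξ k ω) μ)
    (hstat : IsStationarySeq μ ξ)
    (hcent : ∀ k, ∫ ω, ξ k ω ∂μ = 0)
    (hL4 : ∀ k, MemLp (ξ k) 4 μ)
    (C₂' : ℝ)
    (hC₂' : ∀ N : ℕ, 1 ≤ N →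
      ∑ k₁ ∈ Finset.range N, ∑ k₂ ∈ Finset.range N, ∑ k₃ ∈ Finset.range N,
        ∑ k₄ ∈ Finset.range N,
          |∫ ω, ξ (k₁ : ℤ) ω * ξ (k₂ : ℤ) ω * ξ (k₃ : ℤ) ω * ξ (k₄ : ℤ) ω ∂μ| ≤ C₂' * (N : ℝ) ^ 2)
    (C₁ : ℝ) (hC₁ : 0 < C₁)
    (hN : ∀ n : ℕ, 1 ≤ n → ∀ k : ℤ,
      eLpNorm (localTime S n k) 4 μ ≤ ENNReal.ofReal (C₁ * Real.sqrt n))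
    (α : ℤ) (β : ℤ) (hβ : 1 ≤ β) (n : ℕ) (hn : 1 ≤ n) :
    ∫ ω, (∑ ℓ ∈ Finset.Icc (α + 1) (α + β), ξ ℓ ω * localTime S n ℓ ω) ^ 4 ∂μ ≤
      C₁ ^ 4 * (n : ℝ) ^ 2 * C₂' * (β : ℝ) ^ 2 := by
  rw [← mul_sqrt_pow_four n.cast_nonneg, mul_assoc]
  exact statement2_general four_ne_zero (indepFun_localTime hindep n) hstat hL4
    (by simpa [sum_piFinset_const_fin_four, Fin.prod_univ_four] using hC₂')
    (fun k => (measurable_localTime hS.meas n k).aestronglyMeasurable) (by positivity)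
    (hN n hn) α β hβ
end
end
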